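/- arXiv:0909.4732 — 9 statements merged into one kernel-verified Lean document; each statement's English description precedes it below -/
import Mathlib

section
/- For every integer n ≥ 0, the number of descending plane partitions of order n equals ∏_{k=0}^{n−1} (3k+1)!/(n+k)!. -/
/-- A descending plane partition, encoded as a list of rows (top row first).
Row `i` (0-indexed) occupies columns `i+1, …, μ_{i+1}` (1-indexed), so the entry at
position `p` (0-indexed) of row `i` is `a_{i+1, i+1+p}`, and `μ_{i+1} = rowlength + i`. -/
def IsDPP (a : List (List ℕ)) : Prop :=
  -- rows are nonempty arrays of positive integers
  (∀ row ∈ a, row ≠ []) ∧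
  (∀ row ∈ a, ∀ x ∈ row, 0 < x) ∧
  -- (1) μ_1 ≥ μ_2 ≥ … ≥ μ_r (where μ_{i+1} = length of row i + i, 0-indexed rows)
  (∀ i, i + 1 < a.length →
    (a.getD (i + 1) []).length + (i + 1) ≤ (a.getD i []).length + i) ∧
  -- (2) rows weakly decreasing
  (∀ row ∈ a, row.Chain' (· ≥ ·)) ∧
  -- (2') columns strictly decreasing (whenever both entries are defined)
  (∀ i p, i + 1 < a.length → p < (a.getD (i + 1) []).length →
    (a.getD (i + 1) []).getD p 0 < (a.getD i []).getD (p + 1) 0) ∧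
  -- (3) each diagonal entry exceeds the number of entries in its row
  (∀ row ∈ a, row.length < row.getD 0 0) ∧
  -- (4) each diagonal entry is at most the number of entries in the row above
  (∀ i, i + 1 < a.length → (a.getD (i + 1) []).getD 0 0 ≤ (a.getD i []).length)

/-- A DPP has order `n` when all its entries are at most `n`. -/
def DPPOrder (a : List (List ℕ)) (n : ℕ) : Prop := ∀ row ∈ a, ∀ x ∈ row, x ≤ n

/-- No entry `a_{i,j}` is special, i.e. `a_{i,j} > j - i` throughout: the entry at
(0-indexed) position `p` of any row exceeds `p`. -/
def NoSpecialPart (a : List (List ℕ)) : Prop :=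
  ∀ row ∈ a, ∀ p < row.length, p < row.getD p 0



theorem DPPaux.det_one_add_eq_sum {n : ℕ} (M : Matrix (Fin n) (Fin n) ℚ) :
    (1 + M).det = ∑ s : Finset (Fin n),
      (M.submatrix (s.orderEmbOfFin rfl) (s.orderEmbOfFin rfl)).det := by
  have h1 : (1 + M).det = ∑ s : Finset (Fin n),
      (M.submatrix (Subtype.val : s → Fin n) (Subtype.val : s → Fin n)).det := by
    rw [add_comm]
    let D := (Matrix.detRowAlternating : (Fin n → ℚ) [⋀^Fin n]→ₗ[ℚ] ℚ)
    change D ((fun i => M i) + (fun i => (1 : Matrix (Fin n) (Fin n) ℚ) i)) = _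
    rw [AlternatingMap.map_add_univ]
    refine Finset.sum_congr rfl fun s _ => ?_
    exact Matrix.det_piecewise_one_eq_submatrix_det M s
  rw [h1]
  refine Finset.sum_congr rfl fun s _ => ?_
  rw [← Matrix.det_submatrix_equiv_self (s.orderIsoOfFin rfl).toEquiv]
  rfl

theorem DPPaux.det_expand {k : ℕ} (g : Fin k → ℕ → ℚ) (A : Fin k → Finset ℕ) :
    (Matrix.of fun i j : Fin k => ∑ t ∈ A j, g i t).det =
      ∑ t ∈ Fintype.piFinset A, (Matrix.of fun i j : Fin k => g i (t j)).det := by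
  have := (Matrix.detRowAlternating (R := ℚ) (n := Fin k)).toMultilinearMap.map_sum_finset
    (fun j t => (fun i => g i t)) A
  rw [← Matrix.det_transpose]
  refine Eq.trans ?_ (this.trans ?_)
  · change Matrix.det _ = Matrix.det _
    congr 1
    ext i j
    simp [Finset.sum_apply]
  · refine Finset.sum_congr rfl fun s _ => ?_
    rw [← Matrix.det_transpose]
    rfl

/-- interlacing ranges -/
def DPPaux.rng {k : ℕ} (e : ℕ) (b : Fin k → ℕ) (j : Fin k) : Finset ℕ :=
  if h : j.val = 0 then Finset.Ico e (b j + 1) else Finset.Ioc (b ⟨j.val - 1, by omega⟩) (b j)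

theorem DPPaux.det_telescope {k : ℕ} (e : ℕ) (b : Fin k → ℕ) (hb : StrictMono b) 
    (he : ∀ j, e ≤ b j + 1) (g : Fin k → ℕ → ℚ) :
    (Matrix.of fun i j : Fin k => ∑ t ∈ Finset.Ico e (b j + 1), g i t).det =
      ∑ t ∈ Fintype.piFinset (DPPaux.rng e b), (Matrix.of fun i j : Fin k => g i (t j)).det := by
  rw [← DPPaux.det_expand]
  cases k with
  | zero => simp
  | succ k =>
    apply Matrix.det_eq_of_forall_col_eq_smul_add_pred (fun _ => 1)
    · intro i; simp [DPPaux.rng]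
    · intro i j
      have hlt : b j.castSucc < b j.succ := hb Fin.castSucc_lt_succ
      simp only [Matrix.of_apply, DPPaux.rng, one_mul]
      rw [dif_neg (by simp)]
      have e1 : (⟨j.succ.val - 1, by omega⟩ : Fin (k+1)) = j.castSucc := by ext; simp
      rw [e1, add_comm (Finset.sum _ _)]
      have := he j.castSucc
      rw [← Finset.sum_Ico_consecutive _ this (show b j.castSucc + 1 ≤ b j.succ + 1 by omega)]
      congr 1
      apply Finset.sum_congr _ (fun _ _ => rfl)
      ext x; simp


namespace DPPaux

/-- number of rows with given head and length -/
def c : ℕ → ℕ → ℚ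
  | 0, t => if t = 0 then 1 else 0
  | s + 1, t => if t = 0 then 0 else ∑ t' ∈ Finset.Ico 0 (t + 1), c s t'

def Arr {k : ℕ} (s t : Fin k → ℕ) : Set (Fin k → ℕ → ℕ) :=
  {a | (∀ i, Antitone (a i)) ∧ (∀ i, a i 0 = s i) ∧ (∀ i p, a i p = 0 ↔ t i ≤ p) ∧
    (∀ i j : Fin k, i.val + 1 = j.val → ∀ p, a i p ≠ 0 → a i p < a j (p + 1))}

theorem Arr_finite {k : ℕ} (s t : Fin k → ℕ) : (Arr s t).Finite := by
  -- inject into functions on bounded ranges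
  let N := ∑ i, t i
  let B := ∑ i, s i
  let f : (Fin k → ℕ → ℕ) → (Fin k → Fin N → Fin (B + 1)) := fun a i p => Fin.ofNat _ (a i p)
  apply Set.Finite.of_finite_image (f := f) (Set.toFinite _)
  rintro a ⟨ha1, ha2, ha3, -⟩ b ⟨hb1, hb2, hb3, -⟩ hab
  funext i p
  have hN : t i ≤ N := Finset.single_le_sum (f := t) (fun _ _ => Nat.zero_le _) (Finset.mem_univ i)
  have hB : s i ≤ B := Finset.single_le_sum (f := s) (fun _ _ => Nat.zero_le _) (Finset.mem_univ i)
  by_cases hp : t i ≤ p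
  · rw [(ha3 i p).2 hp, (hb3 i p).2 hp]
  · have h := congrArg Fin.val (congrFun (congrFun hab i) ⟨p, by omega⟩)
    have h1 : a i p ≤ B := ((ha1 i (Nat.zero_le p)).trans (ha2 i).le).trans hB
    have h2 : b i p ≤ B := ((hb1 i (Nat.zero_le p)).trans (hb2 i).le).trans hB
    simp only [f, Fin.ofNat] at h
    rwa [Nat.mod_eq_of_lt (by omega), Nat.mod_eq_of_lt (by omega)] at h

theorem mem_rng_pi {k : ℕ} (e : ℕ) (b t : Fin k → ℕ) :
    t ∈ Fintype.piFinset (rng e b) ↔ (∀ j, t j ≤ b j) ∧ (∀ j : Fin k, j.val = 0 → e ≤ t j) ∧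
      (∀ i j : Fin k, i.val + 1 = j.val → b i < t j) := by
  rw [Fintype.mem_piFinset]
  constructor
  · intro h
    refine ⟨fun j => ?_, fun j hj => ?_, fun i j hij => ?_⟩
    · have := h j
      unfold rng at this
      split_ifs at this <;> simp at this <;> omega
    · have := h j
      unfold rng at this
      rw [dif_pos hj] at this
      simp at this; omega
    · have := h j
      unfold rng at this
      rw [dif_neg (by omega)] at this
      have e1 : (⟨j.val - 1, by omega⟩ : Fin k) = i := by ext; simp; omega
      rw [e1] at this
      simp at this; omega
  · rintro ⟨h1, h2, h3⟩ j
    unfold rng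
    split_ifs with h
    · simp; have := h1 j; have := h2 j h; omega
    · simp; exact ⟨h3 _ _ (by simp; omega), h1 j⟩

theorem Arr_biUnion {k : ℕ} (s : Fin k → ℕ) (T : Finset (Fin k → ℕ)) :
    (⋃ t' ∈ T, Arr s t').ncard = ∑ t' ∈ T, (Arr s t').ncard := by
  have hdisj : (↑T : Set (Fin k → ℕ)).PairwiseDisjoint (fun t' => Arr s t') := by
    intro t1 _ t2 _ hne
    rw [Function.onFun, Set.disjoint_left]
    rintro a ⟨-, -, h3, -⟩ ⟨-, -, h3', -⟩
    apply hne
    funext i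
    have e1 := (h3' i (t1 i)).1 ((h3 i (t1 i)).2 le_rfl)
    have e2 := (h3 i (t2 i)).1 ((h3' i (t2 i)).2 le_rfl)
    omega
  have := Set.Finite.ncard_biUnion (Finset.finite_toSet T) (fun t' _ => Arr_finite s t') hdisj
  simp only [Finset.mem_coe] at this
  rw [this]
  exact finsum_mem_coe_finset _ _

theorem Arr_step {k : ℕ} (s t : Fin k → ℕ) (ht0 : ∀ i, 0 < t i) :
    (Arr (fun i => s i + 1) t).ncard =
      ∑ t' ∈ Fintype.piFinset (rng 0 t), (Arr s t').ncard := by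
  classical
  -- map
  let F : (Fin k → ℕ → ℕ) → (Fin k → ℕ → ℕ) := fun a i p => a i p - 1
  let G : (Fin k → ℕ → ℕ) → (Fin k → ℕ → ℕ) := fun a i p => if p < t i then a i p + 1 else 0
  have hF : Set.BijOn G (⋃ t' ∈ Fintype.piFinset (rng 0 t), Arr s t') (Arr (fun i => s i + 1) t) := by
    refine ⟨?_, ?_, ?_⟩
    · rintro a ha
      simp only [Set.mem_iUnion, exists_prop] at ha
      obtain ⟨t', ht', h1, h2, h3, h4⟩ := ha
      rw [mem_rng_pi] at ht'
      obtain ⟨m1, -, m3⟩ := ht'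
      refine ⟨fun i p q hpq => ?_, fun i => ?_, fun i p => ?_, fun i j hij p hp => ?_⟩
      · have := h1 i hpq
        simp only [G]; split_ifs <;> omega
      · simp [G, ht0, h2]
      · simp [G]
      · simp only [G] at hp ⊢
        have hpt : p < t i := by by_contra h; simp [h] at hp
        have h5 := m3 i j hij
        have h6 := m1 j
        rw [if_pos hpt, if_pos (by omega)]
        by_cases h0 : a i p = 0
        · have : a j (p+1) ≠ 0 := by
            rw [Ne, h3]; omega
          omega
        · have := h4 i j hij p h0
          omega
    · intro a ha b hb hab
      simp only [Set.mem_iUnion, exists_prop, mem_rng_pi] at ha hb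
      obtain ⟨t', ⟨m1, -, m3⟩, h1, h2, h3, h4⟩ := ha
      obtain ⟨t'', ⟨m1', -, m3'⟩, h1', h2', h3', h4'⟩ := hb
      funext i p
      have := congrFun (congrFun hab i) p
      simp only [G] at this
      split_ifs at this with h
      · omega
      · rw [(h3 i p).2 (by have := m1 i; omega), (h3' i p).2 (by have := m1' i; omega)]
    · rintro a ⟨h1, h2, h3, h4⟩
      -- length of stripped rows
      have hex : ∀ i, ∃ l, l ≤ t i ∧ ∀ p, a i p - 1 = 0 ↔ l ≤ p := by
        intro i
        have hx : ∃ p, a i p - 1 = 0 := ⟨t i, by rw [(h3 i (t i)).2 le_rfl]⟩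
        refine ⟨Nat.find hx, Nat.find_min' hx (by rw [(h3 i (t i)).2 le_rfl]), fun p => ⟨fun h => Nat.find_min' hx h, fun h => ?_⟩⟩
        have := h1 i h
        have := Nat.find_spec hx
        omega
      choose l hl1 hl2 using hex
      refine ⟨F a, ?_, ?_⟩
      · simp only [Set.mem_iUnion, exists_prop]
        refine ⟨l, ?_, ?_⟩
        · rw [mem_rng_pi]
          refine ⟨hl1, fun _ _ => Nat.zero_le _, fun i j hij => ?_⟩
          by_contra hc
          have h5 := (hl2 j (t i)).2 (by omega)
          have h6 := ht0 i
          have h7 := (h3 i (t i - 1)).not.2 (by omega)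
          have h8 := h4 i j hij (t i - 1) h7
          rw [show t i - 1 + 1 = t i by omega] at h8
          omega
        · refine ⟨fun i p q hpq => ?_, fun i => ?_, fun i p => hl2 i p, fun i j hij p hp => ?_⟩
          · have := h1 i hpq
            simp only [F]; omega
          · simp [F, h2]
          · simp only [F] at hp ⊢
            have := h4 i j hij p (by omega)
            omega
      · funext i p
        simp only [G, F]
        have := h3 i p
        split_ifs with h
        · have : a i p ≠ 0 := by rw [Ne, this]; omega
          omega
        · exact (this.2 (by omega)).symm
  rw [← hF.image_eq, hF.injOn.ncard_image]
  exact Arr_biUnion s _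

theorem c_succ (s t : ℕ) (ht : 0 < t) : c (s + 1) t = ∑ t' ∈ Finset.Ico 0 (t + 1), c s t' := by
  rw [c, if_neg (by omega)]

theorem c_succ_zero (s : ℕ) : c (s + 1) 0 = 0 := by
  rw [c, if_pos rfl]

theorem Arr_tail {k : ℕ} (s t : Fin (k + 1) → ℕ) (hs : s 0 = 0) (ht : t 0 = 0) :
    (Arr s t).ncard = (Arr (fun i => s i.succ) (fun i => t i.succ)).ncard := by
  have hF : Set.BijOn (fun a : Fin k → ℕ → ℕ => (Fin.cons (fun _ => 0) a : Fin (k+1) → ℕ → ℕ))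
      (Arr (fun i => s i.succ) (fun i => t i.succ)) (Arr s t) := by
    refine ⟨?_, ?_, ?_⟩
    · rintro a ⟨h1, h2, h3, h4⟩
      refine ⟨fun i => ?_, fun i => ?_, fun i p => ?_, fun i j hij p hp => ?_⟩
      · refine Fin.cases ?_ (fun i => ?_) i
        · simpa using antitone_const
        · simpa using h1 i
      · refine Fin.cases ?_ (fun i => ?_) i
        · simp [hs]
        · simpa using h2 i
      · refine Fin.cases ?_ (fun i => ?_) i
        · simp [ht]
        · simpa using h3 i p
      · revert hij hp
        refine Fin.cases ?_ (fun i => ?_) i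
        · simp
        · refine Fin.cases ?_ (fun j => ?_) j
          · simp
          · intro hij hp
            simp at hij hp ⊢
            exact h4 i j hij p hp
    · intro a _ b _ hab
      exact Fin.cons_injective2 hab |>.2
    · rintro a ⟨h1, h2, h3, h4⟩
      refine ⟨fun i => a i.succ, ⟨fun i => h1 _, fun i => h2 _, fun i p => h3 _ p, fun i j hij p hp => h4 _ _ (by simpa using hij) p hp⟩, ?_⟩
      funext i p
      refine Fin.cases ?_ (fun i => ?_) i
      · simp only [Fin.cons_zero]
        exact ((h3 0 p).2 (by omega)).symm
      · simp
  rw [← hF.image_eq, hF.injOn.ncard_image]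

theorem Arr_count (N : ℕ) : ∀ {k : ℕ} (s t : Fin k → ℕ) (_ : ∑ i, (s i + 1) = N) (_ : StrictMono s)
    (_ : StrictMono t), ((Arr s t).ncard : ℚ) = (Matrix.of fun i j => c (s i) (t j)).det := by
  induction N using Nat.strong_induction_on with
  | _ N ih =>
  intro k s t hN hs ht
  cases k with
  | zero =>
    rw [Matrix.det_fin_zero]
    have : Arr s t = Set.univ := by
      ext a; simp [Arr]
    rw [this]
    simp
  | succ k =>
    by_cases hs0 : s 0 = 0
    · by_cases ht0 : t 0 = 0
      · rw [Arr_tail s t hs0 ht0]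
        rw [ih (∑ i : Fin k, (s i.succ + 1)) (by rw [← hN, Fin.sum_univ_succ]; omega) _ _ rfl
          (fun i j h => hs (by simpa using h)) (fun i j h => ht (by simpa using h))]
        rw [Matrix.det_succ_row_zero, Fin.sum_univ_succ, Finset.sum_eq_zero]
        · simp [hs0, ht0, c]
          rfl
        · intro i _
          have : 0 < t i.succ := lt_of_le_of_lt (Nat.zero_le _) (ht (Fin.succ_pos i))
          have h2 : t i.succ ≠ 0 := by omega
          simp [hs0, c, h2]
      · have h1 : Arr s t = ∅ := by
          ext a
          simp only [Set.mem_empty_iff_false, iff_false]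
          rintro ⟨-, h2, h3, -⟩
          have := (h3 0 0).1 (by rw [h2, hs0])
          omega
        rw [h1, Matrix.det_eq_zero_of_row_eq_zero 0]
        · simp
        · intro j
          have : t j ≠ 0 := by have := ht.monotone (Fin.zero_le j); omega
          simp [hs0, c, this]
    · have hpos : ∀ i, s i = (s i - 1) + 1 := by
        intro i
        have := hs.monotone (Fin.zero_le i); omega
      by_cases ht0 : t 0 = 0
      · have h1 : Arr s t = ∅ := by
          ext a
          simp only [Set.mem_empty_iff_false, iff_false]
          rintro ⟨-, h2, h3, -⟩
          have := (h3 0 0).2 (by omega)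
          rw [h2] at this
          omega
        rw [h1, Matrix.det_eq_zero_of_column_eq_zero 0]
        · simp
        · intro i
          simp only [Matrix.of_apply]
          rw [ht0, hpos i, c_succ_zero]
      · have htp : ∀ i, 0 < t i := by
          intro i
          have := ht.monotone (Fin.zero_le i); omega
        have hst := Arr_step (fun i => s i - 1) t htp
        rw [show (fun i => s i - 1 + 1) = s from funext fun i => (hpos i).symm] at hst
        rw [hst]
        push_cast
        have hm : (Matrix.of fun i j => c (s i) (t j)) =
          Matrix.of fun i j : Fin (k+1) => ∑ t' ∈ Finset.Ico 0 (t j + 1), c (s i - 1) t' := by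
          ext i j
          simp only [Matrix.of_apply]
          rw [← c_succ _ _ (htp j), ← hpos i]
        rw [hm, det_telescope 0 t ht (fun _ => Nat.zero_le _) (fun i t' => c (s i - 1) t')]
        refine Finset.sum_congr rfl fun t' ht' => ?_
        rw [mem_rng_pi] at ht'
        refine ih (∑ i, (s i - 1 + 1)) ?_ _ _ rfl ?_ ?_
        · rw [← hN]
          apply Finset.sum_lt_sum_of_nonempty ⟨0, Finset.mem_univ _⟩
          intro i _
          have := hpos i
          omega
        · intro i j hij
          have := hs hij
          have := hpos i
          change s i - 1 < s j - 1
          omega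
        · rw [Fin.strictMono_iff_lt_succ]
          intro i
          have h1 := ht'.1 i.castSucc
          have h2 := ht'.2.2 i.castSucc i.succ (by simp)
          omega

theorem hockey (a b : ℕ) : ∑ x ∈ Finset.range b, (a + x).choose a = (a + b).choose (a + 1) := by
  induction b with
  | zero => simp
  | succ b ih =>
    rw [Finset.sum_range_succ, ih, ← add_assoc, Nat.choose_succ_succ, add_comm]

/-- Sum over row lengths, for given heads. -/
theorem sum_Arr {k : ℕ} (σ : Fin k → ℕ) (hσ : StrictMono σ) :
    ((⋃ t' ∈ Fintype.piFinset (rng 1 σ), Arr (fun i => σ i + 1) t').ncard : ℚ) =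
      (Matrix.of fun i j => ((Nat.choose (σ i + σ j) (σ i + 1) : ℕ) : ℚ)).det := by
  rw [Arr_biUnion]
  push_cast
  have key : ∀ a b : ℕ, ∑ t ∈ Finset.Ico 1 (b + 1), c (a + 1) t = (Nat.choose (a + b) (a + 1) : ℕ) := by
    have h1 : ∀ a b : ℕ, c (a + 1) (b + 1) = (Nat.choose (a + b) a : ℕ) := by
      intro a
      induction a with
      | zero =>
        intro b
        rw [c_succ _ _ (by omega)]
        rw [Finset.sum_eq_single 0] <;> simp +contextual [c]
      | succ a iha =>
        intro b
        rw [c_succ _ _ (by omega), ← Finset.sum_Ico_consecutive _ (show 0 ≤ 1 by omega) (show 1 ≤ b + 1 + 1 by omega)]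
        simp only [Nat.Ico_succ_singleton, Finset.sum_singleton, c_succ_zero, zero_add]
        rw [Finset.sum_Ico_eq_sum_range]
        simp only [Nat.add_sub_cancel]
        simp_rw [add_comm 1, iha]
        rw [← Nat.cast_sum]
        congr 1
        rw [hockey, show a + (b + 1) = a + 1 + b by omega]
    intro a b
    rw [Finset.sum_Ico_eq_sum_range]
    simp only [Nat.add_sub_cancel]
    simp_rw [add_comm 1, h1]
    rw [← Nat.cast_sum, hockey]
  have hm : (Matrix.of fun i j => ((Nat.choose (σ i + σ j) (σ i + 1) : ℕ) : ℚ)) =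
      Matrix.of fun i j : Fin k => ∑ t ∈ Finset.Ico 1 (σ j + 1), c (σ i + 1) t := by
    ext i j
    simp only [Matrix.of_apply, key]
  rw [hm, det_telescope 1 σ hσ (fun _ => by omega) (fun i t' => c (σ i + 1) t')]
  refine Finset.sum_congr rfl fun t' ht' => ?_
  rw [mem_rng_pi] at ht'
  refine Arr_count _ _ _ rfl (fun i j h => by simpa using hσ h) ?_
  cases k with
  | zero => intro i; exact i.elim0
  | succ k =>
    rw [Fin.strictMono_iff_lt_succ]
    intro i
    have h1 := ht'.1 i.castSucc
    have h2 := ht'.2.2 i.castSucc i.succ (by simp)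
    omega
end DPPaux


namespace DPPaux

theorem getD_zero_iff (r : List ℕ) (h : ∀ x ∈ r, 0 < x) (p : ℕ) : r.getD p 0 = 0 ↔ r.length ≤ p := by
  constructor
  · intro h0
    by_contra hc
    push Not at hc
    rw [List.getD_eq_getElem _ _ hc] at h0
    have := h _ (List.getElem_mem hc)
    omega
  · intro h0
    exact List.getD_eq_default _ _ h0

theorem antitone_getD (r : List ℕ) : Antitone (fun p => r.getD p 0) ↔ r.IsChain (· ≥ ·) := by
  rw [List.isChain_iff_pairwise, List.pairwise_iff_getElem]
  constructor
  · intro h i j hi hj hij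
    have := h hij.le
    simp only [List.getD_eq_getElem _ _ hi, List.getD_eq_getElem _ _ hj] at this
    exact this
  · intro h p q hpq
    simp only
    by_cases hq : q < r.length
    · rcases hpq.lt_or_eq with h1 | h1
      · rw [List.getD_eq_getElem _ _ hq, List.getD_eq_getElem _ _ (h1.trans hq)]
        exact h p q _ hq h1
      · rw [h1]
    · rw [List.getD_eq_default _ _ (by omega)]; omega

theorem forall_mem_iff_getD {α : Type*} (a : List α) (d : α) (P : α → Prop) :
    (∀ x ∈ a, P x) ↔ ∀ j < a.length, P (a.getD j d) := by
  constructor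
  · intro h j hj
    rw [List.getD_eq_getElem _ _ hj]
    exact h _ (List.getElem_mem hj)
  · intro h x hx
    obtain ⟨j, hj, rfl⟩ := List.getElem_of_mem hx
    have := h j hj
    rwa [List.getD_eq_getElem _ _ hj] at this

theorem list_ext_getD {α : Type*} (d : α) (a b : List α) (hl : a.length = b.length)
    (h : ∀ j < a.length, a.getD j d = b.getD j d) : a = b := by
  apply List.ext_getElem hl
  intro j h1 h2
  have := h j h1
  rwa [List.getD_eq_getElem _ _ h1, List.getD_eq_getElem _ _ h2] at this

theorem isDPP_iff (a : List (List ℕ)) : IsDPP a ↔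
    (∀ j < a.length, 0 < (a.getD j []).length) ∧
    (∀ j < a.length, ∀ p, (a.getD j []).getD p 0 = 0 ↔ (a.getD j []).length ≤ p) ∧
    (∀ j, j + 1 < a.length → (a.getD (j + 1) []).length + 1 ≤ (a.getD j []).length) ∧
    (∀ j < a.length, Antitone (fun p => (a.getD j []).getD p 0)) ∧
    (∀ j p, j + 1 < a.length → p < (a.getD (j + 1) []).length →
      (a.getD (j + 1) []).getD p 0 < (a.getD j []).getD (p + 1) 0) ∧
    (∀ j < a.length, (a.getD j []).length < (a.getD j []).getD 0 0) ∧
    (∀ j, j + 1 < a.length → (a.getD (j + 1) []).getD 0 0 ≤ (a.getD j []).length) := by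
  unfold IsDPP
  rw [forall_mem_iff_getD a [], forall_mem_iff_getD a [], forall_mem_iff_getD a [], forall_mem_iff_getD a []]
  refine and_congr (by simp only [List.length_pos_iff]) (and_congr ?_ (and_congr ?_ (and_congr ?_ Iff.rfl)))
  · refine forall_congr' fun j => forall_congr' fun hj => ?_
    constructor
    · intro h p; exact getD_zero_iff _ h p
    · intro h
      rw [forall_mem_iff_getD _ 0]
      intro p hp
      have := (h p).not.2 (by omega)
      omega
  · refine forall_congr' fun j => forall_congr' fun hj => ?_
    omega
  · refine forall_congr' fun j => forall_congr' fun hj => ?_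
    exact (antitone_getD _).symm

def DS {k : ℕ} (σ : Fin k → ℕ) : Set (List (List ℕ)) :=
  {a | IsDPP a ∧ a.length = k ∧ ∀ i : Fin k, (a.getD (k - 1 - i.val) []).getD 0 0 = σ i + 1}

theorem DS_bij {k : ℕ} (σ : Fin k → ℕ) :
    Set.BijOn (fun (a : List (List ℕ)) (i : Fin k) (p : ℕ) => (a.getD (k - 1 - i.val) []).getD p 0)
     (DS σ) (⋃ t' ∈ Fintype.piFinset (rng 1 σ), Arr (fun i => σ i + 1) t') := by
  refine ⟨?_, ?_, ?_⟩
  · rintro a ⟨ha, hk, hσ⟩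
    rw [isDPP_iff] at ha
    obtain ⟨h1, h2, h3, h4, h5, h6, h7⟩ := ha
    simp only [Set.mem_iUnion, exists_prop]
    refine ⟨fun i => (a.getD (k - 1 - i.val) []).length, ?_, ?_, ?_, ?_, ?_⟩
    · rw [mem_rng_pi]
      refine ⟨fun i => ?_, fun i _ => ?_, fun i j hij => ?_⟩
      · have := h6 (k - 1 - i.val) (by omega)
        have := hσ i
        omega
      · have := h1 (k - 1 - i.val) (by omega)
        omega
      · have e1 := h7 (k - 1 - j.val) (by omega)
        rw [show k - 1 - j.val + 1 = k - 1 - i.val by omega, hσ i] at e1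
        omega
    · intro i; exact h4 _ (by omega)
    · intro i; exact hσ i
    · intro i p; exact h2 _ (by omega) p
    · intro i j hij p hp
      have e1 := h5 (k - 1 - j.val) p (by omega)
      rw [show k - 1 - j.val + 1 = k - 1 - i.val by omega] at e1
      apply e1
      have := (h2 (k - 1 - i.val) (by omega) p).not.1 hp
      omega
  · rintro a ⟨ha, hk, hσ⟩ b ⟨hb, hk', hσ'⟩ hab
    rw [isDPP_iff] at ha hb
    refine list_ext_getD [] a b (by omega) fun j hj => ?_
    have hj' : ∀ p, (a.getD j []).getD p 0 = (b.getD j []).getD p 0 := by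
      intro p
      have := congrFun (congrFun hab ⟨k - 1 - j, by omega⟩) p
      simp only at this
      rwa [show k - 1 - (k - 1 - j) = j by omega] at this
    refine list_ext_getD 0 _ _ ?_ fun p _ => hj' p
    have e1 := ha.2.1 j hj
    have e2 := hb.2.1 j (by omega)
    apply le_antisymm
    · rw [← e1, hj', e2]
    · rw [← e2, ← hj', e1]
  · intro b hb
    simp only [Set.mem_iUnion, exists_prop] at hb
    obtain ⟨t, ht, h1, h2, h3, h4⟩ := hb
    rw [mem_rng_pi] at ht
    obtain ⟨m1, m2, m3⟩ := ht
    let a : List (List ℕ) := List.ofFn (fun j : Fin k => List.ofFn (fun p : Fin (t j.rev) => b j.rev p))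
    have hlen : a.length = k := by simp [a]
    have hrow : ∀ i : Fin k, a.getD (k - 1 - i.val) [] = List.ofFn (fun p : Fin (t i) => b i p) := by
      intro i
      rw [List.getD_eq_getElem _ _ (by omega)]
      have : (⟨k - 1 - i.val, by omega⟩ : Fin k).rev = i := by ext; simp [Fin.rev]; omega
      simp only [a, List.getElem_ofFn]
      rw [this]
    have hL : ∀ i : Fin k, (a.getD (k - 1 - i.val) []).length = t i := by
      intro i; rw [hrow]; simp
    have hf : ∀ (i : Fin k) (p : ℕ), (a.getD (k - 1 - i.val) []).getD p 0 = b i p := by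
      intro i p
      rw [hrow]
      by_cases hp : p < t i
      · rw [List.getD_eq_getElem _ _ (by simpa using hp)]
        simp
      · rw [List.getD_eq_default _ _ (by simpa using hp)]
        exact ((h3 i p).2 (by omega)).symm
    have tp : ∀ i, 0 < t i := by
      intro i
      have := (h3 i 0).not.1 (by rw [h2]; exact Nat.succ_ne_zero _)
      omega
    have hidx : ∀ j < k, ∃ i : Fin k, j = k - 1 - i.val := fun j hj => ⟨⟨k - 1 - j, by omega⟩, by simp; omega⟩
    have hidx2 : ∀ j, j + 1 < k → ∃ i i' : Fin k, j = k - 1 - i.val ∧ j + 1 = k - 1 - i'.val ∧ i'.val + 1 = i.val :=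
      fun j hj => ⟨⟨k - 1 - j, by omega⟩, ⟨k - 1 - (j + 1), by omega⟩, by simp; omega, by simp; omega, by simp; omega⟩
    refine ⟨a, ⟨?_, hlen, fun i => by rw [hf, h2]⟩, ?_⟩
    · rw [isDPP_iff, hlen]
      refine ⟨?_, ?_, ?_, ?_, ?_, ?_, ?_⟩
      · intro j hj
        obtain ⟨i, rfl⟩ := hidx j hj
        rw [hL]; exact tp i
      · intro j hj p
        obtain ⟨i, rfl⟩ := hidx j hj
        rw [hL, hf]; exact h3 i p
      · intro j hj
        obtain ⟨i, i', e1, e2, e3⟩ := hidx2 j hj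
        rw [e2, e1, hL, hL]
        have := m3 i' i e3
        have := m1 i'
        omega
      · intro j hj
        obtain ⟨i, rfl⟩ := hidx j hj
        simp_rw [hf]; exact h1 i
      · intro j p hj
        obtain ⟨i, i', e1, e2, e3⟩ := hidx2 j hj
        rw [e2, e1, hL, hf, hf]
        intro hp
        exact h4 i' i e3 p (by rw [Ne, h3]; omega)
      · intro j hj
        obtain ⟨i, rfl⟩ := hidx j hj
        rw [hL, hf, h2]
        change t i < σ i + 1
        have := m1 i
        omega
      · intro j hj
        obtain ⟨i, i', e1, e2, e3⟩ := hidx2 j hj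
        rw [e2, e1, hL, hf, h2]
        change σ i' + 1 ≤ t i
        have := m3 i' i e3
        omega
    · funext i p
      exact hf i p

theorem DS_ncard {k : ℕ} (σ : Fin k → ℕ) (hσ : StrictMono σ) :
    (DS σ).Finite ∧ ((DS σ).ncard : ℚ) =
      (Matrix.of fun i j => ((Nat.choose (σ i + σ j) (σ i + 1) : ℕ) : ℚ)).det := by
  have h := DS_bij σ
  constructor
  · apply Set.Finite.of_finite_image _ h.injOn
    rw [h.image_eq]
    exact Set.Finite.biUnion (Finset.finite_toSet _) (fun t _ => Arr_finite _ t)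
  · rw [← h.injOn.ncard_image, h.image_eq, sum_Arr σ hσ]

theorem DPP_eq_iUnion (n : ℕ) : {a : List (List ℕ) | IsDPP a ∧ DPPOrder a n} =
    ⋃ S : Finset (Fin n), DS (fun i => (S.orderEmbOfFin rfl i : ℕ)) := by
  ext a
  simp only [Set.mem_ofPred_eq, Set.mem_iUnion]
  constructor
  · rintro ⟨ha, ho⟩
    have ha' := (isDPP_iff a).1 ha
    obtain ⟨h1, h2, h3, h4, h5, h6, h7⟩ := ha'
    have hb : ∀ j < a.length, (a.getD j []).getD 0 0 ≤ n ∧ 0 < (a.getD j []).getD 0 0 := by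
      intro j hj
      unfold DPPOrder at ho
      rw [forall_mem_iff_getD a []] at ho
      have := ho j hj
      rw [forall_mem_iff_getD _ 0] at this
      exact ⟨this 0 (h1 j hj), by have := h6 j hj; omega⟩
    let f : Fin a.length → Fin n := fun i => ⟨(a.getD (a.length - 1 - i.val) []).getD 0 0 - 1, by
      have := hb (a.length - 1 - i.val) (by omega); omega⟩
    have hmono : StrictMono f := by
      have key : ∀ d (i j : Fin a.length), i.val + d + 1 = j.val → f i < f j := by
        intro d
        induction d with
        | zero =>
          intro i j hij
          rw [Fin.lt_def]
          simp only [f]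
          have e1 := h7 (a.length - 1 - j.val) (by omega)
          rw [show a.length - 1 - j.val + 1 = a.length - 1 - i.val by omega] at e1
          have e2 := h6 (a.length - 1 - j.val) (by omega)
          have e3 := hb (a.length - 1 - i.val) (by omega)
          omega
        | succ d ih =>
          intro i j hij
          have e1 := ih i ⟨j.val - 1, by omega⟩ (by simp; omega)
          refine e1.trans ?_
          rw [Fin.lt_def]
          simp only [f]
          have e1 := h7 (a.length - 1 - j.val) (by omega)
          rw [show a.length - 1 - j.val + 1 = a.length - 1 - (j.val - 1) by omega] at e1
          have e2 := h6 (a.length - 1 - j.val) (by omega)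
          have e3 := hb (a.length - 1 - (j.val - 1)) (by omega)
          omega
      intro i j hij
      exact key (j.val - i.val - 1) i j (by have := Fin.lt_def.1 hij; omega)
    let S : Finset (Fin n) := Finset.univ.image f
    have hS : S.card = a.length := by
      simp only [S]
      rw [Finset.card_image_of_injective _ hmono.injective]; simp
    have hu := Finset.orderEmbOfFin_unique hS (f := f) (fun x => by simp [S]) hmono
    refine ⟨S, ha, hS.symm, ?_⟩
    intro i
    have e1 : (S.orderEmbOfFin rfl i) = f (Fin.cast hS i) := by
      rw [hu]
      simp
    simp only [e1]
    simp only [f, Fin.val_cast, hS]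
    have := hb (a.length - 1 - i.val) (by omega)
    omega
  · rintro ⟨S, ha, hk, hs⟩
    refine ⟨ha, ?_⟩
    have ha' := (isDPP_iff a).1 ha
    obtain ⟨h1, h2, h3, h4, h5, h6, h7⟩ := ha'
    unfold DPPOrder
    rw [forall_mem_iff_getD a []]
    intro j hj
    rw [forall_mem_iff_getD _ 0]
    intro p hp
    have e1 := h4 j hj (Nat.zero_le p)
    simp only at e1
    have e2 := hs ⟨S.card - 1 - j, by omega⟩
    simp only at e2
    rw [show S.card - 1 - (S.card - 1 - j) = j by omega] at e2
    have := (S.orderEmbOfFin rfl ⟨S.card - 1 - j, by omega⟩).isLt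
    omega

theorem DS_mem_iff {n : ℕ} (S : Finset (Fin n)) (a : List (List ℕ))
    (ha : a ∈ DS (fun i => (S.orderEmbOfFin rfl i : ℕ))) (x : Fin n) :
    x ∈ S ↔ ∃ j < a.length, (a.getD j []).getD 0 0 = x.val + 1 := by
  obtain ⟨-, hk, hs⟩ := ha
  have := Finset.range_orderEmbOfFin S rfl
  rw [← Finset.mem_coe, ← this]
  constructor
  · rintro ⟨i, rfl⟩
    exact ⟨S.card - 1 - i.val, by omega, hs i⟩
  · rintro ⟨j, hj, h⟩
    refine ⟨⟨S.card - 1 - j, by omega⟩, ?_⟩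
    have e2 := hs ⟨S.card - 1 - j, by omega⟩
    simp only at e2
    rw [show S.card - 1 - (S.card - 1 - j) = j by omega] at e2
    ext
    omega

theorem DPP_ncard_eq_det (n : ℕ) : (({a : List (List ℕ) | IsDPP a ∧ DPPOrder a n}.ncard : ℚ)) =
    (1 + Matrix.of fun i j : Fin n => ((Nat.choose (i.val + j.val) (i.val + 1) : ℕ) : ℚ)).det := by
  rw [DPP_eq_iUnion, Set.ncard_iUnion_of_finite, finsum_eq_sum_of_fintype, det_one_add_eq_sum]
  · push_cast
    refine Finset.sum_congr rfl fun S _ => ?_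
    rw [(DS_ncard _ (fun i j h => (S.orderEmbOfFin rfl).strictMono h)).2]
    rfl
  · intro S
    exact (DS_ncard _ (fun i j h => (S.orderEmbOfFin rfl).strictMono h)).1
  · intro S T hne
    rw [Function.onFun, Set.disjoint_left]
    intro a h1 h2
    apply hne
    ext x
    rw [DS_mem_iff S a h1, DS_mem_iff T a h2]
end DPPaux


namespace DPPaux
open Finset

theorem altsum_poly (n : ℕ) (P : Polynomial ℚ) (hP : P.natDegree < n) :
    ∑ j ∈ range (n + 1), (-1 : ℚ) ^ j * n.choose j * P.eval (j : ℚ) = 0 := by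
  have h1 := congrFun (Polynomial.fwdDiff_iter_eq_zero_of_degree_lt hP) 0
  rw [fwdDiff_iter_eq_sum_shift] at h1
  have h2 : (-1 : ℚ) ^ n * ∑ j ∈ range (n + 1), (-1 : ℚ) ^ j * n.choose j * P.eval (j : ℚ) = 0 := by
    rw [mul_sum]
    refine Eq.trans ?_ h1
    refine sum_congr rfl fun j hj => ?_
    have hj' : j ≤ n := by simp at hj; omega
    obtain ⟨m, rfl⟩ := Nat.exists_eq_add_of_le hj'
    simp only [Nat.add_sub_cancel_left, zero_add, nsmul_eq_mul, mul_one, zsmul_eq_mul]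
    push_cast
    have : (-1 : ℚ) ^ j * (-1) ^ j = 1 := by rw [← mul_pow]; simp
    rw [pow_add]
    linear_combination ((-1 : ℚ) ^ m * (j + m).choose j * P.eval (j : ℚ)) * this
  have h3 : (-1 : ℚ) ^ n ≠ 0 := by simp
  exact (mul_eq_zero.1 h2).resolve_left h3

theorem fwd_inv (n : ℕ) : ∀ y : ℕ, (fwdDiff (1 : ℕ))^[n] (fun x : ℕ => (1 : ℚ) / (x + 1)) y =
    (-1) ^ n * n.factorial * y.factorial / (y + n + 1).factorial := by
  induction n with
  | zero =>
    intro y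
    simp [Nat.factorial_succ]
    have : (y.factorial : ℚ) ≠ 0 := by positivity
    field_simp
  | succ n ih =>
    intro y
    rw [Function.iterate_succ_apply', fwdDiff, ih, ih]
    rw [show y + 1 + n + 1 = (y + n + 1) + 1 by ring, show y + (n + 1) + 1 = (y + n + 1) + 1 by ring]
    rw [Nat.factorial_succ (y + n + 1), Nat.factorial_succ n, Nat.factorial_succ y]
    have : ((y + n + 1).factorial : ℚ) ≠ 0 := by positivity
    have : (y : ℚ) + n + 1 + 1 ≠ 0 := by positivity
    push_cast
    field_simp
    ring

theorem altsum_inv (n : ℕ) :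
    ∑ j ∈ range (n + 1), (-1 : ℚ) ^ j * n.choose j * (1 / ((j : ℚ) + n + 1)) =
      n.factorial * n.factorial / (2 * n + 1).factorial := by
  have h1 := fwd_inv n n
  rw [fwdDiff_iter_eq_sum_shift] at h1
  have h2 : (-1 : ℚ) ^ n * ∑ j ∈ range (n + 1), (-1 : ℚ) ^ j * n.choose j * (1 / ((j : ℚ) + n + 1)) = 
      (-1) ^ n * (n.factorial * n.factorial / (2 * n + 1).factorial) := by
    rw [show 2 * n + 1 = n + n + 1 by ring, ← mul_div_assoc, ← mul_assoc, ← h1, mul_sum]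
    refine sum_congr rfl fun j hj => ?_
    have hj' : j ≤ n := by simp at hj; omega
    obtain ⟨m, rfl⟩ := Nat.exists_eq_add_of_le hj'
    simp only [Nat.add_sub_cancel_left, nsmul_eq_mul, mul_one, zsmul_eq_mul]
    push_cast
    have : (-1 : ℚ) ^ j * (-1) ^ j = 1 := by rw [← mul_pow]; simp
    rw [pow_add, show (j : ℚ) + m + j + 1 = j + (j + m) + 1 by ring]
    linear_combination ((-1 : ℚ) ^ m * (j + m).choose j * (1 / ((j : ℚ) + (j + m) + 1))) * this
  have h3 : (-1 : ℚ) ^ n ≠ 0 := by simp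
  exact mul_left_cancel₀ h3 h2

theorem altsum_poly_div (n : ℕ) (Q : Polynomial ℚ) (hQ : Q.natDegree ≤ n) :
    ∑ j ∈ range (n + 1), (-1 : ℚ) ^ j * n.choose j * (Q.eval (j : ℚ) / ((j : ℚ) + n + 1)) =
      Q.eval (-(n + 1 : ℚ)) * (n.factorial * n.factorial / (2 * n + 1).factorial) := by
  let r : ℚ := -(n + 1 : ℚ)
  let Q1 := Q /ₘ (Polynomial.X - Polynomial.C r)
  have hdiv : Q = Polynomial.C (Q.eval r) + (Polynomial.X - Polynomial.C r) * Q1 := by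
    conv_lhs => rw [← Polynomial.modByMonic_add_div Q (Polynomial.X - Polynomial.C r)]
    rw [Polynomial.modByMonic_X_sub_C_eq_C_eval]
  have hev : ∀ j : ℕ, Q.eval (j : ℚ) / ((j : ℚ) + n + 1) = Q.eval r * (1 / ((j : ℚ) + n + 1)) + Q1.eval (j : ℚ) := by
    intro j
    have : (j : ℚ) + n + 1 ≠ 0 := by positivity
    conv_lhs => rw [hdiv]
    simp only [Polynomial.eval_add, Polynomial.eval_mul, Polynomial.eval_C, Polynomial.eval_sub, Polynomial.eval_X, r]
    field_simp
    ring
  simp_rw [hev, mul_add, sum_add_distrib]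
  have hz : ∑ j ∈ range (n + 1), (-1 : ℚ) ^ j * n.choose j * Q1.eval (j : ℚ) = 0 := by
    by_cases hn : n = 0
    · have : Q1 = 0 := by
        apply (Polynomial.divByMonic_eq_zero_iff (Polynomial.monic_X_sub_C r)).2
        rw [Polynomial.degree_X_sub_C]
        exact lt_of_le_of_lt (Polynomial.degree_le_of_natDegree_le hQ) (by simp [hn])
      simp [this]
    · apply altsum_poly
      have := Polynomial.natDegree_divByMonic Q (Polynomial.monic_X_sub_C r)
      rw [Polynomial.natDegree_X_sub_C] at this
      change Q1.natDegree = _ at this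
      omega
  rw [hz, add_zero, ← altsum_inv, mul_sum]
  refine sum_congr rfl fun j _ => by ring

/-- moments -/
noncomputable def mu (m : ℕ) : ℚ := (1 / 3) * (-1) ^ m * (ascPochhammer ℚ m).eval (2 / 3) / (m + 1).factorial

theorem asc_pos (m : ℕ) (x : ℚ) (hx : 0 < x) : 0 < (ascPochhammer ℚ m).eval x := ascPochhammer_pos m x hx

theorem asc_add (i j : ℕ) (x : ℚ) : (ascPochhammer ℚ (j + i)).eval x =
    (ascPochhammer ℚ j).eval x * (ascPochhammer ℚ i).eval (x + j) := by
  rw [← ascPochhammer_mul]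
  simp

noncomputable def cc (n j : ℕ) : ℚ := n.choose j * (n + j).factorial / (ascPochhammer ℚ j).eval (2 / 3)

theorem term_eq (n i j : ℕ) : cc n j * mu (i + j) = (1 / 3) * (-1) ^ i *
    ((-1 : ℚ) ^ j * n.choose j * ((ascPochhammer ℚ i).eval (2 / 3 + j : ℚ) * ((n + j).factorial / (i + j + 1).factorial))) := by
  unfold cc mu
  rw [show i + j = j + i by ring, asc_add]
  have := (asc_pos j (2/3) (by norm_num)).ne'
  have : ((j + i + 1).factorial : ℚ) ≠ 0 := by positivity
  field_simp
  ring

theorem hank_zero (n i : ℕ) (hi : i < n) : ∑ j ∈ range (n + 1), cc n j * mu (i + j) = 0 := by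
  simp_rw [term_eq, ← mul_sum]
  rw [mul_eq_zero]; right
  obtain ⟨m, rfl⟩ := Nat.exists_eq_add_of_lt hi
  have h := altsum_poly (i + m + 1) (((ascPochhammer ℚ i).comp (Polynomial.C (2/3) + Polynomial.X)) *
    ((ascPochhammer ℚ m).comp (Polynomial.X + Polynomial.C (i + 2 : ℚ)))) ?_
  · rw [← h]
    refine sum_congr rfl fun j _ => ?_
    congr 1
    simp only [Polynomial.eval_mul, Polynomial.eval_comp, Polynomial.eval_add, Polynomial.eval_C, Polynomial.eval_X]
    congr 1
    have := Nat.factorial_mul_ascFactorial (i + j + 1) m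
    have h2 : (i + m + 1 + j).factorial = (i + j + 1).factorial * (i + j + 1 + 1).ascFactorial m := by
      rw [this]; congr 1; ring
    rw [h2]
    have h3 := Nat.cast_ascFactorial ℚ (i + j + 1 + 1) m
    push_cast at h3 ⊢
    rw [h3, show (j : ℚ) + (i + 2) = i + j + 1 + 1 by ring]
    have : ((i + j + 1).factorial : ℚ) ≠ 0 := by positivity
    field_simp
  · refine lt_of_le_of_lt Polynomial.natDegree_mul_le ?_
    rw [Polynomial.natDegree_comp, Polynomial.natDegree_comp, ascPochhammer_natDegree, ascPochhammer_natDegree,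
      add_comm (Polynomial.C _) Polynomial.X, Polynomial.natDegree_X_add_C, Polynomial.natDegree_X_add_C]
    omega

theorem hank_diag (n : ℕ) : ∑ j ∈ range (n + 1), cc n j * mu (n + j) =
    (1 / 3) * (ascPochhammer ℚ n).eval (4 / 3) * (n.factorial * n.factorial / (2 * n + 1).factorial) := by
  simp_rw [term_eq, ← mul_sum]
  have h := altsum_poly_div n ((ascPochhammer ℚ n).comp (Polynomial.C (2/3) + Polynomial.X)) (by
    rw [Polynomial.natDegree_comp, ascPochhammer_natDegree, add_comm (Polynomial.C _) Polynomial.X, Polynomial.natDegree_X_add_C]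
    omega)
  simp only [Polynomial.eval_comp, Polynomial.eval_add, Polynomial.eval_C, Polynomial.eval_X] at h
  have h2 : (ascPochhammer ℚ n).eval (2/3 + -((n : ℚ) + 1)) = (-1) ^ n * (ascPochhammer ℚ n).eval (4/3) := by
    have := ascPochhammer_eval_neg_eq_descPochhammer (R := ℚ) (1/3 + n) n
    rw [show (2/3 + -((n : ℚ) + 1)) = -(1/3 + n) by ring, this, descPochhammer_eval_eq_ascPochhammer]
    congr 2
    ring
  rw [h2] at h
  have h3 : ((-1 : ℚ) ^ n) * (-1) ^ n = 1 := by rw [← mul_pow]; simp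
  have hS : ∑ j ∈ range (n + 1), ((-1 : ℚ) ^ j * n.choose j * ((ascPochhammer ℚ n).eval (2 / 3 + j : ℚ) * ((n + j).factorial / (n + j + 1).factorial))) = _ :=
    (sum_congr rfl fun j _ => by
      rw [div_eq_mul_inv (Polynomial.eval _ _)]
      congr 2
      rw [Nat.factorial_succ]
      have : ((n + j).factorial : ℚ) ≠ 0 := by positivity
      have : (j : ℚ) + n + 1 ≠ 0 := by positivity
      push_cast
      field_simp
      ring).trans h
  rw [hS]
  linear_combination (1 / 3 * (ascPochhammer ℚ n).eval (4 / 3) * (n.factorial * n.factorial / (2 * n + 1).factorial)) * h3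

theorem hank_det (n : ℕ) : (Matrix.of fun i j : Fin n => mu (i.val + j.val)).det =
    ∏ k ∈ range n, (((1 / 3) * (ascPochhammer ℚ k).eval (4 / 3) * (k.factorial * k.factorial / (2 * k + 1).factorial)) / cc k k) := by
  let P : Matrix (Fin n) (Fin n) ℚ := Matrix.of fun j m => cc m.val j.val
  have hcc0 : ∀ m j : ℕ, m < j → cc m j = 0 := by
    intro m j h; simp [cc, Nat.choose_eq_zero_of_lt h]
  have hP : P.det = ∏ k ∈ range n, cc k k := by
    rw [Matrix.det_of_upperTriangular, Finset.prod_range]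
    · rfl
    · intro i j hij
      exact hcc0 _ _ hij
  have hsum : ∀ i m : Fin n, ((Matrix.of fun i j : Fin n => mu (i.val + j.val)) * P) i m = 
      ∑ j ∈ range (m.val + 1), cc m.val j * mu (i.val + j) := by
    intro i m
    rw [Matrix.mul_apply]
    simp only [P, Matrix.of_apply]
    rw [← Fin.sum_univ_eq_sum_range (fun j => cc m.val j * mu (i.val + j)), 
      Fin.sum_univ_eq_sum_range (fun j => mu (i.val + j) * cc m.val j) n,
      Fin.sum_univ_eq_sum_range (fun j => cc m.val j * mu (i.val + j)) (m.val + 1)]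
    symm
    rw [← Finset.sum_subset (show range (m.val + 1) ⊆ range n from Finset.range_subset_range.2 (by omega))]
    · exact sum_congr rfl fun _ _ => mul_comm _ _
    · intro x _ hx
      rw [hcc0 _ _ (by simpa using hx), mul_zero]
  have hHP : ((Matrix.of fun i j : Fin n => mu (i.val + j.val)) * P).det =
      ∏ k ∈ range n, ((1 / 3) * (ascPochhammer ℚ k).eval (4 / 3) * (k.factorial * k.factorial / (2 * k + 1).factorial)) := by
    rw [Matrix.det_of_lowerTriangular, Finset.prod_range]
    · refine Finset.prod_congr rfl fun i _ => ?_
      rw [hsum, hank_diag]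
    · intro i j hij
      rw [hsum, hank_zero]
      exact hij
  rw [Matrix.det_mul, hP] at hHP
  rw [Finset.prod_div_distrib, ← hHP, mul_div_cancel_right₀]
  rw [Finset.prod_ne_zero_iff]
  intro k _
  have := (asc_pos k (2/3) (by norm_num))
  unfold cc
  rw [Nat.choose_self]
  exact div_ne_zero (by positivity) this.ne'

theorem final_prod (n : ℕ) : 3 ^ n * 27 ^ (∑ k ∈ range n, k) * (Matrix.of fun i j : Fin n => mu (i.val + j.val)).det =
    ∏ k ∈ range n, ((3 * k + 1).factorial : ℚ) / ((n + k).factorial : ℚ) := by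
  rw [hank_det, ← Finset.prod_pow_eq_pow_sum, show (3 : ℚ) ^ n = ∏ k ∈ range n, (3 : ℚ) by simp,
    ← prod_mul_distrib, ← prod_mul_distrib]
  have h1 : ∀ k : ℕ, 3 * 27 ^ k * (((1 / 3) * (ascPochhammer ℚ k).eval (4 / 3) * (k.factorial * k.factorial / (2 * k + 1).factorial)) / cc k k)
    = (3 * k + 1).factorial * k.factorial / ((2 * k).factorial * (2 * k + 1).factorial) := by
    intro k
    have h3 : 27 ^ k * (ascPochhammer ℚ k).eval (4 / 3) * (ascPochhammer ℚ k).eval (2 / 3) * k.factorial = (3 * k + 1).factorial := by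
      induction k with
      | zero => simp
      | succ k ih =>
        have hf : (3 * (k + 1) + 1).factorial = (3 * k + 4) * ((3 * k + 3) * ((3 * k + 2) * (3 * k + 1).factorial)) := rfl
        rw [hf]
        push_cast
        rw [← ih, ascPochhammer_succ_eval, ascPochhammer_succ_eval, Nat.factorial_succ]
        push_cast
        ring
    rw [← h3]
    have := (asc_pos k (2/3) (by norm_num)).ne'
    have e1 : ((2 * k).factorial : ℚ) ≠ 0 := by positivity
    have e2 : ((2 * k + 1).factorial : ℚ) ≠ 0 := by positivity
    have e3 : (k.factorial : ℚ) ≠ 0 := by positivity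
    simp only [cc, Nat.choose_self, ← two_mul]
    field_simp
    try ring
  simp_rw [h1]
  induction n with
  | zero => simp
  | succ n ih =>
    rw [prod_range_succ, ih, prod_range_succ, prod_div_distrib, prod_div_distrib]
    have h4 : ∏ k ∈ range n, ((n + 1 + k).factorial : ℚ) = (∏ k ∈ range n, ((n + k).factorial : ℚ)) * (2 * n).factorial / n.factorial := by
      have e3 : (n.factorial : ℚ) ≠ 0 := by positivity
      rw [eq_div_iff e3]
      have := Finset.prod_range_succ (fun k => ((n + k).factorial : ℚ)) n
      have h5 := Finset.prod_range_succ' (fun k => ((n + k).factorial : ℚ)) n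
      rw [this] at h5
      rw [two_mul, h5, add_zero]
      congr 1
      refine prod_congr rfl fun k _ => ?_
      congr 2; ring
    rw [h4, show n + 1 + n = 2 * n + 1 by ring]
    have e1 : ((2 * n).factorial : ℚ) ≠ 0 := by positivity
    have e2 : ((2 * n + 1).factorial : ℚ) ≠ 0 := by positivity
    have e3 : (n.factorial : ℚ) ≠ 0 := by positivity
    have e4 : (∏ k ∈ range n, ((n + k).factorial : ℚ)) ≠ 0 := by
      rw [prod_ne_zero_iff]; intro k _; positivity
    field_simp
end DPPaux


namespace DPPaux
section ps
open PowerSeries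

theorem coeff_mul_subst {R : Type*} [CommRing R] (g F b : R⟦X⟧) (hb : constantCoeff b = 0) (n j : ℕ) (hj : j < n) :
    coeff j (g * F.subst b) = ∑ l ∈ Finset.range n, coeff l F * coeff j (g * b ^ l) := by
  have hs : HasSubst b := HasSubst.of_constantCoeff_zero' hb
  obtain ⟨b1, rfl⟩ := X_dvd_iff.2 hb
  have h1 := eq_X_pow_mul_shift_add_trunc n F
  have h2 := congrArg (fun Q => coeff j (g * (substAlgHom (R := R) hs Q))) h1
  simp only [map_add, map_mul, map_pow, substAlgHom_coe, substAlgHom_X] at h2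
  rw [coe_substAlgHom] at h2
  rw [h2, mul_add, map_add]
  have h3 : ∀ Q : R⟦X⟧, coeff j (g * ((X * b1) ^ n * Q)) = 0 := by
    intro Q
    rw [show g * ((X * b1) ^ n * Q) = X ^ n * (g * b1 ^ n * Q) by ring]
    rw [coeff_X_pow_mul', if_neg (by omega)]
  rw [h3, zero_add]
  rw [Polynomial.aeval_eq_sum_range' (n := n)]
  · rw [Finset.mul_sum, map_sum]
    refine Finset.sum_congr rfl fun l hl => ?_
    rw [coeff_trunc, if_pos (Finset.mem_range.1 hl), mul_smul_comm, coeff_smul, smul_eq_mul]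
  · obtain ⟨m, rfl⟩ : ∃ m, n = m + 1 := ⟨n - 1, by omega⟩
    exact natDegree_trunc_lt F m

theorem cube_uniq {K : Type*} [Field K] [CharZero K] (a b : K⟦X⟧) (ha : constantCoeff a = 1) (hb : constantCoeff b = 1)
    (h : a ^ 3 = b ^ 3) : a = b := by
  have h1 : (a - b) * (a ^ 2 + a * b + b ^ 2) = 0 := by linear_combination h
  rcases mul_eq_zero.1 h1 with h2 | h2
  · exact sub_eq_zero.1 h2
  · have := congrArg constantCoeff h2
    simp [ha, hb] at this
    norm_num at this

theorem coeff_binom (K : Type*) [Field K] [CharZero K] (m : ℕ) :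
    coeff (m + 1) (binomialSeries K (1 / 3 : ℚ)) = ((mu m : ℚ) : K) := by
  rw [binomialSeries_coeff, Rat.smul_one_eq_cast]
  congr 1
  rw [Ring.choose_eq_smul, smul_eq_mul]
  have h : ∀ m : ℕ, (descPochhammer ℤ (m + 1)).smeval (1 / 3 : ℚ) = 1 / 3 * (-1) ^ m * (ascPochhammer ℚ m).eval (2 / 3) := by
    intro m
    induction m with
    | zero => simp
    | succ m ih =>
      rw [descPochhammer_succ_right, Polynomial.smeval_mul, ih, ascPochhammer_succ_eval]
      rw [Polynomial.smeval_sub, Polynomial.smeval_X, Polynomial.smeval_natCast]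
      simp
      ring
  rw [h, mu]
  field_simp

theorem binom_cube (K : Type*) [Field K] [CharZero K] : (binomialSeries K (1 / 3 : ℚ)) ^ 3 = 1 + X := by
  have h1 := binomialSeries_nat (R := ℚ) (A := K) 1
  rw [pow_one] at h1
  rw [← h1, pow_succ, pow_two, ← binomialSeries_add, ← binomialSeries_add]
  congr 1; norm_num

theorem subst_binom {K : Type*} [Field K] [CharZero K] (u : K⟦X⟧) (hu : constantCoeff u = 1) :
    (binomialSeries K (1 / 3 : ℚ)).subst (u ^ 3 - 1) = u := by
  have hb : constantCoeff (u ^ 3 - 1) = 0 := by simp [hu]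
  have hs : HasSubst (u ^ 3 - 1) := HasSubst.of_constantCoeff_zero' hb
  apply cube_uniq _ _ _ hu
  · have h := congrArg (substAlgHom (R := K) hs) (binom_cube K)
    simp only [map_add, map_pow, map_one, substAlgHom_X] at h
    rw [coe_substAlgHom] at h
    rw [h]; ring
  · have := coeff_mul_subst 1 (binomialSeries K (1 / 3 : ℚ)) _ hb 1 0 (by norm_num)
    rw [one_mul] at this
    simpa using this

/-- the divided difference -/
noncomputable def Hh (K : Type*) [Field K] [CharZero K] : K⟦X⟧⟦X⟧ :=
  mk fun l => mk fun k => ((mu (k + l) : ℚ) : K)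

theorem Hh_eq (K : Type*) [Field K] [CharZero K] : (C (X : K⟦X⟧) - X) * Hh K =
    C (binomialSeries K (1 / 3 : ℚ)) - PowerSeries.map C (binomialSeries K (1 / 3 : ℚ)) := by
  ext l k
  rw [sub_mul, map_sub, map_sub, coeff_C_mul, map_sub, map_sub, coeff_map, coeff_C, coeff_C]
  rcases l with _ | l <;> rcases k with _ | k
  · simp
  · simp only [coeff_succ_X_mul, Hh, coeff_mk, coeff_zero_X_mul, if_true, coeff_binom]
    simp
  · simp only [coeff_succ_X_mul, Hh, coeff_mk, coeff_zero_X_mul, if_true, coeff_binom]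
    simp
  · simp only [coeff_succ_X_mul, Hh, coeff_mk, coeff_binom]
    simp [show k + (l + 1) = k + 1 + l by ring]

/-- composed series -/
noncomputable def Nn {K : Type*} [Field K] [CharZero K] (p q : K⟦X⟧) : K⟦X⟧⟦X⟧ :=
  (mk fun l => (coeff l (Hh K)).subst p : K⟦X⟧⟦X⟧).subst (PowerSeries.map C q : K⟦X⟧⟦X⟧)

theorem Nn_eq {K : Type*} [Field K] [CharZero K] (u v : K⟦X⟧) (hu : constantCoeff u = 1) (hv : constantCoeff v = 1) :
    ((C u) ^ 3 - (PowerSeries.map C v) ^ 3) * Nn (u ^ 3 - 1) (v ^ 3 - 1) = C u - PowerSeries.map C v := by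
  have hp : constantCoeff (u ^ 3 - 1) = 0 := by simp [hu]
  have hq : constantCoeff (v ^ 3 - 1) = 0 := by simp [hv]
  have hsp : HasSubst (u ^ 3 - 1) := HasSubst.of_constantCoeff_zero' hp
  have hsq' : HasSubst (v ^ 3 - 1) := HasSubst.of_constantCoeff_zero' hq
  obtain ⟨Q, hQ⟩ : ∃ Q, Q = PowerSeries.map (C : K →+* K⟦X⟧) (v ^ 3 - 1) := ⟨_, rfl⟩
  have hsq : HasSubst Q := by
    apply HasSubst.of_constantCoeff_zero'
    rw [hQ, ← coeff_zero_eq_constantCoeff_apply, coeff_map, coeff_zero_eq_constantCoeff_apply, hq, map_zero]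
  have h1 := congrArg (PowerSeries.map (substAlgHom (R := K) hsp).toRingHom) (Hh_eq K)
  have hmap : PowerSeries.map (substAlgHom (R := K) hsp).toRingHom (Hh K) = mk fun l => (coeff l (Hh K)).subst (u ^ 3 - 1) := by
    ext1 l
    rw [coeff_map, coeff_mk]
    simp [coe_substAlgHom]
  have hmap2 : PowerSeries.map (substAlgHom (R := K) hsp).toRingHom (PowerSeries.map C (binomialSeries K (1 / 3 : ℚ))) =
      PowerSeries.map C (binomialSeries K (1 / 3 : ℚ)) := by
    ext1 l
    rw [coeff_map, coeff_map]
    exact (substAlgHom (R := K) hsp).commutes _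
  rw [map_mul, map_sub, map_sub, map_C, map_C, map_X, hmap, hmap2] at h1
  have e1 : (substAlgHom (R := K) hsp).toRingHom X = u ^ 3 - 1 := substAlgHom_X hsp
  have e2 : (substAlgHom (R := K) hsp).toRingHom (binomialSeries K (1 / 3 : ℚ)) = u := by
    have := subst_binom u hu
    rw [← coe_substAlgHom hsp] at this
    exact this
  rw [e1, e2] at h1
  have h2 := congrArg (substAlgHom (R := K⟦X⟧) hsq) h1
  have hC : ∀ r : K⟦X⟧, substAlgHom (R := K⟦X⟧) hsq (C r) = C r := fun r => by
    rw [coe_substAlgHom]; exact subst_C r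
  have e3 : substAlgHom (R := K⟦X⟧) hsq (PowerSeries.map C (binomialSeries K (1 / 3 : ℚ))) = PowerSeries.map C v := by
    rw [coe_substAlgHom]
    have := map_subst hsq' (h := (C : K →+* K⟦X⟧)) (binomialSeries K (1 / 3 : ℚ))
    rw [subst_binom v hv] at this
    rw [hQ]
    exact this.symm
  simp only [map_mul, map_sub, map_pow, map_one, hC, substAlgHom_X, e3] at h2
  rw [coe_substAlgHom] at h2
  rw [← h2]
  unfold Nn
  rw [← hQ]
  congr 1
  rw [hQ]
  simp

end ps
end DPPaux


namespace DPPaux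
section gf
open PowerSeries

/-- generating function of the matrix -/
noncomputable def Gg (K : Type*) [Field K] : K⟦X⟧⟦X⟧ :=
  mk fun j => mk fun i => (if i = j then (1 : K) else 0) + ((Nat.choose (i + j) (i + 1) : ℕ) : K)

theorem Gg_eq (K : Type*) [Field K] :
    Gg K * ((1 - C (X : K⟦X⟧) * X) * (1 - C (X : K⟦X⟧) - X) * (1 - X)) = (1 - C (X : K⟦X⟧)) * (1 - X + X ^ 2) := by
  let D : K⟦X⟧⟦X⟧ := mk fun j => mk fun i => (if i = j then (1 : K) else 0)
  let E : K⟦X⟧⟦X⟧ := mk fun j => mk fun i => ((Nat.choose (i + j) (i + 1) : ℕ) : K)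
  let F : K⟦X⟧⟦X⟧ := mk fun j => if j = 0 then 0 else 1
  have hG : Gg K = D + E := by
    ext j i; simp [Gg, D, E]
  have hD : D * (1 - C (X : K⟦X⟧) * X) = 1 := by
    rw [mul_sub, mul_one, ← mul_assoc, mul_comm D]
    ext j i
    rw [map_sub, map_sub]
    rcases j with _ | j <;> rcases i with _ | i
    · simp [D]
    · simp [D]
    · simp [D, coeff_succ_mul_X, coeff_one]
    · simp [D, coeff_succ_mul_X, coeff_one, coeff_succ_X_mul]
  have hE : E * (1 - C (X : K⟦X⟧) - X) = F := by
    rw [mul_sub, mul_sub, mul_one, mul_comm E (C X)]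
    ext j i
    rw [map_sub, map_sub, map_sub, map_sub]
    rcases j with _ | j <;> rcases i with _ | i
    · simp [E, F]
    · simp [E, F, coeff_succ_X_mul]
    · simp [E, F, coeff_succ_mul_X]
    · simp only [E, F, coeff_C_mul, coeff_mk, coeff_succ_mul_X, coeff_succ_X_mul, if_neg (Nat.succ_ne_zero j), coeff_one, if_neg (Nat.succ_ne_zero i)]
      rw [show i + 1 + (j + 1) = (i + j + 1) + 1 by ring, Nat.choose_succ_succ (i + j + 1) (i + 1),
        show i + (j + 1) = i + j + 1 by ring, show i + 1 + j = i + j + 1 by ring]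
      push_cast
      ring
  have hF : F * (1 - X) = X := by
    rw [mul_sub, mul_one]
    ext1 j
    rw [map_sub]
    rcases j with _ | _ | j
    · simp [F]
    · simp [F, coeff_succ_mul_X, coeff_X]
    · simp [F, coeff_succ_mul_X, coeff_X]
  rw [hG]
  linear_combination ((1 - C (X : K⟦X⟧) - X) * (1 - X)) * hD + ((1 - C (X : K⟦X⟧) * X) * (1 - X)) * hE + (1 - C (X : K⟦X⟧) * X) * hF

/-- f, g, u, v -/
noncomputable def iw {K : Type*} [Field K] (w : K) : K⟦X⟧ := (1 + C w * X)⁻¹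

theorem iw_mul {K : Type*} [Field K] (w : K) : iw w * (1 + C w * X) = 1 := by
  apply PowerSeries.inv_mul_cancel
  simp

theorem iw_const {K : Type*} [Field K] (w : K) : constantCoeff (iw w) = 1 := by
  have := congrArg constantCoeff (iw_mul w)
  simpa using this

/-- u-series -/
noncomputable def uw {K : Type*} [Field K] (w : K) : K⟦X⟧ := (1 + C (w ^ 2) * X) * iw w

theorem uw_const {K : Type*} [Field K] (w : K) : constantCoeff (uw w) = 1 := by
  simp [uw, iw_const]

theorem uw_cube {K : Type*} [Field K] (w : K) : uw w ^ 3 - 1 = X * (C (w ^ 2 - w) * iw w * (uw w ^ 2 + uw w + 1)) := by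
  have h1 : uw w - 1 = X * (C (w ^ 2 - w) * iw w) := by
    have := iw_mul w
    simp only [uw, map_sub]
    linear_combination this
  linear_combination (uw w ^ 2 + uw w + 1) * h1

theorem key_poly {R : Type*} [CommRing R] (W x y : R) (hW : W ^ 2 + W + 1 = 0) :
    3 * ((1 - x * y) * (1 - x - y)) = (1 + W ^ 2 * x) ^ 2 * (1 + W ^ 2 * y) ^ 2 +
      (1 + W ^ 2 * x) * (1 + W * x) * (1 + W ^ 4 * y) * (1 + W ^ 2 * y) + (1 + W ^ 4 * y) ^ 2 * (1 + W * x) ^ 2 := by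
  have h3 : W ^ 3 = 1 := by linear_combination (W - 1) * hW
  have h4 : W ^ 4 = W := by linear_combination W * h3
  have h2 : W ^ 2 = -1 - W := by linear_combination hW
  rw [h4, h2]
  ring_nf
  simp only [h4, h3, h2]
  ring

theorem main_id {K : Type*} [Field K] [CharZero K] (w : K) (hw : w ^ 2 + w + 1 = 0) :
    3 * (C ((1 - X) * iw w ^ 2)) * PowerSeries.map C ((1 - X + X ^ 2) * iw (-1) * iw (w ^ 2) ^ 2) *
      Nn (uw w ^ 3 - 1) (uw (w ^ 2) ^ 3 - 1) = Gg K := by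
  have hw3 : w ^ 3 = 1 := by linear_combination (w - 1) * hw
  have hN := Nn_eq (uw w) (uw (w ^ 2)) (uw_const _) (uw_const _)
  generalize hNN : Nn (uw w ^ 3 - 1) (uw (w ^ 2) ^ 3 - 1) = N at hN ⊢
  have hne : C (uw w) - PowerSeries.map C (uw (w ^ 2)) ≠ 0 := by
    intro h
    have h1 := congrArg (fun Q => coeff 1 (coeff 0 Q)) h
    have h2 : coeff 1 (uw w) = w ^ 2 - w := by
      have := uw_const w
      have e : uw w = 1 + X * (C (w ^ 2 - w) * iw w) := by
        have := iw_mul w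
        simp only [uw, map_sub]
        linear_combination this
      rw [e]
      simp [coeff_one, coeff_succ_X_mul, iw_const]
    have h3 : coeff 0 (PowerSeries.map C (uw (w ^ 2)) : K⟦X⟧⟦X⟧) = C (constantCoeff (uw (w ^ 2))) := by
      rw [coeff_map, coeff_zero_eq_constantCoeff_apply]
    simp only [map_sub, h3, coeff_zero_C, h2, map_zero, coeff_C, one_ne_zero, if_true, if_false, sub_zero] at h1
    have hw0 : w ≠ 0 := by rintro rfl; simp at hw
    have : w = 1 := mul_left_cancel₀ hw0 (by linear_combination h1)
    rw [this] at hw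
    norm_num at hw
  have hN1 : (C (uw w) ^ 2 + C (uw w) * PowerSeries.map C (uw (w ^ 2)) + (PowerSeries.map C (uw (w ^ 2))) ^ 2) * N = 1 := by
    apply mul_left_cancel₀ hne
    linear_combination hN
  -- abbreviations
  have ha := congrArg (C : K⟦X⟧ →+* K⟦X⟧⟦X⟧) (iw_mul w)
  have hb := congrArg (PowerSeries.map (C : K →+* K⟦X⟧)) (iw_mul (w ^ 2))
  have hc := congrArg (PowerSeries.map (C : K →+* K⟦X⟧)) (iw_mul (-1 : K))
  simp only [uw, map_mul, map_add, map_sub, map_one, map_pow, PowerSeries.map_C, PowerSeries.map_X, map_neg] at hN1 ha hb hc ⊢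
  generalize (C (iw w) : K⟦X⟧⟦X⟧) = a at *
  generalize (PowerSeries.map C (iw (w ^ 2)) : K⟦X⟧⟦X⟧) = b at *
  generalize (PowerSeries.map C (iw (-1)) : K⟦X⟧⟦X⟧) = c at *
  have hW : (C (C w) : K⟦X⟧⟦X⟧) ^ 2 + C (C w) + 1 = 0 := by
    have := congrArg (fun z => (C (C z) : K⟦X⟧⟦X⟧)) hw
    simpa using this
  have hG := Gg_eq K
  have hnz : ((1 - C (X : K⟦X⟧) * X) * (1 - C (X : K⟦X⟧) - X) * (1 - X)) ≠ 0 := by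
    intro h
    have := congrArg (fun z => constantCoeff (constantCoeff z)) h
    simp at this
  apply mul_right_cancel₀ hnz
  rw [hG]
  clear hnz hG hNN hN hne
  generalize (C (C w) : K⟦X⟧⟦X⟧) = W at *
  generalize (C X : K⟦X⟧⟦X⟧) = x at *
  generalize (X : K⟦X⟧⟦X⟧) = y at *
  have hW3 : W ^ 3 = 1 := by linear_combination (W - 1) * hW
  have k1 : 3 * ((1 - x * y) * (1 - x - y)) = (1 + W ^ 2 * x) ^ 2 * (1 + W ^ 2 * y) ^ 2 +
      (1 + W ^ 2 * x) * (1 + W * x) * (1 + W ^ 4 * y) * (1 + W ^ 2 * y) + (1 + W ^ 4 * y) ^ 2 * (1 + W * x) ^ 2 := by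
    exact key_poly W x y hW
  have k2 : a ^ 2 * b ^ 2 * (3 * ((1 - x * y) * (1 - x - y))) * N = 1 := by
    have e1 : a ^ 2 * b ^ 2 * (3 * ((1 - x * y) * (1 - x - y))) =
        (1 + W ^ 2 * x) ^ 2 * a ^ 2 * (b * (1 + W ^ 2 * y)) ^ 2 +
        (1 + W ^ 2 * x) * a * (a * (1 + W * x)) * ((1 + W ^ 4 * y) * b) * (b * (1 + W ^ 2 * y)) +
        ((1 + W ^ 4 * y) * b) ^ 2 * (a * (1 + W * x)) ^ 2 := by
      rw [k1]; ring
    rw [e1, ha, hb]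
    refine Eq.trans ?_ hN1
    ring
  linear_combination ((1 - x) * (1 - y + y ^ 2) * c * (1 - y)) * k2 + (1 - x) * (1 - y + y ^ 2) * hc

end gf
end DPPaux


namespace DPPaux
section fin
open PowerSeries

theorem tri_entry {K : Type*} [Field K] (f p : K⟦X⟧) (i k : ℕ) :
    coeff i (f * (X * p) ^ k) = if k ≤ i then coeff (i - k) (f * p ^ k) else 0 := by
  rw [show f * (X * p) ^ k = X ^ k * (f * p ^ k) by ring, coeff_X_pow_mul']

theorem tri_det {K : Type*} [Field K] (f p : K⟦X⟧) (hf : constantCoeff f = 1) (n : ℕ) :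
    (Matrix.of fun i k : Fin n => coeff i.val (f * (X * p) ^ k.val)).det = (constantCoeff p) ^ (∑ k ∈ Finset.range n, k) := by
  rw [Matrix.det_of_lowerTriangular, ← Finset.prod_pow_eq_pow_sum, Finset.prod_range]
  · refine Finset.prod_congr rfl fun i _ => ?_
    rw [Matrix.of_apply, tri_entry, if_pos le_rfl, Nat.sub_self, coeff_zero_eq_constantCoeff_apply]
    simp [hf]
  · intro i j hij
    rw [Matrix.of_apply, tri_entry, if_neg (not_le.2 (show i.val < j.val from hij))]

theorem entry_eq {K : Type*} [Field K] [CharZero K] (w : K) (hw : w ^ 2 + w + 1 = 0) (n i j : ℕ) (hi : i < n) (hj : j < n) :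
    (if i = j then (1 : K) else 0) + ((Nat.choose (i + j) (i + 1) : ℕ) : K) =
      3 * ∑ l ∈ Finset.range n, (∑ k ∈ Finset.range n, ((mu (k + l) : ℚ) : K) * coeff i (((1 - X) * iw w ^ 2) * (uw w ^ 3 - 1) ^ k)) *
        coeff j (((1 - X + X ^ 2) * iw (-1) * iw (w ^ 2) ^ 2) * (uw (w ^ 2) ^ 3 - 1) ^ l) := by
  have h := congrArg (fun Q => coeff i (coeff j Q)) (main_id w hw)
  have e : coeff i (coeff j (Gg K)) = (if i = j then (1 : K) else 0) + ((Nat.choose (i + j) (i + 1) : ℕ) : K) := by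
    rw [Gg, coeff_mk, coeff_mk]
  rw [← e, ← h]
  generalize hf : (1 - X) * iw w ^ 2 = f
  generalize hg : (1 - X + X ^ 2) * iw (-1) * iw (w ^ 2) ^ 2 = g
  have hp : constantCoeff (uw w ^ 3 - 1) = 0 := by simp [uw_const]
  have hq : constantCoeff (uw (w ^ 2) ^ 3 - 1) = 0 := by simp [uw_const]
  generalize uw w ^ 3 - 1 = p at *
  generalize uw (w ^ 2) ^ 3 - 1 = q at *
  have hq' : constantCoeff (PowerSeries.map (C : K →+* K⟦X⟧) q) = 0 := by
    rw [← coeff_zero_eq_constantCoeff_apply, coeff_map, coeff_zero_eq_constantCoeff_apply, hq, map_zero]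
  have r1 : 3 * C f * PowerSeries.map C g * Nn p q = C (C 3) * (C f * (PowerSeries.map C g * Nn p q)) := by
    rw [show (C (C 3) : K⟦X⟧⟦X⟧) = 3 from (congrArg _ (map_ofNat (C : K →+* K⟦X⟧) 3)).trans (map_ofNat (C : K⟦X⟧ →+* K⟦X⟧⟦X⟧) 3)]; ring
  rw [r1, coeff_C_mul, coeff_C_mul, coeff_C_mul, Nn, coeff_mul_subst _ _ _ hq' n j hj]
  congr 1
  rw [Finset.mul_sum, map_sum]
  refine Finset.sum_congr rfl fun l _ => ?_
  rw [← map_pow, ← map_mul, coeff_map, coeff_mk, ← mul_assoc, coeff_mul_C, coeff_mul_subst _ _ _ hp n i hi]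
  congr 1
  refine Finset.sum_congr rfl fun k _ => ?_
  rw [Hh, coeff_mk, coeff_mk]

theorem det_eval (n : ℕ) : (1 + Matrix.of fun i j : Fin n => ((Nat.choose (i.val + j.val) (i.val + 1) : ℕ) : ℚ)).det =
    ∏ k ∈ Finset.range n, ((3 * k + 1).factorial : ℚ) / ((n + k).factorial : ℚ) := by
  obtain ⟨w, hw⟩ : ∃ w : ℂ, w ^ 2 + w + 1 = 0 := by
    refine ⟨⟨-1/2, Real.sqrt 3 / 2⟩, ?_⟩
    have := Real.mul_self_sqrt (show (0 : ℝ) ≤ 3 by norm_num)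
    apply Complex.ext
    · simp [pow_two]; nlinarith
    · simp [pow_two]; ring
  have hw3 : w ^ 3 = 1 := by linear_combination (w - 1) * hw
  rw [← final_prod]
  have inj : Function.Injective (Rat.castHom ℂ) := (Rat.castHom ℂ).injective
  apply inj
  rw [map_mul, map_mul, map_pow, map_pow, RingHom.map_det, RingHom.map_det]
  let L : Matrix (Fin n) (Fin n) ℂ := Matrix.of fun i k => coeff i.val (((1 - X) * iw w ^ 2) * (uw w ^ 3 - 1) ^ k.val)
  let L' : Matrix (Fin n) (Fin n) ℂ := Matrix.of fun j l => 
    coeff j.val (((1 - X + X ^ 2) * iw (-1) * iw (w ^ 2) ^ 2) * (uw (w ^ 2) ^ 3 - 1) ^ l.val)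
  let H : Matrix (Fin n) (Fin n) ℂ := (Rat.castHom ℂ).mapMatrix (Matrix.of fun i j : Fin n => mu (i.val + j.val))
  have hA : (Rat.castHom ℂ).mapMatrix (1 + Matrix.of fun i j : Fin n => ((Nat.choose (i.val + j.val) (i.val + 1) : ℕ) : ℚ)) =
      (3 : ℂ) • (L * H * L'.transpose) := by
    ext i j
    have := entry_eq w hw n i.val j.val i.isLt j.isLt
    rw [Matrix.smul_apply, smul_eq_mul, Matrix.mul_apply]
    simp only [Matrix.mul_apply, Matrix.transpose_apply]
    rw [← Fin.sum_univ_eq_sum_range (fun l => (∑ k ∈ Finset.range n, ((mu (k + l) : ℚ) : ℂ) * coeff i.val (((1 - X) * iw w ^ 2) * (uw w ^ 3 - 1) ^ k)) *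
        coeff j.val (((1 - X + X ^ 2) * iw (-1) * iw (w ^ 2) ^ 2) * (uw (w ^ 2) ^ 3 - 1) ^ l)) n] at this
    refine Eq.trans ?_ (this.trans ?_)
    · simp [Matrix.one_apply, Fin.ext_iff]
      split_ifs <;> simp
    · congr 1
      refine Finset.sum_congr rfl fun l _ => ?_
      congr 1
      rw [← Fin.sum_univ_eq_sum_range (fun k => ((mu (k + l.val) : ℚ) : ℂ) * coeff i.val (((1 - X) * iw w ^ 2) * (uw w ^ 3 - 1) ^ k)) n]
      refine Finset.sum_congr rfl fun k _ => ?_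
      simp [L, H, mul_comm]
  have hL : L.det = (3 * (w ^ 2 - w)) ^ (∑ k ∈ Finset.range n, k) := by
    simp only [L, uw_cube]
    rw [tri_det]
    · congr 1
      simp [iw_const, uw_const]
      ring
    · simp [iw_const]
  have hL' : L'.det = (3 * ((w ^ 2) ^ 2 - w ^ 2)) ^ (∑ k ∈ Finset.range n, k) := by
    simp only [L', uw_cube]
    rw [tri_det]
    · congr 1
      simp [iw_const, uw_const]
      ring
    · simp [iw_const]
  rw [hA, Matrix.det_smul, Matrix.det_mul, Matrix.det_mul, Matrix.det_transpose, hL, hL', Fintype.card_fin]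
  have h27 : (3 * (w ^ 2 - w)) * (3 * ((w ^ 2) ^ 2 - w ^ 2)) = 27 := by
    have h6 : w ^ 6 = 1 := by linear_combination (w ^ 3 + 1) * hw3
    linear_combination (9 : ℂ) * h6 - 9 * (w ^ 2 + w) * hw3 + 9 * hw3 - 9 * hw
  simp only [map_ofNat]
  rw [← h27, mul_pow _ (3 * ((w ^ 2) ^ 2 - w ^ 2)) (∑ k ∈ Finset.range n, k)]
  change _ = _ * H.det
  ring

theorem dpp_count' (n : ℕ) :
    (({a : List (List ℕ) | IsDPP a ∧ DPPOrder a n}.ncard : ℚ)) =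
      ∏ k ∈ Finset.range n, ((3 * k + 1).factorial : ℚ) / ((n + k).factorial : ℚ) :=
  (DPP_ncard_eq_det n).trans (det_eval n)

end fin
end DPPaux


/-- Andrews' theorem: the number of descending plane partitions of order `n` is
`∏_{k=0}^{n-1} (3k+1)!/(n+k)!`. -/
theorem dpp_count (n : ℕ) :
    (({a : List (List ℕ) | IsDPP a ∧ DPPOrder a n}.ncard : ℚ)) =
      ∏ k ∈ Finset.range n, ((3 * k + 1).factorial : ℚ) / ((n + k).factorial : ℚ) :=
  DPPaux.dpp_count' n
end

section
/- For every n ≥ 1 and every k with 0 ≤ k ≤ n−1, the number of descending plane partitions of order n with exactly k rows and no special part equals the number of permutations of {1,…,n} with exactly k ascents. -/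
/-- The number of ascents of a word `l`: positions `k` (0-indexed) with `l_k < l_{k+1}`. -/
def numAscents (l : List ℕ) : ℕ :=
  ((List.range (l.length - 1)).filter fun k => decide (l.getD k 0 < l.getD (k + 1) 0)).length


namespace DPPPerm

/-- Codes of length `n`: the entry with `j` entries to its right is at most `j`. -/
def Code : List ℕ → Prop
  | [] => True
  | m :: e => m ≤ e.length ∧ Code e

def codeAsc : List ℕ → ℕ
  | [] => 0
  | m :: e => codeAsc e + if e.headD 0 < m then 1 else 0

def decode {α : Type} (x0 : α) (ins : ℕ → ℕ → α → α) : List ℕ → α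
  | [] => x0
  | m :: e => ins e.length m (decode x0 ins e)

theorem code_count {α : Type} (X : ℕ → Set α) (mu : ℕ → α → ℕ) (rows : α → ℕ) (x0 : α)
    (ins : ℕ → ℕ → α → α) (del : ℕ → α → α)
    (h0 : X 0 = {x0}) (h0m : mu 0 x0 = 0) (h0r : rows x0 = 0)
    (hins : ∀ n m x, m ≤ n → x ∈ X n → ins n m x ∈ X (n + 1) ∧ mu (n + 1) (ins n m x) = m ∧
      rows (ins n m x) = rows x + (if mu n x < m then 1 else 0) ∧ del n (ins n m x) = x)
    (hdel : ∀ n y, y ∈ X (n + 1) → mu (n + 1) y ≤ n ∧ del n y ∈ X n ∧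
      ins n (mu (n + 1) y) (del n y) = y) (n k : ℕ) :
    {x | x ∈ X n ∧ rows x = k}.ncard = {e | (Code e ∧ e.length = n) ∧ codeAsc e = k}.ncard := by
  have key : ∀ e, Code e → decode x0 ins e ∈ X e.length ∧
      mu e.length (decode x0 ins e) = e.headD 0 ∧ rows (decode x0 ins e) = codeAsc e := by
    intro e
    induction e with
    | nil => intro _; simp [decode, h0, h0m, h0r, codeAsc]
    | cons m e ih =>
      rintro ⟨h1, h2⟩
      obtain ⟨a, b, c⟩ := ih h2
      obtain ⟨p, q, r, s⟩ := hins _ _ _ h1 a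
      refine ⟨p, q, ?_⟩
      simp only [decode, codeAsc, r, b, c]
  have inj : ∀ e, Code e → ∀ e', Code e' → e.length = e'.length →
      decode x0 ins e = decode x0 ins e' → e = e' := by
    intro e
    induction e with
    | nil => intro _ e' _ h _; exact (List.length_eq_zero_iff.1 h.symm).symm
    | cons m e ih =>
      rintro ⟨h1, h2⟩ e' he' hl heq
      cases e' with
      | nil => simp at hl
      | cons m' e' =>
        obtain ⟨h1', h2'⟩ := he'
        obtain ⟨p, q, r, s⟩ := hins _ _ _ h1 (key e h2).1
        obtain ⟨p', q', r', s'⟩ := hins _ _ _ h1' (key e' h2').1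
        have hl' : e.length = e'.length := by simpa using hl
        simp only [decode] at heq
        have e1 : m = m' := by rw [← q, ← q', heq, hl']
        have e2 : decode x0 ins e = decode x0 ins e' := by rw [← s, ← s', heq, hl']
        rw [e1, ih h2 e' h2' hl' e2]
  have surj : ∀ n, ∀ y ∈ X n, ∃ e, Code e ∧ e.length = n ∧ decode x0 ins e = y := by
    intro n
    induction n with
    | zero => intro y hy; exact ⟨[], trivial, rfl, by rw [h0] at hy; exact hy.symm⟩
    | succ n ih =>
      intro y hy
      obtain ⟨a, b, c⟩ := hdel n y hy
      obtain ⟨e, e1, e2, e3⟩ := ih _ b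
      exact ⟨mu (n + 1) y :: e, ⟨by omega, e1⟩, by simp [e2], by simp only [decode, e2, e3, c]⟩
  have : {x | x ∈ X n ∧ rows x = k} =
      decode x0 ins '' {e | (Code e ∧ e.length = n) ∧ codeAsc e = k} := by
    ext x
    constructor
    · rintro ⟨h1, h2⟩
      obtain ⟨e, e1, e2, e3⟩ := surj n x h1
      exact ⟨e, ⟨⟨e1, e2⟩, by rw [← (key e e1).2.2, e3, h2]⟩, e3⟩
    · rintro ⟨e, ⟨⟨e1, e2⟩, e3⟩, rfl⟩
      exact ⟨e2 ▸ (key e e1).1, by rw [(key e e1).2.2, e3]⟩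
  rw [this]
  apply Set.ncard_image_of_injOn
  rintro e ⟨⟨e1, e2⟩, e3⟩ e' ⟨⟨e1', e2'⟩, e3'⟩ h
  exact inj e e1 e' e1' (by omega) h

/-! ### Permutations -/

theorem asc_nil : numAscents [] = 0 := rfl
theorem asc_single (x : ℕ) : numAscents [x] = 0 := rfl
theorem asc_cons (x y : ℕ) (l : List ℕ) :
    numAscents (x :: y :: l) = numAscents (y :: l) + if x < y then 1 else 0 := by
  unfold numAscents
  have : (x :: y :: l).length - 1 = ((y :: l).length - 1) + 1 := by simp
  rw [this, List.range_succ_eq_map, List.filter_cons, List.filter_map]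
  split_ifs with h h' h' <;> simp_all [Function.comp_def]

theorem asc_map (g : ℕ → ℕ) (hg : StrictMono g) : ∀ l, numAscents (l.map g) = numAscents l
  | [] => rfl
  | [x] => rfl
  | x :: y :: l => by
    have := asc_map g hg (y :: l)
    simp only [List.map_cons] at this ⊢
    rw [asc_cons, asc_cons, this]
    simp [hg.lt_iff_lt]

def pins (n m : ℕ) (l : List ℕ) : List ℕ :=
  (n + 1 - m) :: l.map (fun x => if n + 1 - m ≤ x then x + 1 else x)

def pdel (_ : ℕ) (l : List ℕ) : List ℕ :=
  l.tail.map (fun x => if l.headD 0 < x then x - 1 else x)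

theorem pdel_cons (n f : ℕ) (l : List ℕ) :
    pdel n (f :: l) = l.map (fun x => if f < x then x - 1 else x) := rfl

theorem perm_iff (n : ℕ) (l : List ℕ) :
    l.Perm (List.range' 1 n) ↔ l.Nodup ∧ ∀ x, x ∈ l ↔ 1 ≤ x ∧ x ≤ n := by
  constructor
  · intro h
    refine ⟨h.nodup_iff.2 (List.nodup_range' ..), fun x => ?_⟩
    rw [h.mem_iff, List.mem_range'_1]; omega
  · rintro ⟨h1, h2⟩
    rw [List.perm_ext_iff_of_nodup h1 (List.nodup_range' ..)]
    intro x
    rw [h2, List.mem_range'_1]; omega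

theorem perm_count (n k : ℕ) :
    {l : List ℕ | l.Perm (List.range' 1 n) ∧ numAscents l = k}.ncard =
      {e | (Code e ∧ e.length = n) ∧ codeAsc e = k}.ncard := by
  refine code_count (fun n => {l | l.Perm (List.range' 1 n)}) (fun n l => n - l.headD 0)
    numAscents [] pins pdel ?_ rfl rfl ?_ ?_ n k
  · ext l; simp
  · intro n m l hm hl
    simp only [Set.mem_ofPred_eq, perm_iff] at hl ⊢
    obtain ⟨h1, h2⟩ := hl
    have hmono : StrictMono (fun x => if n + 1 - m ≤ x then x + 1 else x) := by
      intro a b hab; dsimp only; split_ifs <;> omega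
    refine ⟨⟨?_, ?_⟩, ?_, ?_, ?_⟩
    · rw [pins, List.nodup_cons]
      refine ⟨?_, h1.map hmono.injective⟩
      rw [List.mem_map]
      rintro ⟨x, hx, h⟩
      split_ifs at h <;> omega
    · intro x
      rw [pins, List.mem_cons, List.mem_map]
      constructor
      · rintro (rfl | ⟨y, hy, rfl⟩)
        · omega
        · have := (h2 y).1 hy
          split_ifs <;> omega
      · intro hx
        rcases lt_trichotomy x (n + 1 - m) with h | h | h
        · exact Or.inr ⟨x, (h2 x).2 (by omega), by rw [if_neg (by omega)]⟩
        · exact Or.inl h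
        · exact Or.inr ⟨x - 1, (h2 _).2 (by omega), by rw [if_pos (by omega)]; omega⟩
    · simp [pins]; omega
    · cases l with
      | nil =>
        have : n = 0 := by
          by_contra h
          have := (h2 1).2 (by omega)
          simp at this
        subst this
        have : m = 0 := by omega
        subst this
        rfl
      | cons y l =>
        have hy := (h2 y).1 (by simp)
        have := asc_map _ hmono (y :: l)
        rw [List.map_cons] at this
        rw [pins, List.map_cons, asc_cons, this]
        congr 1
        change (if n + 1 - m < (if n + 1 - m ≤ y then y + 1 else y) then 1 else 0) =
          if n - y < m then 1 else 0
        split_ifs <;> omega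
    · rw [pins, pdel_cons, List.map_map]
      conv_rhs => rw [← List.map_id l]
      apply List.map_congr_left
      intro x hx
      simp only [Function.comp, id]
      split_ifs <;> omega
  · intro n l hl
    simp only [Set.mem_ofPred_eq, perm_iff] at hl ⊢
    obtain ⟨h1, h2⟩ := hl
    cases l with
    | nil =>
      have := (h2 1).2 (by omega)
      simp at this
    | cons f l =>
      have hf := (h2 f).1 (by simp)
      rw [List.nodup_cons] at h1
      obtain ⟨hfl, h1⟩ := h1
      have hne : ∀ x ∈ l, x ≠ f := fun x hx h => hfl (h ▸ hx)
      have hm : ∀ x ∈ l, 1 ≤ x ∧ x ≤ n + 1 := fun x hx => (h2 x).1 (by simp [hx])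
      have hm' : ∀ x, 1 ≤ x → x ≤ n + 1 → x ≠ f → x ∈ l := by
        intro x a b c
        have := (h2 x).2 ⟨a, b⟩
        rw [List.mem_cons] at this
        tauto
      simp only [pdel_cons, List.headD_cons]
      refine ⟨by omega, ⟨?_, ?_⟩, ?_⟩
      · refine List.Nodup.map_on ?_ h1
        intro x hx y hy h
        have := hne x hx
        have := hne y hy
        split_ifs at h <;> omega
      · intro x
        rw [List.mem_map]
        constructor
        · rintro ⟨y, hy, rfl⟩
          have := hne y hy
          have := hm y hy
          split_ifs <;> omega
        · intro hx
          by_cases h : x < f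
          · exact ⟨x, hm' x (by omega) (by omega) (by omega), by rw [if_neg (by omega)]⟩
          · exact ⟨x + 1, hm' _ (by omega) (by omega) (by omega), by rw [if_pos (by omega)]; rfl⟩
      · rw [pins]
        congr 1
        · omega
        rw [List.map_map]
        conv_rhs => rw [← List.map_id l]
        apply List.map_congr_left
        intro x hx
        have := hne x hx
        simp only [Function.comp, id]
        split_ifs <;> omega

/-! ### Descending plane partitions -/

def Good : ℕ → List (List ℕ) → Prop
  | _, [] => True
  | n, r :: t => r.Pairwise (· ≥ ·) ∧ (∀ x ∈ r, r.length ≤ x ∧ x ≤ n) ∧ Good r.length t ∧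
      r.count r.length + (t.headD []).count r.length < r.length

theorem split_top (N : ℕ) : ∀ s : List ℕ, s.Pairwise (· ≥ ·) → (∀ x ∈ s, x ≤ N) →
    ∃ m s', s = List.replicate m N ++ s' ∧ (∀ x ∈ s', x < N) ∧ s'.Pairwise (· ≥ ·)
  | [], _, _ => ⟨0, [], by simp⟩
  | a :: s, h1, h2 => by
    by_cases ha : a = N
    · obtain ⟨m, s', e, f, g⟩ := split_top N s (List.pairwise_cons.1 h1).2
        (fun x hx => h2 x (by simp [hx]))
      exact ⟨m + 1, s', by rw [ha, e, List.replicate_succ, List.cons_append], f, g⟩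
    · refine ⟨0, a :: s, by simp, ?_, h1⟩
      have := h2 a (by simp)
      intro x hx
      rcases List.mem_cons.1 hx with rfl | hx
      · omega
      · have := (List.pairwise_cons.1 h1).1 x hx
        omega

theorem split_bot (N : ℕ) : ∀ s : List ℕ, s.Pairwise (· ≥ ·) → (∀ x ∈ s, N ≤ x) →
    ∃ q s', s = s' ++ List.replicate q N ∧ (∀ x ∈ s', N < x)
  | [], _, _ => ⟨0, [], by simp⟩
  | a :: s, h1, h2 => by
    by_cases ha : a = N
    · refine ⟨s.length + 1, [], ?_, by simp⟩
      rw [List.nil_append, List.eq_replicate_iff]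
      refine ⟨by simp, ?_⟩
      intro x hx
      rcases List.mem_cons.1 hx with rfl | hx'
      · exact ha
      · have := (List.pairwise_cons.1 h1).1 x hx'
        have := h2 x hx
        omega
    · obtain ⟨q, s', e, f⟩ := split_bot N s (List.pairwise_cons.1 h1).2
        (fun x hx => h2 x (by simp [hx]))
      refine ⟨q, a :: s', by rw [e, List.cons_append], ?_⟩
      have := h2 a (by simp)
      intro x hx
      rcases List.mem_cons.1 hx with rfl | hx
      · omega
      · exact f x hx

theorem count_zero_of (N : ℕ) (s : List ℕ) (h : ∀ x ∈ s, x ≠ N) : s.count N = 0 :=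
  List.count_eq_zero.2 (fun hx => h N hx rfl)

/-- The column condition in terms of counts. -/
theorem col_iff (r s : List ℕ) (hr : r.Pairwise (· ≥ ·)) (hs : s.Pairwise (· ≥ ·))
    (hr2 : ∀ x ∈ r, r.length ≤ x) (hs2 : ∀ x ∈ s, x ≤ r.length) (hl : s.length < r.length)
    (h0 : r.length < r.getD 0 0) :
    (∀ p < s.length, s.getD p 0 < r.getD (p + 1) 0) ↔
      r.count r.length + s.count r.length < r.length := by
  obtain ⟨m, s', es, hs'⟩ := split_top _ s hs hs2
  obtain ⟨q, r', er, hr'⟩ := split_bot _ r hr hr2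
  generalize hN : r.length = N at *
  have cs : s.count N = m := by
    rw [es, List.count_append, count_zero_of N s' (fun x hx => (hs'.1 x hx).ne)]; simp
  have cr : r.count N = q := by
    rw [er, List.count_append, count_zero_of N r' (fun x hx => (hr' x hx).ne')]; simp
  have hlr : r'.length + q = N := by rw [← hN, er]; simp
  have hls : m + s'.length = s.length := by rw [es]; simp
  have gr1 : ∀ p < r'.length, N < r.getD p 0 := by
    intro p hp
    rw [er, List.getD_append _ _ _ _ hp, List.getD_eq_getElem _ _ hp]
    exact hr' _ (List.getElem_mem _)
  have gr2 : ∀ p, r'.length ≤ p → p < N → r.getD p 0 = N := by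
    intro p hp hp'
    rw [er, List.getD_append_right _ _ _ _ hp, List.getD_eq_getElem _ _ (by simp; omega)]
    simp
  have gs1 : ∀ p < m, s.getD p 0 = N := by
    intro p hp
    rw [es, List.getD_append _ _ _ _ (by simpa using hp), List.getD_eq_getElem _ _ (by simpa using hp)]
    simp
  have gs2 : ∀ p, m ≤ p → p < s.length → s.getD p 0 < N := by
    intro p hp hp'
    rw [es, List.getD_append_right _ _ _ _ (by simpa using hp),
      List.getD_eq_getElem _ _ (by simp; omega)]
    exact hs'.1 _ (List.getElem_mem _)
  have gr0 : ∀ p < N, N ≤ r.getD p 0 := by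
    intro p hp
    by_cases h : p < r'.length
    · exact (gr1 p h).le
    · exact (gr2 p (by omega) hp).ge
  rw [cs, cr]
  constructor
  · intro h
    by_contra hc
    rcases Nat.eq_zero_or_pos m with hm | hm
    · have := gr2 0 (by omega) (by omega)
      omega
    · have h1 := h (m - 1) (by omega)
      rw [gs1 _ (by omega), gr2 _ (by omega) (by omega)] at h1
      omega
  · intro h p hp
    by_cases hpm : p < m
    · rw [gs1 p hpm]; exact gr1 _ (by omega)
    · exact lt_of_lt_of_le (gs2 p (by omega) hp) (gr0 _ (by omega))

theorem first_iff (r : List ℕ) (hr : r.Pairwise (· ≥ ·)) (hr2 : ∀ x ∈ r, r.length ≤ x)  :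
    (r ≠ [] ∧ r.length < r.getD 0 0) ↔ r.count r.length < r.length := by
  constructor
  · rintro ⟨h, h'⟩
    refine lt_of_le_of_ne List.count_le_length ?_
    intro he
    rw [List.count_eq_length] at he
    cases r with
    | nil => exact h rfl
    | cons a r =>
      have := he a (by simp)
      simp only [List.getD_cons_zero] at h'
      omega
  · intro h
    cases r with
    | nil => simp at h
    | cons a r =>
      refine ⟨by simp, ?_⟩
      simp only [List.getD_cons_zero]
      refine lt_of_le_of_ne (hr2 a (by simp)) ?_
      intro he
      refine h.ne (List.count_eq_length.2 ?_)
      intro x hx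
      have := hr2 x hx
      rcases List.mem_cons.1 hx with rfl | hx
      · exact he
      · have := (List.pairwise_cons.1 hr).1 x hx
        omega

/-- Conditions on one row. -/
def RowOk (n : ℕ) (r : List ℕ) : Prop :=
  r ≠ [] ∧ r.Pairwise (· ≥ ·) ∧ (∀ x ∈ r, r.length ≤ x ∧ x ≤ n) ∧ r.length < r.getD 0 0

theorem rowOk_iff (n : ℕ) (r : List ℕ) :
    RowOk n r ↔ r ≠ [] ∧ (∀ x ∈ r, 0 < x) ∧ r.Chain' (· ≥ ·) ∧ r.length < r.getD 0 0 ∧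
      (∀ x ∈ r, x ≤ n) ∧ (∀ p < r.length, p < r.getD p 0) := by
  have hch : r.Chain' (· ≥ ·) ↔ r.Pairwise (· ≥ ·) := List.isChain_iff_pairwise
  rw [hch]
  constructor
  · rintro ⟨a, b, c, d⟩
    have hl := List.length_pos_iff.2 a
    refine ⟨a, fun x hx => ?_, b, d, fun x hx => (c x hx).2, fun p hp => ?_⟩
    · have := c x hx; omega
    · rw [List.getD_eq_getElem _ _ hp]
      have := c _ (List.getElem_mem hp)
      omega
  · rintro ⟨a, b, c, d, e, f⟩
    refine ⟨a, c, fun x hx => ⟨?_, e x hx⟩, d⟩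
    have hl := List.length_pos_iff.2 a
    have h1 := f (r.length - 1) (by omega)
    rw [List.getD_eq_getElem _ _ (by omega)] at h1
    obtain ⟨i, hi, rfl⟩ := List.getElem_of_mem hx
    rcases Nat.lt_or_ge i (r.length - 1) with h | h
    · have := List.pairwise_iff_getElem.1 c i (r.length - 1) hi (by omega) h
      omega
    · have : i = r.length - 1 := by omega
      subst this
      omega

/-- Condition on consecutive rows. -/
def Junct (r s : List ℕ) : Prop :=
  s.length < r.length ∧ (∀ p < s.length, s.getD p 0 < r.getD (p + 1) 0) ∧ s.getD 0 0 ≤ r.length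

def Full (n : ℕ) (a : List (List ℕ)) : Prop := IsDPP a ∧ DPPOrder a n ∧ NoSpecialPart a

theorem full_iff (n : ℕ) (a : List (List ℕ)) :
    Full n a ↔ (∀ r ∈ a, RowOk n r) ∧
      ∀ i, i + 1 < a.length → Junct (a.getD i []) (a.getD (i + 1) []) := by
  simp only [rowOk_iff, Full, IsDPP, DPPOrder, NoSpecialPart, Junct]
  constructor
  · rintro ⟨⟨a1, a2, a3, a4, a5, a6, a7⟩, b, c⟩
    refine ⟨fun r hr => ⟨a1 r hr, a2 r hr, a4 r hr, a6 r hr, b r hr, c r hr⟩, fun i hi =>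
      ⟨?_, fun p hp => a5 i p hi hp, a7 i hi⟩⟩
    have := a3 i hi
    omega
  · rintro ⟨h1, h2⟩
    refine ⟨⟨fun r hr => (h1 r hr).1, fun r hr => (h1 r hr).2.1, fun i hi => ?_,
      fun r hr => (h1 r hr).2.2.1, fun i p hi hp => (h2 i hi).2.1 p hp,
      fun r hr => (h1 r hr).2.2.2.1, fun i hi => (h2 i hi).2.2⟩,
      fun r hr => (h1 r hr).2.2.2.2.1, fun r hr => (h1 r hr).2.2.2.2.2⟩
    have := (h2 i hi).1
    omega

theorem full_nil (n : ℕ) : Full n [] := by rw [full_iff]; simp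

theorem rowOk_mono {n m : ℕ} (r : List ℕ) (h : RowOk n r) (hm : r.getD 0 0 ≤ m) : RowOk m r := by
  obtain ⟨a, b, c, d⟩ := h
  refine ⟨a, b, fun x hx => ⟨(c x hx).1, ?_⟩, d⟩
  cases r with
  | nil => simp at hx
  | cons y r =>
    simp only [List.getD_cons_zero] at hm
    rcases List.mem_cons.1 hx with rfl | hx
    · exact hm
    · have := (List.pairwise_cons.1 b).1 x hx
      omega

theorem rowOk_mono' {n m : ℕ} (r : List ℕ) (h : RowOk n r) (hm : n ≤ m) : RowOk m r :=
  ⟨h.1, h.2.1, fun x hx => ⟨(h.2.2.1 x hx).1, (h.2.2.1 x hx).2.trans hm⟩, h.2.2.2⟩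

theorem full_mono {n m : ℕ} (a : List (List ℕ)) (h : Full n a) (hm : n ≤ m) : Full m a := by
  rw [full_iff] at h ⊢
  exact ⟨fun r hr => rowOk_mono' r (h.1 r hr) hm, h.2⟩

theorem rowOk_bound {n : ℕ} (r : List ℕ) (h : RowOk n r) : r.getD 0 0 ≤ n ∧ r.length < n := by
  obtain ⟨a, b, c, d⟩ := h
  cases r with
  | nil => exact absurd rfl a
  | cons y r =>
    have := c y (by simp)
    simp only [List.getD_cons_zero] at d ⊢
    omega

theorem full_single (n : ℕ) (r : List ℕ) : Full n [r] ↔ RowOk n r := by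
  rw [full_iff]; simp

theorem full_cons_aux (n : ℕ) (r s : List ℕ) (t : List (List ℕ)) :
    Full n (r :: s :: t) ↔ RowOk n r ∧ Junct r s ∧ Full n (s :: t) := by
  rw [full_iff, full_iff]
  constructor
  · rintro ⟨h1, h2⟩
    refine ⟨h1 r (by simp), by simpa using h2 0 (by simp), fun x hx => h1 x (by simp_all), ?_⟩
    intro i hi
    simpa using h2 (i + 1) (by simpa using hi)
  · rintro ⟨h1, h2, h3, h4⟩
    refine ⟨fun x hx => ?_, ?_⟩
    · rcases List.mem_cons.1 hx with rfl | hx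
      · exact h1
      · exact h3 x hx
    · intro i hi
      cases i with
      | zero => simpa using h2
      | succ i => simpa using h4 i (by simpa using hi)

theorem full_shrink (n m : ℕ) : ∀ (s : List ℕ) (t : List (List ℕ)), Full n (s :: t) →
    s.getD 0 0 ≤ m → Full m (s :: t)
  | s, [], h, hm => by rw [full_single] at h ⊢; exact rowOk_mono s h hm
  | s, s' :: t, h, hm => by
    rw [full_cons_aux] at h ⊢
    obtain ⟨a, b, c⟩ := h
    have hs := rowOk_mono s a hm
    have := (rowOk_bound s hs).2
    exact ⟨hs, b, full_shrink n m s' t c (b.2.2.trans this.le)⟩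

theorem full_good : ∀ (a : List (List ℕ)) (n : ℕ), Full n a ↔ Good n a
  | [], n => by simp [full_nil, Good]
  | [r], n => by
    rw [full_single]
    simp only [Good, List.headD_nil, List.count_nil, add_zero, true_and]
    constructor
    · rintro ⟨a, b, c, d⟩
      exact ⟨b, c, (first_iff r b (fun x hx => (c x hx).1)).1 ⟨a, d⟩⟩
    · rintro ⟨b, c, d⟩
      have := (first_iff r b (fun x hx => (c x hx).1)).2 d
      exact ⟨this.1, b, c, this.2⟩
  | r :: s :: t, n => by
    rw [full_cons_aux, Good, ← full_good (s :: t) r.length, List.headD_cons]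
    constructor
    · rintro ⟨⟨a, b, c, d⟩, ⟨e, f, g⟩, h⟩
      have h' := full_shrink n r.length s t h g
      have hs := ((full_iff _ _).1 h').1 s (by simp)
      exact ⟨b, c, h', (col_iff r s b hs.2.1 (fun x hx => (c x hx).1)
        (fun x hx => (hs.2.2.1 x hx).2) e d).1 f⟩
    · rintro ⟨b, c, h', h⟩
      have hs := ((full_iff _ _).1 h').1 s (by simp)
      obtain ⟨a, d⟩ := (first_iff r b (fun x hx => (c x hx).1)).2 (by omega)
      have hb := rowOk_bound s hs
      have hr := rowOk_bound r ⟨a, b, c, d⟩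
      exact ⟨⟨a, b, c, d⟩, ⟨hb.2, (col_iff r s b hs.2.1 (fun x hx => (c x hx).1)
        (fun x hx => (hs.2.2.1 x hx).2) hb.2 d).2 h, hb.1⟩, full_mono _ h' hr.2.le⟩

def dins (n m : ℕ) (a : List (List ℕ)) : List (List ℕ) :=
  if (a.headD []).count n < m then
    (List.replicate m (n + 1) ++ List.replicate (n - m) n) :: a
  else match a with
    | [] => []
    | r :: t => (List.replicate m (n + 1) ++ r.drop m) :: t

theorem dins_pos (n m : ℕ) (a : List (List ℕ)) (h : (a.headD []).count n < m) :
    dins n m a = (List.replicate m (n + 1) ++ List.replicate (n - m) n) :: a := by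
  unfold dins; rw [if_pos h]

theorem dins_neg (n m : ℕ) (r : List ℕ) (t : List (List ℕ)) (h : ¬ r.count n < m) :
    dins n m (r :: t) = (List.replicate m (n + 1) ++ r.drop m) :: t := by
  unfold dins; rw [if_neg (by simpa using h)]

def ddel (n : ℕ) : List (List ℕ) → List (List ℕ)
  | [] => []
  | r :: t => if r.length = n then t else r.map (min n) :: t

theorem good_len {n : ℕ} {r : List ℕ} {t : List (List ℕ)} (h : Good n (r :: t)) :
    r.length < n := by
  obtain ⟨a, b, -, d⟩ := h
  have := (first_iff r a (fun x hx => (b x hx).1)).2 (by omega)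
  exact (rowOk_bound r ⟨this.1, a, b, this.2⟩).2

theorem pw_append (m N : ℕ) (s : List ℕ) (h : s.Pairwise (· ≥ ·)) (hs : ∀ x ∈ s, x ≤ N) :
    (List.replicate m N ++ s).Pairwise (· ≥ ·) := by
  rw [List.pairwise_append]
  refine ⟨?_, h, ?_⟩
  · rw [List.pairwise_replicate]; right; exact le_refl _
  · intro a ha b hb
    rw [List.eq_of_mem_replicate ha]
    exact hs b hb

theorem dpp_count (n k : ℕ) :
    {a : List (List ℕ) | Good n a ∧ a.length = k}.ncard =
      {e | (Code e ∧ e.length = n) ∧ codeAsc e = k}.ncard := by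
  refine code_count (fun n => {a | Good n a}) (fun n a => (a.headD []).count n)
    List.length [] dins ddel ?_ rfl rfl ?_ ?_ n k
  · ext a
    simp only [Set.mem_ofPred_eq, Set.mem_singleton_iff]
    cases a with
    | nil => simp [Good]
    | cons r t =>
      simp only [reduceCtorEq, iff_false]
      intro h
      have := good_len h
      omega
  · intro n m a hm ha
    simp only [Set.mem_ofPred_eq] at ha ⊢
    by_cases hc : (a.headD []).count n < m
    · have hd : dins n m a = (List.replicate m (n + 1) ++ List.replicate (n - m) n) :: a := by
        exact dins_pos n m a hc
      have hlen : (List.replicate m (n + 1) ++ List.replicate (n - m) n).length = n := by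
        simp; omega
      rw [hd]
      refine ⟨⟨?_, ?_, ?_, ?_⟩, ?_, ?_, ?_⟩
      · apply pw_append
        · rw [List.pairwise_replicate]; right; exact le_refl _
        · intro x hx; rw [List.eq_of_mem_replicate hx]; omega
      · rw [hlen]
        intro x hx
        rcases List.mem_append.1 hx with h | h <;> rw [List.eq_of_mem_replicate h] <;> omega
      · rw [hlen]; exact ha
      · rw [hlen, List.count_append, count_zero_of n (List.replicate m (n + 1))
          (fun x hx => by rw [List.eq_of_mem_replicate hx]; omega), List.count_replicate_self]
        omega
      · simp [List.count_replicate]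
      · rw [if_pos hc]; rfl
      · rw [ddel, if_pos hlen]
    · rw [if_neg hc]
      cases a with
      | nil =>
        have : m = 0 := by simpa using hc
        subst this
        simp [dins, ddel, Good]
      | cons r t =>
        have hlt := good_len ha
        obtain ⟨h1, h2, h3, h4⟩ := ha
        have hd : dins n m (r :: t) = (List.replicate m (n + 1) ++ r.drop m) :: t := by
          exact dins_neg n m r t hc
        obtain ⟨m', r', er, hr', hp'⟩ := split_top n r h1 (fun x hx => (h2 x hx).2)
        have cr : r.count n = m' := by
          rw [er, List.count_append, count_zero_of n r' (fun x hx => (hr' x hx).ne)]; simp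
        simp only [List.headD_cons, cr] at hc
        have hdrop : r.drop m = List.replicate (m' - m) n ++ r' := by
          rw [er, List.drop_append_of_le_length (by simp; omega), List.drop_replicate]
        have hsp : r = List.replicate m n ++ r.drop m := by
          rw [hdrop, ← List.append_assoc, List.replicate_append_replicate, er]
          congr 2; omega
        have hle : m ≤ r.length := by rw [er]; simp; omega
        have hlen : (List.replicate m (n + 1) ++ r.drop m).length = r.length := by
          simp; omega
        have hmem : ∀ x ∈ r.drop m, x ∈ r := fun x hx => List.mem_of_mem_drop hx
        rw [hd]
        refine ⟨⟨?_, ?_, ?_, ?_⟩, ?_, ?_, ?_⟩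
        · apply pw_append _ _ _ (h1.sublist (List.drop_sublist _ _))
          intro x hx
          have := h2 x (hmem x hx)
          omega
        · rw [hlen]
          intro x hx
          rcases List.mem_append.1 hx with h | h
          · rw [List.eq_of_mem_replicate h]; omega
          · have := h2 x (hmem x h); omega
        · rw [hlen]; exact h3
        · rw [hlen, List.count_append, count_zero_of _ (List.replicate m (n + 1))
            (fun x hx => by rw [List.eq_of_mem_replicate hx]; omega)]
          have : (r.drop m).count r.length ≤ r.count r.length :=
            (List.drop_sublist _ _).count_le _
          omega
        · rw [List.headD_cons, List.count_append, count_zero_of _ (r.drop m)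
            (fun x hx => by have := h2 x (hmem x hx); omega)]
          simp
        · simp
        · rw [ddel, if_neg (by omega)]
          congr 1
          conv_rhs => rw [hsp]
          rw [List.map_append]
          congr 1
          · simp
          · conv_rhs => rw [← List.map_id (r.drop m)]
            apply List.map_congr_left
            intro x hx
            have := h2 x (hmem x hx)
            simp; omega
  · intro n a ha
    simp only [Set.mem_ofPred_eq] at ha ⊢
    cases a with
    | nil => simp [ddel, dins, Good]
    | cons r t =>
      have hlt := good_len ha
      obtain ⟨h1, h2, h3, h4⟩ := ha
      obtain ⟨m, r', er, hr', hp'⟩ := split_top (n + 1) r h1 (fun x hx => (h2 x hx).2)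
      have cr : r.count (n + 1) = m := by
        rw [er, List.count_append, count_zero_of _ r' (fun x hx => (hr' x hx).ne)]; simp
      have hle : m + r'.length = r.length := by rw [er]; simp
      have hmem : ∀ x ∈ r', x ∈ r := fun x hx => by rw [er]; simp [hx]
      rw [List.headD_cons, cr]
      by_cases hn : r.length = n
      · rw [ddel, if_pos hn]
        refine ⟨by omega, hn ▸ h3, ?_⟩
        have hr'' : r' = List.replicate (n - m) n := by
          rw [List.eq_replicate_iff]
          refine ⟨by omega, fun x hx => ?_⟩
          have := h2 x (hmem x hx)
          have := hr' x hx
          omega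
        have cn : r.count n = n - m := by
          rw [er, hr'', List.count_append]; simp [List.count_replicate]
        rw [hn, cn] at h4
        rw [dins_pos _ _ _ (by omega), er, hr'']
      · rw [ddel, if_neg hn]
        have hmap : r.map (min n) = List.replicate m n ++ r' := by
          rw [er, List.map_append]
          congr 1
          · simp
          · conv_rhs => rw [← List.map_id r']
            apply List.map_congr_left
            intro x hx
            have := hr' x hx
            simp; omega
        have hlen : (List.replicate m n ++ r').length = r.length := by simp [hle]
        rw [hmap]
        refine ⟨by omega, ⟨?_, ?_, ?_, ?_⟩, ?_⟩
        · apply pw_append _ _ _ hp'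
          intro x hx; have := hr' x hx; omega
        · rw [hlen]
          intro x hx
          rcases List.mem_append.1 hx with h | h
          · rw [List.eq_of_mem_replicate h]; omega
          · have := h2 x (hmem x h); have := hr' x h; omega
        · rw [hlen]; exact h3
        · rw [hlen, List.count_append, count_zero_of _ (List.replicate m n)
            (fun x hx => by rw [List.eq_of_mem_replicate hx]; omega)]
          have : r'.count r.length ≤ r.count r.length := by
            have hsub : r'.Sublist r := by
              conv_rhs => rw [er]
              exact List.sublist_append_right _ _
            exact hsub.count_le _
          omega
        · rw [dins_neg _ _ _ _ (by simp), List.drop_left' (by simp), ← er]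

end DPPPerm

/-- The number of descending plane partitions of order `n` with exactly `k` rows and no
special part equals the number of permutations of `{1,…,n}` (as words) with exactly `k`
ascents. -/
theorem dpp_noSpecial_card_eq_perm_ascents (n k : ℕ) (hn : 1 ≤ n) (hk : k ≤ n - 1) :
    {a : List (List ℕ) | IsDPP a ∧ DPPOrder a n ∧ a.length = k ∧ NoSpecialPart a}.ncard =
      {l : List ℕ | l.Perm (List.range' 1 n) ∧ numAscents l = k}.ncard := by
  rw [DPPPerm.perm_count, ← DPPPerm.dpp_count]
  congr 1
  ext a
  simp only [Set.mem_ofPred_eq, ← DPPPerm.full_good, DPPPerm.Full]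
  tauto
end

section
/- For every n ≥ 1 and every k with 0 ≤ k ≤ n−1, the number of descending plane partitions of order n with exactly k rows and no special part equals the Eulerian number E(n,k). -/
/-- The Eulerian numbers, defined by the recurrence
`E(n,k) = (k+1)E(n-1,k) + (n-k)E(n-1,k-1)` with `E(0,k) = δ_{k,0}`. -/
def Eulerian : ℕ → ℕ → ℕ
  | 0, 0 => 1
  | 0, _ + 1 => 0
  | n + 1, 0 => Eulerian n 0
  | n + 1, k + 1 => (k + 2) * Eulerian n (k + 1) + (n + 1 - (k + 1)) * Eulerian n k


/-- Number of new rows opened when greedily placing `w`, with current row length `l`. -/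
def rowsN : ℕ → List ℕ → ℕ
  | _, [] => 0
  | l, x :: w => if l < x then rowsN (l + 1) w else rowsN 1 w + 1

/-- Good words. -/
def goodW : ℕ → Finset (List ℕ)
  | 0 => {[]}
  | v + 1 => ((Finset.range (v + 1)) ×ˢ goodW v).image
      (fun p => List.replicate p.1 (v + 1) ++ p.2)

lemma goodW_le : ∀ (n : ℕ) (w : List ℕ), w ∈ goodW n → ∀ x ∈ w, x ≤ n
  | 0, w, h => by simp [goodW] at h; simp [h]
  | n + 1, w, h => by
    simp only [goodW, Finset.mem_image, Finset.mem_product, Prod.exists] at h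
    obtain ⟨c, w', ⟨_, hw⟩, rfl⟩ := h
    intro x hx
    rcases List.mem_append.1 hx with h | h
    · rw [List.eq_of_mem_replicate h]
    · have := goodW_le n w' hw x h
      omega

lemma goodW_not_mem (n : ℕ) (w : List ℕ) (h : w ∈ goodW n) : n + 1 ∉ w := fun hx => by
  have := goodW_le n w h _ hx
  omega

lemma goodW_inj (v : ℕ) : Set.InjOn (fun p : ℕ × List ℕ => List.replicate p.1 (v + 1) ++ p.2)
    (((Finset.range (v + 1)) ×ˢ goodW v : Finset (ℕ × List ℕ)) : Set (ℕ × List ℕ)) := by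
  rintro ⟨c, w⟩ h1 ⟨d, u⟩ h2 h
  simp only [Finset.coe_product, Set.mem_prod, Finset.mem_coe] at h1 h2
  have hw := goodW_not_mem v w h1.2
  have hu := goodW_not_mem v u h2.2
  have hc := congrArg (List.count (v + 1)) h
  simp [List.count_append, List.count_eq_zero_of_not_mem hw,
    List.count_eq_zero_of_not_mem hu] at hc
  subst hc
  simpa using h

lemma mem_goodW_of : ∀ (n : ℕ) (w : List ℕ), w.Pairwise (· ≥ ·) → (∀ x ∈ w, x ≤ n) →
    (∀ v ∈ w, w.count v < v) → w ∈ goodW n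
  | 0, w, _, h1, h2 => by
    cases w with
    | nil => simp [goodW]
    | cons x w =>
      have := h1 x (by simp)
      have := h2 x (by simp)
      omega
  | n + 1, w, hs, h1, h2 => by
    have key : ∀ w : List ℕ, w.Pairwise (· ≥ ·) → (∀ x ∈ w, x ≤ n + 1) →
        ∃ c w', w = List.replicate c (n + 1) ++ w' ∧ ∀ x ∈ w', x ≤ n := by
      intro w
      induction w with
      | nil => intro _ _; exact ⟨0, [], by simp⟩
      | cons y w ih =>
        intro hs hle
        rw [List.pairwise_cons] at hs
        rcases Nat.lt_or_ge n y with hy | hy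
        · obtain ⟨c, w', rfl, h⟩ := ih hs.2 (fun x hx => hle x (by simp [hx]))
          refine ⟨c + 1, w', ?_, h⟩
          have := hle y (by simp)
          have : y = n + 1 := by omega
          subst this
          simp [List.replicate_succ]
        · refine ⟨0, y :: w, by simp, ?_⟩
          intro x hx
          rcases List.mem_cons.1 hx with rfl | hx
          · exact hy
          · have := hs.1 x hx
            omega
    obtain ⟨c, w', rfl, hle⟩ := key w hs h1
    have hnot : n + 1 ∉ w' := fun hx => by have := hle _ hx; omega
    simp only [goodW, Finset.mem_image, Finset.mem_product, Prod.exists]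
    refine ⟨c, w', ⟨?_, ?_⟩, rfl⟩
    · rcases Nat.eq_zero_or_pos c with rfl | hc
      · simp
      · have := h2 (n + 1) (by simp; omega)
        simp [List.count_append, List.count_eq_zero_of_not_mem hnot] at this
        simpa using this
    · refine mem_goodW_of n w' (List.pairwise_append.1 hs).2.1 hle ?_
      intro v hv
      have := h2 v (by simp [hv])
      rw [List.count_append] at this
      omega

lemma goodW_sorted : ∀ (n : ℕ) (w : List ℕ), w ∈ goodW n →
    w.Pairwise (· ≥ ·) ∧ (∀ v ∈ w, w.count v < v)
  | 0, w, h => by simp [goodW] at h; simp [h]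
  | n + 1, w, h => by
    simp only [goodW, Finset.mem_image, Finset.mem_product, Prod.exists] at h
    obtain ⟨c, w', ⟨hc, hw⟩, rfl⟩ := h
    obtain ⟨h1, h2⟩ := goodW_sorted n w' hw
    have hle := goodW_le n w' hw
    have hnot := goodW_not_mem n w' hw
    refine ⟨?_, ?_⟩
    · rw [List.pairwise_append]
      refine ⟨?_, h1, ?_⟩
      · rw [List.pairwise_replicate]; right; exact le_refl _
      · intro a ha b hb
        rw [List.eq_of_mem_replicate ha]
        have := hle b hb
        show b ≤ n + 1
        omega
    · intro v hv
      rw [List.count_append]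
      by_cases hvn : v = n + 1
      · subst hvn
        rw [List.count_eq_zero_of_not_mem hnot]
        simpa using hc
      · have hv' : v ∈ w' := by
          rcases List.mem_append.1 hv with h | h
          · exact absurd (List.eq_of_mem_replicate h) hvn
          · exact h
        have : List.count v (List.replicate c (n + 1)) = 0 := by
          apply List.count_eq_zero_of_not_mem
          intro h
          exact hvn (List.eq_of_mem_replicate h)
        have := h2 v hv'
        omega

/-- refined count -/
def cntF (v s : ℕ) (k : ℤ) : ℤ := ∑ w ∈ goodW v, if (rowsN s w : ℤ) = k then 1 else 0

lemma rowsN_rep (v : ℕ) (w : List ℕ) : ∀ (c s : ℕ), 1 ≤ s → s ≤ v → c < v →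
    rowsN s (List.replicate c v ++ w) =
      if s + c ≤ v then rowsN (s + c) w else rowsN (s + c - v) w + 1
  | 0, s, h1, h2, h3 => by simp [h2]
  | c + 1, s, h1, h2, h3 => by
    simp only [List.replicate_succ, List.cons_append, rowsN]
    split_ifs with h4 h5 h5
    · rw [rowsN_rep v w c (s + 1) (by omega) (by omega) (by omega), if_pos (by omega)]
      congr 1; omega
    · rw [rowsN_rep v w c (s + 1) (by omega) (by omega) (by omega), if_neg (by omega)]
      congr 2; omega
    · omega
    · rw [rowsN_rep v w c 1 (by omega) (by omega) (by omega), if_pos (by omega)]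
      congr 2; omega

lemma rowsN_min (v s : ℕ) (w : List ℕ) (h : ∀ x ∈ w, x ≤ v) :
    rowsN (min s v) w = rowsN s w := by
  cases w with
  | nil => rfl
  | cons x w =>
    have := h x (by simp)
    simp only [rowsN]
    by_cases hs : s ≤ v
    · rw [min_eq_left hs]
    · rw [if_neg (by omega), if_neg (by omega)]

lemma cntF_succ (v s : ℕ) (k : ℤ) (h1 : 1 ≤ s) (h2 : s ≤ v + 1) :
    cntF (v + 1) s k = ∑ j ∈ Finset.range (v + 1),
      cntF v (min (j + 1) v) (k - if j + 1 < s then 1 else 0) := by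
  unfold cntF
  rw [goodW, Finset.sum_image (goodW_inj v), Finset.sum_product]
  refine Finset.sum_nbij'
    (fun c => if s + c ≤ v + 1 then s + c - 1 else s + c - (v + 1) - 1)
    (fun j => if s ≤ j + 1 then j + 1 - s else j + 1 + (v + 1) - s) ?_ ?_ ?_ ?_ ?_
  · intro c hc; simp only [Finset.mem_range] at *; split_ifs <;> omega
  · intro c hc; simp only [Finset.mem_range] at *; split_ifs <;> omega
  · intro c hc; simp only [Finset.mem_range] at *; split_ifs <;> omega
  · intro c hc; simp only [Finset.mem_range] at *; split_ifs <;> omega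
  · intro c hc
    rw [Finset.mem_range] at hc
    apply Finset.sum_congr rfl
    intro w hw
    rw [rowsN_rep _ _ _ _ h1 h2 hc, rowsN_min v _ w (goodW_le v w hw)]
    by_cases h : s + c ≤ v + 1
    · simp only [if_pos h]
      rw [if_neg (by omega : ¬ (s + c - 1 + 1 < s)), show s + c - 1 + 1 = s + c by omega]
      simp
    · simp only [if_neg h]
      rw [if_pos (by omega : (s + c - (v + 1) - 1 + 1 < s)),
        show s + c - (v + 1) - 1 + 1 = s + c - (v + 1) by omega]
      congr 1
      push_cast
      apply propext
      constructor <;> intro h <;> linarith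

lemma cntF_zero (s : ℕ) (k : ℤ) : cntF 0 s k = if k = 0 then 1 else 0 := by
  simp only [cntF, goodW, Finset.sum_singleton, rowsN, eq_comm (a := k)]; rfl

lemma cntF_rec : ∀ (v s : ℕ) (k : ℤ), s ≤ v → (1 ≤ v → 1 ≤ s) →
    cntF (v + 1) (s + 1) k = (k + 1) * cntF v s k + (v + 1 - k) * cntF v s (k - 1)
  | 0, s, k, h1, h2 => by
    obtain rfl : s = 0 := by omega
    rw [cntF_succ _ _ _ (by omega) (by omega)]
    simp [cntF_zero]
    split_ifs with h3 h4 h4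
    · omega
    · simp [h3]
    · have : k = 1 := by omega
      simp [this]
    · simp
  | v + 1, s, k, h1, h2 => by
    have hs := h2 (by omega)
    rw [cntF_succ _ _ _ (by omega) (by omega), Finset.sum_range_succ']
    have e1 : cntF (v + 1) (min (0 + 1) (v + 1)) (k - if 0 + 1 < s + 1 then 1 else 0)
        = ∑ j ∈ Finset.range (v + 1), cntF v (min (j + 1) v) (k - 1) := by
      rw [if_pos (by omega), show min (0 + 1) (v + 1) = 1 by omega,
        cntF_succ _ _ _ (by omega) (by omega)]
      simp
    rw [e1, cntF_succ v s k hs h1, cntF_succ v s (k - 1) hs h1, Finset.mul_sum, Finset.mul_sum,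
      ← Finset.sum_add_distrib, ← Finset.sum_add_distrib]
    apply Finset.sum_congr rfl
    intro j hj
    rw [Finset.mem_range] at hj
    rw [show min (j + 1 + 1) (v + 1) = min (j + 1) v + 1 by omega,
      cntF_rec v (min (j + 1) v) _ (by omega) (by omega)]
    push_cast
    by_cases h : j + 1 < s
    · rw [if_pos (by omega), if_pos h]; ring
    · rw [if_neg (by omega), if_neg h]; ring_nf

lemma eulerian_zero_of_lt : ∀ n k : ℕ, n < k → Eulerian n k = 0
  | 0, k + 1, _ => rfl
  | n + 1, k + 1, h => by
    rw [Eulerian, eulerian_zero_of_lt n (k + 1) (by omega), eulerian_zero_of_lt n k (by omega)]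
    simp

lemma cntF_neg (v s : ℕ) (k : ℤ) (h : k < 0) : cntF v s k = 0 := by
  unfold cntF
  apply Finset.sum_eq_zero
  intro w _
  rw [if_neg (by omega)]

lemma cntF_eulerian : ∀ n k : ℕ, cntF n n k = Eulerian n k
  | 0, 0 => by simp [cntF_zero, Eulerian]
  | 0, k + 1 => by rw [cntF_zero, if_neg (by omega)]; simp [Eulerian]
  | n + 1, 0 => by
    rw [cntF_rec n n _ le_rfl (by omega), cntF_neg _ _ (((0 : ℕ) : ℤ) - 1) (by simp), cntF_eulerian n 0, Eulerian]
    simp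
  | n + 1, k + 1 => by
    rw [cntF_rec n n _ le_rfl (by omega), cntF_eulerian n (k + 1), Eulerian]
    rw [show ((k + 1 : ℕ) : ℤ) - 1 = (k : ℕ) by push_cast; ring, cntF_eulerian n k]
    by_cases h : k ≤ n
    · push_cast [show k + 1 ≤ n + 1 by omega]
      rw [Nat.cast_sub (by omega)]
      push_cast
      ring
    · rw [eulerian_zero_of_lt n k (by omega)]
      push_cast
      ring

/-- nonempty row without special part -/
def RowN (r : List ℕ) : Prop := r ≠ [] ∧ ∀ p < r.length, p < r.getD p 0

/-- arrays in which each row is greedily maximal -/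
def WeakD (a : List (List ℕ)) : Prop :=
  (∀ r ∈ a, RowN r) ∧ a.IsChain (fun r r' => r'.getD 0 0 ≤ r.length)

/-- remaining conditions -/
def StrongD (a : List (List ℕ)) : Prop :=
  (∀ r ∈ a, r.Pairwise (· ≥ ·) ∧ r.length < r.getD 0 0) ∧
    a.IsChain (fun r r' => ∀ p < r'.length, r'.getD p 0 < r.getD (p + 1) 0)

lemma sorted_getD {l : List ℕ} (h : l.Pairwise (· ≥ ·)) {i j : ℕ} (hij : i ≤ j)
    (hj : j < l.length) : l.getD j 0 ≤ l.getD i 0 := by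
  rw [List.getD_eq_getElem _ _ hj, List.getD_eq_getElem _ _ (by omega)]
  rcases Nat.eq_or_lt_of_le hij with rfl | hlt
  · exact le_rfl
  · exact List.pairwise_iff_getElem.1 h i j (by omega) hj hlt

lemma mem_getD {l : List ℕ} {x : ℕ} (h : x ∈ l) : ∃ i < l.length, l.getD i 0 = x := by
  obtain ⟨i, hi, rfl⟩ := List.mem_iff_getElem.1 h
  exact ⟨i, hi, List.getD_eq_getElem _ _ hi⟩

lemma getD_mem {l : List ℕ} {i : ℕ} (h : i < l.length) : l.getD i 0 ∈ l := by
  rw [List.getD_eq_getElem _ _ h]; exact List.getElem_mem h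

lemma mem_le_head {l : List ℕ} (h : l.Pairwise (· ≥ ·)) {x : ℕ} (hx : x ∈ l) :
    x ≤ l.getD 0 0 := by
  obtain ⟨i, hi, rfl⟩ := mem_getD hx
  exact sorted_getD h (Nat.zero_le _) hi

lemma len_le_mem {l : List ℕ} (h : l.Pairwise (· ≥ ·)) (hr : RowN l) {x : ℕ} (hx : x ∈ l) :
    l.length ≤ x := by
  obtain ⟨i, hi, rfl⟩ := mem_getD hx
  have := sorted_getD h (show i ≤ l.length - 1 by omega) (by omega)
  have := hr.2 (l.length - 1) (by omega)
  omega

lemma mem_take_getD {l : List ℕ} {n x : ℕ} (h : x ∈ l.take n) :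
    ∃ i, i < n ∧ i < l.length ∧ l.getD i 0 = x := by
  obtain ⟨i, hi, rfl⟩ := List.mem_iff_getElem.1 h
  rw [List.length_take] at hi
  refine ⟨i, by omega, by omega, ?_⟩
  rw [List.getD_eq_getElem _ _ (by omega)]
  simp

lemma mem_drop_getD {l : List ℕ} {n x : ℕ} (h : x ∈ l.drop n) :
    ∃ i, n ≤ i ∧ i < l.length ∧ l.getD i 0 = x := by
  obtain ⟨i, hi, rfl⟩ := List.mem_iff_getElem.1 h
  rw [List.length_drop] at hi
  refine ⟨n + i, by omega, by omega, ?_⟩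
  rw [List.getD_eq_getElem _ _ (by omega)]
  simp

lemma count_split (l : List ℕ) (v n : ℕ) :
    l.count v = (l.take n).count v + (l.drop n).count v := by
  rw [← List.count_append, List.take_append_drop]

lemma count_le_of_lt {l : List ℕ} (h : l.Pairwise (· ≥ ·)) {i v : ℕ} (hv : l.getD i 0 < v) :
    l.count v ≤ i := by
  rw [count_split l v i]
  have h1 : (l.take i).count v ≤ i :=
    (List.count_le_length).trans (by simp)
  have h2 : (l.drop i).count v = 0 := by
    apply List.count_eq_zero_of_not_mem
    intro hm
    obtain ⟨j, h1, h2, h3⟩ := mem_drop_getD hm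
    have := sorted_getD h h1 h2
    omega
  omega

lemma count_le_of_gt {l : List ℕ} (h : l.Pairwise (· ≥ ·)) {i v : ℕ} (hi : i < l.length)
    (hv : v < l.getD i 0) : l.count v + (i + 1) ≤ l.length := by
  rw [count_split l v (i + 1)]
  have h1 : (l.drop (i + 1)).count v ≤ l.length - (i + 1) :=
    (List.count_le_length).trans (by simp)
  have h2 : (l.take (i + 1)).count v = 0 := by
    apply List.count_eq_zero_of_not_mem
    intro hm
    obtain ⟨j, h1, h2, h3⟩ := mem_take_getD hm
    have := sorted_getD h (show j ≤ i by omega) hi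
    omega
  omega

lemma le_count_prefix {l : List ℕ} (h : l.Pairwise (· ≥ ·)) {i v : ℕ} (hi : i < l.length)
    (hv : v ≤ l.getD i 0) (hall : ∀ x ∈ l, x ≤ v) : i + 1 ≤ l.count v := by
  rw [count_split l v (i + 1)]
  have h2 : (l.take (i + 1)).count v = (l.take (i + 1)).length := by
    rw [List.count_eq_length]
    intro x hx
    have := hall x (List.mem_of_mem_take hx)
    obtain ⟨j, h1, h2, h3⟩ := mem_take_getD hx
    have := sorted_getD h (show j ≤ i by omega) hi
    omega
  rw [List.length_take] at h2
  omega

lemma le_count_suffix {l : List ℕ} (h : l.Pairwise (· ≥ ·)) {i v : ℕ}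
    (hv : l.getD i 0 ≤ v) (hall : ∀ x ∈ l, v ≤ x) : l.length ≤ l.count v + i := by
  rw [count_split l v i]
  have h2 : (l.drop i).count v = (l.drop i).length := by
    rw [List.count_eq_length]
    intro x hx
    have := hall x (List.mem_of_mem_drop hx)
    obtain ⟨j, h1, h2, h3⟩ := mem_drop_getD hx
    have := sorted_getD h h1 h2
    omega
  rw [List.length_drop] at h2
  omega

lemma row_count {r : List ℕ} (h : RowN r) (hs : r.Pairwise (· ≥ ·)) (hl : r.length < r.getD 0 0)
    {v : ℕ} (hv : v ∈ r) : r.count v < v := by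
  have h1 := len_le_mem hs h hv
  have h2 : r.count v ≤ r.length := List.count_le_length
  by_cases h3 : v < r.getD 0 0
  · have := count_le_of_gt hs (List.length_pos_of_mem hv) h3
    omega
  · omega

lemma strong_fwd (a : List (List ℕ)) : ∀ r, WeakD (r :: a) → StrongD (r :: a) →
    (∀ x ∈ a.flatten, x ≤ r.length) ∧
    (r :: a).flatten.Pairwise (· ≥ ·) ∧
    ∀ v ∈ (r :: a).flatten, (r :: a).flatten.count v < v := by
  induction a with
  | nil =>
    intro r hw hs
    have h1 := hw.1 r (by simp)
    have h2 := hs.1 r (by simp)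
    simp only [List.flatten_nil, List.flatten_cons, List.append_nil]
    exact ⟨by simp, h2.1, fun v hv => row_count h1 h2.1 h2.2 hv⟩
  | cons r' t ih =>
    intro r hw hs
    have h1 := hw.1 r (by simp)
    have h2 := hs.1 r (by simp)
    have h1' := hw.1 r' (by simp)
    have h2' := hs.1 r' (by simp)
    obtain ⟨hw1, hw2⟩ := hw
    obtain ⟨hs1, hs2⟩ := hs
    rw [List.isChain_cons_cons] at hw2 hs2
    obtain ⟨i1, i2, i3⟩ := ih r' ⟨fun x hx => hw1 x (List.mem_cons_of_mem _ hx), hw2.2⟩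
      ⟨fun x hx => hs1 x (List.mem_cons_of_mem _ hx), hs2.2⟩
    have c1 : ∀ x ∈ (r' :: t).flatten, x ≤ r.length := by
      intro x hx
      rw [List.flatten_cons, List.mem_append] at hx
      rcases hx with hx | hx
      · exact (mem_le_head h2'.1 hx).trans hw2.1
      · have := i1 x hx
        omega
    refine ⟨c1, ?_, ?_⟩
    · rw [List.flatten_cons, List.pairwise_append]
      refine ⟨h2.1, i2, ?_⟩
      intro x hx y hy
      have := c1 y hy
      have := len_le_mem h2.1 h1 hx
      show y ≤ x
      omega
    · intro v hv
      rw [List.flatten_cons, List.count_append]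
      by_cases hva : v ∈ (r' :: t).flatten
      · by_cases hvr : v ∈ r
        · have e1 := c1 v hva
          have e2 := len_le_mem h2.1 h1 hvr
          have ht : v ∉ t.flatten := fun hm => by
            have := i1 v hm
            omega
          have hvr' : v ∈ r' := by
            rw [List.flatten_cons, List.mem_append] at hva
            tauto
          rw [List.flatten_cons, List.count_append, List.count_eq_zero_of_not_mem ht]
          have y1 : 0 < r'.count v := List.count_pos_iff.2 hvr'
          have y2 : r'.count v ≤ r'.length := List.count_le_length
          have y3 : v ≤ r'.getD (r'.count v - 1) 0 := by
            by_contra hc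
            have := count_le_of_lt h2'.1 (not_le.1 hc)
            omega
          have y4 := hs2.1 (r'.count v - 1) (by omega)
          rw [show r'.count v - 1 + 1 = r'.count v by omega] at y4
          have y5 := count_le_of_gt h2.1 (i := r'.count v) (v := v) (by omega) (by omega)
          omega
        · rw [List.count_eq_zero_of_not_mem hvr, zero_add]
          exact i3 v hva
      · rw [List.count_eq_zero_of_not_mem hva]
        have : v ∈ r := by
          rw [List.flatten_cons, List.mem_append] at hv
          tauto
        exact row_count h1 h2.1 h2.2 this

lemma row_len {r : List ℕ} (h : RowN r) (hs : r.Pairwise (· ≥ ·))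
    (hc : ∀ v ∈ r, r.count v < v) : r.length < r.getD 0 0 := by
  by_contra hl
  have hpos : 0 < r.length := List.length_pos_iff.2 h.1
  have hm := getD_mem hpos
  have := le_count_suffix (i := 0) hs le_rfl (fun x hx => by
    have := len_le_mem hs h hx
    omega)
  have := hc _ hm
  omega

lemma strong_bwd (a : List (List ℕ)) : WeakD a → a.flatten.Pairwise (· ≥ ·) →
    (∀ v ∈ a.flatten, a.flatten.count v < v) → StrongD a := by
  induction a with
  | nil => intro _ _ _; exact ⟨by simp, by simp⟩
  | cons r t ih =>
    intro hw hs hc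
    have h1 := hw.1 r (by simp)
    rw [List.flatten_cons, List.pairwise_append] at hs
    have hl : r.length < r.getD 0 0 := row_len h1 hs.1 (fun v hv => by
      have := hc v (by simp [hv])
      rw [List.flatten_cons, List.count_append] at this
      omega)
    have hwt : WeakD t := ⟨fun x hx => hw.1 x (List.mem_cons_of_mem _ hx), hw.2.tail⟩
    have it := ih hwt hs.2.1 (fun v hv => by
      have := hc v (by rw [List.flatten_cons]; exact List.mem_append_right _ hv)
      rw [List.flatten_cons, List.count_append] at this
      omega)
    refine ⟨?_, ?_⟩
    · intro x hx
      rcases List.mem_cons.1 hx with rfl | hx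
      · exact ⟨hs.1, hl⟩
      · exact it.1 x hx
    · cases t with
      | nil => simp
      | cons r' t =>
        rw [List.isChain_cons_cons]
        refine ⟨?_, it.2⟩
        intro p hp
        have hw2 := (List.isChain_cons_cons.1 hw.2).1
        obtain ⟨s', l'⟩ := it.1 r' (by simp)
        by_contra hcon
        have hr1 := len_le_mem hs.1 h1 (getD_mem (show p + 1 < r.length by omega))
        have hr2 := mem_le_head s' (getD_mem hp)
        have k1 := le_count_prefix (v := r.length) s' hp (by omega)
          (fun x hx => (mem_le_head s' hx).trans hw2)
        have k2 := le_count_suffix (v := r.length) hs.1 (i := p + 1) (by omega)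
          (fun x hx => len_le_mem hs.1 h1 hx)
        have hm : r.length ∈ r' := List.count_pos_iff.1 (by omega)
        have := hc r.length (by simp [hm])
        rw [List.flatten_cons, List.count_append, List.flatten_cons, List.count_append] at this
        omega

/-- greedy splitting -/
def spl : List ℕ → List ℕ → List (List ℕ)
  | cur, [] => [cur]
  | cur, x :: w => if cur.length < x then spl (cur ++ [x]) w else cur :: spl [x] w

lemma spl_flatten (w : List ℕ) : ∀ cur, (spl cur w).flatten = cur ++ w := by
  induction w with
  | nil => intro cur; simp [spl]
  | cons x w ih => intro cur; simp only [spl]; split_ifs <;> simp [ih]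

lemma spl_length (w : List ℕ) : ∀ cur, (spl cur w).length = rowsN cur.length w + 1 := by
  induction w with
  | nil => intro cur; simp [spl, rowsN]
  | cons x w ih => intro cur; simp only [spl, rowsN]; split_ifs <;> simp [ih]

lemma rowN_snoc {cur : List ℕ} {x : ℕ} (h : ∀ p < cur.length, p < cur.getD p 0)
    (hx : cur.length < x) : RowN (cur ++ [x]) := by
  refine ⟨by simp, ?_⟩
  intro p hp
  simp only [List.length_append, List.length_singleton] at hp
  by_cases hpc : p < cur.length
  · rw [List.getD_append _ _ _ _ hpc]; exact h p hpc
  · obtain rfl : p = cur.length := by omega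
    rw [List.getD_append_right _ _ _ _ le_rfl]
    simpa using hx

lemma spl_weak (w : List ℕ) : ∀ cur, RowN cur → (∀ x ∈ w, 0 < x) →
    WeakD (spl cur w) ∧ ∃ r t, spl cur w = r :: t ∧ r.getD 0 0 = cur.getD 0 0 := by
  induction w with
  | nil => intro cur h _; exact ⟨⟨by simpa [spl] using h, by simp [spl]⟩, cur, [], rfl, rfl⟩
  | cons x w ih =>
    intro cur h hpos
    have hpos' : ∀ y ∈ w, 0 < y := fun y hy => hpos y (by simp [hy])
    simp only [spl]
    split_ifs with hx
    · obtain ⟨i1, r, t, i2, i3⟩ := ih (cur ++ [x]) (rowN_snoc h.2 hx) hpos'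
      refine ⟨i1, r, t, i2, ?_⟩
      rw [i3, List.getD_append _ _ _ _ (List.length_pos_iff.2 h.1)]
    · obtain ⟨i1, r, t, i2, i3⟩ := ih [x]
        (rowN_snoc (cur := []) (by simp) (by simpa using hpos x (by simp))) hpos'
      refine ⟨⟨?_, ?_⟩, cur, _, rfl, rfl⟩
      · intro y hy
        rcases List.mem_cons.1 hy with rfl | hy
        · exact h
        · exact i1.1 y hy
      · rw [i2, List.isChain_cons_cons]
        refine ⟨?_, ?_⟩
        · rw [i3]; simpa using hx
        · have := i1.2
          rwa [i2] at this

/-- greedy rows of a word -/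
def greedy : List ℕ → List (List ℕ)
  | [] => []
  | x :: w => spl [x] w

lemma spl_row (rest : List ℕ) : ∀ cur w, RowN (cur ++ rest) →
    spl cur (rest ++ w) = spl (cur ++ rest) w := by
  induction rest with
  | nil => intro cur w _; simp
  | cons x rest ih =>
    intro cur w h
    have hx := h.2 cur.length (by simp)
    rw [List.getD_append_right _ _ _ _ le_rfl] at hx
    simp only [Nat.sub_self, List.getD_cons_zero] at hx
    rw [List.cons_append, spl, if_pos hx, ih (cur ++ [x]) w (by simpa using h)]
    simp

lemma spl_eq (a : List (List ℕ)) : ∀ r, WeakD (r :: a) → spl r a.flatten = r :: a := by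
  induction a with
  | nil => intro r _; simp [spl]
  | cons r' t ih =>
    intro r hw
    have hr' := hw.1 r' (by simp)
    have hch := List.isChain_cons_cons.1 hw.2
    have hi := ih r' ⟨fun x hx => hw.1 x (List.mem_cons_of_mem _ hx), hch.2⟩
    cases r' with
    | nil => exact absurd rfl hr'.1
    | cons x r' =>
      have h1 := hch.1
      simp only [List.getD_cons_zero] at h1
      rw [List.flatten_cons, List.cons_append, spl, if_neg (by omega),
        spl_row r' [x] _ (by simpa using hr')]
      rw [List.singleton_append, hi]

lemma greedy_eq (a : List (List ℕ)) (h : WeakD a) : greedy a.flatten = a := by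
  cases a with
  | nil => rfl
  | cons r t =>
    have hr := h.1 r (by simp)
    cases r with
    | nil => exact absurd rfl hr.1
    | cons x r =>
      rw [List.flatten_cons, List.cons_append, greedy, spl_row r [x] _ (by simpa using hr)]
      exact spl_eq t (x :: r) h

lemma greedy_flatten (w : List ℕ) : (greedy w).flatten = w := by
  cases w with
  | nil => rfl
  | cons x w => rw [greedy, spl_flatten]; rfl

lemma greedy_weak (w : List ℕ) (h : ∀ x ∈ w, 0 < x) : WeakD (greedy w) := by
  cases w with
  | nil => exact ⟨by simp [greedy], by simp [greedy]⟩
  | cons x w =>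
    exact (spl_weak w [x] (rowN_snoc (cur := []) (by simp) (by simpa using h x (by simp)))
      (fun y hy => h y (by simp [hy]))).1

lemma greedy_length (n : ℕ) (w : List ℕ) (h : ∀ x ∈ w, x ≤ n) :
    (greedy w).length = rowsN n w := by
  cases w with
  | nil => rfl
  | cons x w =>
    have := h x (by simp)
    rw [greedy, spl_length, rowsN, if_neg (by omega)]
    rfl

lemma isChain_getD {R : List ℕ → List ℕ → Prop} {a : List (List ℕ)} :
    a.IsChain R ↔ ∀ i, i + 1 < a.length → R (a.getD i []) (a.getD (i + 1) []) := by
  rw [List.isChain_iff_getElem]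
  constructor
  · intro h i hi
    have := h i hi
    rwa [List.getD_eq_getElem _ _ hi, List.getD_eq_getElem _ _ (by omega)]
  · intro h i hi
    have := h i hi
    rwa [List.getD_eq_getElem _ _ hi, List.getD_eq_getElem _ _ (by omega)] at this

lemma dpp_iff (a : List (List ℕ)) : (IsDPP a ∧ NoSpecialPart a) ↔ (WeakD a ∧ StrongD a) := by
  constructor
  · rintro ⟨⟨d1, d2, d3, d4, d5, d6, d7⟩, hn⟩
    refine ⟨⟨fun r hr => ⟨d1 r hr, hn r hr⟩, isChain_getD.2 d7⟩,
      fun r hr => ⟨List.isChain_iff_pairwise.1 (d4 r hr), d6 r hr⟩, isChain_getD.2 ?_⟩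
    intro i hi p hp
    exact d5 i p hi hp
  · rintro ⟨⟨w1, w2⟩, s1, s2⟩
    rw [isChain_getD] at w2 s2
    refine ⟨⟨fun r hr => (w1 r hr).1, ?_, ?_, ?_, ?_, fun r hr => (s1 r hr).2, w2⟩,
      fun r hr => (w1 r hr).2⟩
    · intro r hr x hx
      obtain ⟨i, hi, rfl⟩ := mem_getD hx
      have := (w1 r hr).2 i hi
      omega
    · intro i hi
      have h1 := w2 i hi
      have hm : a.getD (i + 1) [] ∈ a := by
        rw [List.getD_eq_getElem _ _ hi]; exact List.getElem_mem hi
      have h2 := (s1 _ hm).2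
      omega
    · intro r hr
      exact List.isChain_iff_pairwise.2 (s1 r hr).1
    · intro i p hi hp
      exact s2 i hi p hp

lemma dpp_image (n k : ℕ) :
    {a : List (List ℕ) | IsDPP a ∧ DPPOrder a n ∧ a.length = k ∧ NoSpecialPart a} =
      greedy '' (((goodW n).filter (fun w => rowsN n w = k) : Finset (List ℕ)) :
        Set (List ℕ)) := by
  ext a
  simp only [Set.mem_setOf_eq, Set.mem_image, Finset.coe_filter]
  constructor
  · rintro ⟨h1, h2, h3, h4⟩
    obtain ⟨hw, hs⟩ := (dpp_iff a).1 ⟨h1, h4⟩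
    have hle : ∀ x ∈ a.flatten, x ≤ n := by
      intro x hx
      obtain ⟨r, hr, hxr⟩ := List.mem_flatten.1 hx
      exact h2 r hr x hxr
    refine ⟨a.flatten, ⟨?_, ?_⟩, greedy_eq a hw⟩
    · have : a.flatten.Pairwise (· ≥ ·) ∧ ∀ v ∈ a.flatten, a.flatten.count v < v := by
        cases a with
        | nil => simp
        | cons r t => exact (strong_fwd t r hw hs).2
      exact mem_goodW_of n _ this.1 hle this.2
    · rw [← greedy_length n _ hle, greedy_eq a hw, h3]
  · rintro ⟨w, ⟨h1, h2⟩, rfl⟩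
    have hle := goodW_le n w h1
    obtain ⟨hs, hc⟩ := goodW_sorted n w h1
    have hw := greedy_weak w (fun x hx => by have := hc x hx; omega)
    have hst := strong_bwd _ hw (by rwa [greedy_flatten]) (by rwa [greedy_flatten])
    obtain ⟨e1, e2⟩ := (dpp_iff _).2 ⟨hw, hst⟩
    refine ⟨e1, ?_, by rw [greedy_length n w hle, h2], e2⟩
    intro r hr x hx
    apply hle
    rw [← greedy_flatten w]
    exact List.mem_flatten.2 ⟨r, hr, hx⟩

/-- The number of descending plane partitions of order `n` with exactly `k` rows and no
special part is the Eulerian number `E(n,k)`. -/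
theorem dpp_noSpecial_card_eq_eulerian (n k : ℕ) (hn : 1 ≤ n) (hk : k ≤ n - 1) :
    {a : List (List ℕ) | IsDPP a ∧ DPPOrder a n ∧ a.length = k ∧ NoSpecialPart a}.ncard =
      Eulerian n k := by
  rw [dpp_image, Set.ncard_image_of_injective _
    (Function.LeftInverse.injective greedy_flatten), Set.ncard_coe_finset]
  have h := cntF_eulerian n k
  rw [cntF, Finset.sum_boole] at h
  simp only [Nat.cast_inj] at h
  exact h
end

section
/- Let n ≥ 1 and let a = (a_1,…,a_m) be a one-row descending plane partition of order n with no special part, i.e., n ≥ a_1 ≥ a_2 ≥ … ≥ a_m ≥ 1, a_1 > m, and a_k ≥ k for all 1 ≤ k ≤ m. Set γ_k = a_k − (k−1) for 1 ≤ k ≤ m. Then n ≥ γ_1 > γ_2 > … > γ_m ≥ 1; moreover, letting β be the list of the elements of {1,…,n} \ {γ_1,…,γ_m} in decreasing order, β is nonempty (so m < n) and the concatenated word βγ is a permutation of {1,…,n} with exactly one ascent, occurring at the junction of β and γ. -/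
/-- A one-row descending plane partition of order `n` with no special part:
a weakly decreasing list of integers in `{1,…,n}` whose first entry exceeds its length
and whose `k`-th entry (1-indexed) is at least `k`. -/
def OneRowDPP (n : ℕ) (a : List ℕ) : Prop :=
  a.Chain' (· ≥ ·) ∧ (∀ x ∈ a, 1 ≤ x ∧ x ≤ n) ∧ a.length < a.getD 0 0 ∧
  ∀ p < a.length, p < a.getD p 0

/-- From a one-row DPP `a = (a_1,…,a_m)` of order `n` with no special part, setting
`γ_k = a_k - (k-1)` gives a strictly decreasing list of elements of `{1,…,n}`; letting `β`
list `{1,…,n} \ γ` in decreasing order, `β` is nonempty (so `m < n`) and `β ++ γ` is a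
permutation of `{1,…,n}` with exactly one ascent, occurring at the junction of `β` and `γ`. -/
theorem oneRowDPP_to_perm (n : ℕ) (hn : 1 ≤ n) (a : List ℕ) (ha : OneRowDPP n a)
    (γ β : List ℕ)
    (hγ : γ = a.mapIdx fun i x => x - i)
    (hβ : β = (((Finset.Icc 1 n).filter fun x => x ∉ γ).sort (· ≤ ·)).reverse) :
    γ.Chain' (· > ·) ∧ (∀ x ∈ γ, 1 ≤ x ∧ x ≤ n) ∧
      β ≠ [] ∧ a.length < n ∧
      (β ++ γ).Perm (List.range' 1 n) ∧
      numAscents (β ++ γ) = 1 ∧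
      β.getD (β.length - 1) 0 < γ.getD 0 0 := by
  obtain ⟨h1, h2, h3, h4⟩ := ha
  have hlen : γ.length = a.length := by rw [hγ]; simp
  have hpos : 0 < a.length := by
    rcases a with _ | ⟨x, t⟩
    · simp at h3
    · simp
  have hget : ∀ i (hi : i < γ.length), γ[i] = a[i]'(by omega) - i := by
    intro i hi; subst hγ; simp
  have h4' : ∀ i (hi : i < a.length), i < a[i] := by
    intro i hi
    have := h4 i hi
    rwa [List.getD_eq_getElem _ _ hi] at this
  have h3' : a.length < a[0] := by
    rwa [List.getD_eq_getElem _ _ hpos] at h3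
  have hchain : γ.IsChain (· > ·) := by
    rw [List.isChain_iff_getElem]
    intro i hi
    have e := List.isChain_iff_getElem.1 h1 i (by omega)
    rw [hget i (by omega), hget (i+1) (by omega)]
    have := h4' i (by omega)
    have := h4' (i+1) (by omega)
    simp only [ge_iff_le, gt_iff_lt] at *
    omega
  have hγp : γ.Pairwise (· > ·) := List.isChain_iff_pairwise.1 hchain
  have hmem : ∀ x ∈ γ, 1 ≤ x ∧ x ≤ n := by
    intro x hx
    obtain ⟨i, hi, rfl⟩ := List.getElem_of_mem hx
    rw [hget i hi]
    have := h4' i (by omega)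
    have := h2 _ (List.getElem_mem (l := a) (n := i) (by omega))
    omega
  have hγ0 : γ[0]'(by omega) = a[0] := by rw [hget]; simp
  have hβmem : ∀ x, x ∈ β ↔ (1 ≤ x ∧ x ≤ n) ∧ x ∉ γ := by
    intro x; rw [hβ]; simp
  have hβp : β.Pairwise (· > ·) := by
    rw [hβ, List.pairwise_reverse]
    exact (Finset.sortedLT_sort _).pairwise
  have hln : a.length < n := lt_of_lt_of_le h3' (h2 _ (List.getElem_mem hpos)).2
  obtain ⟨x, hx1, hx2, hx3⟩ : ∃ x, 1 ≤ x ∧ x ≤ a.length ∧ x ∉ γ := by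
    by_contra! hc
    have hsub : Finset.Icc 1 a.length ⊆ γ.toFinset.erase a[0] := by
      intro y hy
      rw [Finset.mem_Icc] at hy
      rw [Finset.mem_erase, List.mem_toFinset]
      exact ⟨by omega, hc y hy.1 hy.2⟩
    have hcard := Finset.card_le_card hsub
    rw [Finset.card_erase_of_mem (by
      rw [List.mem_toFinset, ← hγ0]; exact List.getElem_mem _)] at hcard
    have := List.toFinset_card_le γ
    simp at hcard
    omega
  have hxβ : x ∈ β := (hβmem x).2 ⟨⟨hx1, by omega⟩, hx3⟩
  have hβne : β ≠ [] := List.ne_nil_of_mem hxβ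
  have hβpos : 0 < β.length := List.length_pos_iff.2 hβne
  have hlast : β[β.length - 1]'(by omega) < γ[0]'(by omega) := by
    obtain ⟨i, hi, hix⟩ := List.getElem_of_mem hxβ
    have hle : β[β.length - 1]'(by omega) ≤ x := by
      rcases Nat.lt_or_ge i (β.length - 1) with h | h
      · have := List.pairwise_iff_getElem.1 hβp i (β.length - 1) hi (by omega) h
        omega
      · have : i = β.length - 1 := by omega
        subst this
        omega
    omega
  refine ⟨hchain, hmem, hβne, hln, ?_, ?_, ?_⟩
  · rw [List.perm_ext_iff_of_nodup]
    · intro y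
      rw [List.mem_append, hβmem, List.mem_range'_1]
      constructor
      · rintro (h | h)
        · omega
        · have := hmem y h; omega
      · intro h
        by_cases hy : y ∈ γ
        · exact Or.inr hy
        · exact Or.inl ⟨by omega, hy⟩
    · rw [List.nodup_append']
      refine ⟨hβp.imp (fun h => ne_of_gt h), hγp.imp (fun h => ne_of_gt h), ?_⟩
      intro y hy hy'
      exact ((hβmem y).1 hy).2 hy'
    · exact List.nodup_range'
  · have key : ∀ k ∈ List.range ((β ++ γ).length - 1),
        decide ((β ++ γ).getD k 0 < (β ++ γ).getD (k + 1) 0) = (k == β.length - 1) := by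
      intro k hk
      rw [List.mem_range, List.length_append] at hk
      rw [List.getD_eq_getElem _ _ (by rw [List.length_append]; omega),
        List.getD_eq_getElem _ _ (by rw [List.length_append]; omega),
        Bool.eq_iff_iff, decide_eq_true_iff, beq_iff_eq]
      rcases lt_trichotomy (k + 1) β.length with h | h | h
      · rw [List.getElem_append_left (by omega), List.getElem_append_left h]
        have := List.pairwise_iff_getElem.1 hβp k (k+1) (by omega) h (by omega)
        omega
      · have hk' : k = β.length - 1 := by omega
        rw [List.getElem_append_left (by omega), List.getElem_append_right (by omega)]
        subst hk'
        have e : β.length - 1 + 1 - β.length = 0 := by omega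
        simp only [e]
        simpa using hlast
      · rw [List.getElem_append_right (by omega), List.getElem_append_right (by omega)]
        have := List.pairwise_iff_getElem.1 hγp (k - β.length) (k + 1 - β.length)
          (by omega) (by omega) (by omega)
        omega
    unfold numAscents
    rw [List.filter_congr key, ← List.countP_eq_length_filter]
    change List.count (β.length - 1) _ = 1
    apply List.count_eq_one_of_mem List.nodup_range
    rw [List.mem_range, List.length_append]
    omega
  · rw [List.getD_eq_getElem _ _ (by omega), List.getD_eq_getElem _ _ (by omega)]
    exact hlast
end

section
/- Let n ≥ 1 and let π be a permutation of {1,…,n} with exactly one ascent. Write π = βγ, where β and γ are the (unique, nonempty) decreasing blocks before and after the unique ascent, and γ = (γ_1,…,γ_m). Then the sequence a_k = γ_k + (k−1) for 1 ≤ k ≤ m is a one-row descending plane partition of order n with no special part: n ≥ a_1 ≥ a_2 ≥ … ≥ a_m ≥ 1, a_1 > m, and a_k ≥ k for all 1 ≤ k ≤ m. -/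
/-- From a permutation of `{1,…,n}` with exactly one ascent, uniquely decomposed as
`β ++ γ` with `β`, `γ` nonempty strictly decreasing blocks and the last letter of `β`
smaller than the first letter of `γ`, the sequence `a_k = γ_k + (k-1)` is a one-row
descending plane partition of order `n` with no special part. -/
theorem perm_to_oneRowDPP (n : ℕ) (hn : 1 ≤ n) (β γ : List ℕ)
    (hβne : β ≠ []) (hγne : γ ≠ [])
    (hβdec : β.Chain' (· > ·)) (hγdec : γ.Chain' (· > ·))
    (hjunction : β.getD (β.length - 1) 0 < γ.getD 0 0)
    (hperm : (β ++ γ).Perm (List.range' 1 n))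
    (a : List ℕ) (ha : a = γ.mapIdx fun i x => x + i) :
    OneRowDPP n a := by
  subst ha
  have hpos : 0 < γ.length := List.length_pos_of_ne_nil hγne
  have hβpos : 0 < β.length := List.length_pos_of_ne_nil hβne
  have hmem : ∀ x, x ∈ β ++ γ → 1 ≤ x ∧ x ≤ n := by
    intro x hx
    have h := (hperm.mem_iff).1 hx
    rw [List.mem_range'_1] at h
    omega
  have hnd : (β ++ γ).Nodup := hperm.nodup_iff.2 List.nodup_range'
  have hpw : γ.Pairwise (· > ·) := List.isChain_iff_pairwise.1 hγdec
  have hlt : ∀ i j (hi : i < γ.length) (hj : j < γ.length), i < j → γ[j] < γ[i] :=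
    fun i j hi hj hij => List.pairwise_iff_getElem.1 hpw i j hi hj hij
  have hstep : ∀ i (hi : i < γ.length), γ[i] + i ≤ γ[0] := by
    intro i
    induction i with
    | zero => intro hi; simp
    | succ k ih =>
      intro hi
      have h1 := ih (by omega)
      have h2 := hlt k (k+1) (by omega) hi (by omega)
      omega
  have hγmem : ∀ i (hi : i < γ.length), 1 ≤ γ[i] ∧ γ[i] ≤ n := fun i hi =>
    hmem _ (List.mem_append_right _ (List.getElem_mem hi))
  have hjb : β[β.length - 1]'(by omega) < γ[0] := by
    rw [List.getD_eq_getElem _ _ (by omega), List.getD_eq_getElem _ _ hpos] at hjunction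
    exact hjunction
  have hbm : β[β.length - 1]'(by omega) ∈ β := List.getElem_mem _
  have hkey : γ.length < γ[0] := by
    generalize β[β.length - 1]'(by omega) = b at hjb hbm
    have hb := hmem b (List.mem_append_left _ hbm)
    have hbn : b ∉ γ := fun h => (List.nodup_append.1 hnd).2.2 b hbm b h rfl
    have hsub : insert b γ.toFinset ⊆ Finset.Icc 1 γ[0] := by
      intro x hx
      rw [Finset.mem_insert, List.mem_toFinset] at hx
      rw [Finset.mem_Icc]
      rcases hx with rfl | hx
      · omega
      · obtain ⟨i, hi, rfl⟩ := List.getElem_of_mem hx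
        have := hstep i hi
        have := hγmem i hi
        omega
    have hc := Finset.card_le_card hsub
    rw [Finset.card_insert_of_notMem (by simpa using hbn),
      List.toFinset_card_of_nodup (List.nodup_append.1 hnd).2.1, Nat.card_Icc] at hc
    omega
  refine ⟨?_, ?_, ?_, ?_⟩
  · refine List.isChain_iff_getElem.2 ?_
    intro i hi
    simp only [List.length_mapIdx] at hi
    simp only [List.getElem_mapIdx]
    have := hlt i (i+1) (by omega) hi (by omega)
    omega
  · intro x hx
    obtain ⟨i, hi, rfl⟩ := List.getElem_of_mem hx
    simp only [List.length_mapIdx] at hi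
    simp only [List.getElem_mapIdx]
    have := hstep i hi
    have := hγmem i hi
    have := hγmem 0 hpos
    omega
  · rw [List.getD_eq_getElem _ _ (by simpa using hpos)]
    simpa using hkey
  · intro p hp
    rw [List.getD_eq_getElem _ _ hp]
    simp only [List.length_mapIdx] at hp
    simp only [List.getElem_mapIdx]
    have := hγmem p hp
    omega
end

section
/- For every n ≥ 1, the number of one-row descending plane partitions of order n with no special part equals the number of permutations of {1,…,n} with exactly one ascent. -/
theorem numAsc_cons (a b : ℕ) (l : List ℕ) :
    numAscents (a :: b :: l) = (if a < b then 1 else 0) + numAscents (b :: l) := by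
  simp only [numAscents, List.length_cons, Nat.add_sub_cancel, List.range_succ_eq_map,
    List.filter_cons, List.filter_map, List.length_map]
  by_cases h : a < b
  · simp [h, Function.comp_def]
    omega
  · simp [h, Function.comp_def]

theorem numAsc_zero (l : List ℕ) (hl : l.Nodup) :
    numAscents l = 0 ↔ l.Pairwise (· > ·) := by
  rw [← List.isChain_iff_pairwise]
  induction l with
  | nil => simp [numAscents]
  | cons a l ih =>
    cases l with
    | nil => simp [numAscents]
    | cons b l =>
      rw [numAsc_cons, List.isChain_cons_cons, ← ih hl.of_cons]
      have : a ≠ b := by rintro rfl; simp at hl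
      split_ifs <;> omega

theorem numAsc_one (l : List ℕ) (hl : l.Nodup) :
    numAscents l = 1 ↔ ∃ u v, l = u ++ v ∧ u.Pairwise (· > ·) ∧ v.Pairwise (· > ·) ∧
      ∃ y ∈ u, ∃ x ∈ v, y < x := by
  induction l with
  | nil =>
    simp [numAscents]
  | cons a l ih =>
    cases l with
    | nil =>
      simp [numAscents]
      intro u v h
      rcases u with _ | ⟨c, u⟩
      · simp
      · simp at h
        obtain ⟨_, rfl, rfl⟩ := h
        simp
    | cons b l =>
      rw [numAsc_cons]
      have hab : a ≠ b := by rintro rfl; simp at hl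
      by_cases h : a < b
      · simp only [h, if_true]
        have h0 := numAsc_zero _ hl.of_cons
        constructor
        · intro h1
          exact ⟨[a], b :: l, by simp, by simp, h0.1 (by omega), a, by simp, b, by simp, h⟩
        · rintro ⟨u, v, e, hu, hv, y, hy, x, hx, hyx⟩
          rcases u with _ | ⟨c, _ | ⟨d, u⟩⟩
          · simp at hy
          · simp at e
            obtain ⟨rfl, rfl⟩ := e
            rw [h0.2 hv]
          · simp at e
            obtain ⟨rfl, rfl, rfl⟩ := e
            simp at hu
            omega
      · simp only [h, if_false, zero_add]
        rw [ih hl.of_cons]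
        constructor
        · rintro ⟨u, v, e, hu, hv, y, hy, x, hx, hyx⟩
          refine ⟨a :: u, v, by simp [e], ?_, hv, y, by simp [hy], x, hx, hyx⟩
          rcases u with _ | ⟨d, u⟩
          · simp at hy
          · simp at e
            obtain ⟨rfl, rfl⟩ := e
            rw [← List.isChain_iff_pairwise] at hu ⊢
            rw [List.isChain_cons_cons]
            exact ⟨by omega, hu⟩
        · rintro ⟨u, v, e, hu, hv, y, hy, x, hx, hyx⟩
          rcases u with _ | ⟨c, _ | ⟨d, u⟩⟩
          · simp at hy
          · simp at e
            obtain ⟨rfl, rfl⟩ := e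
            simp at hy hv hx
            subst hy
            rcases hx with rfl | hx
            · omega
            · have := hv.1 _ hx; omega
          · simp at e
            obtain ⟨rfl, rfl, rfl⟩ := e
            refine ⟨b :: u, v, by simp, hu.of_cons, hv, ?_⟩
            rcases List.mem_cons.1 hy with rfl | hy
            · exact ⟨b, by simp, x, hx, by omega⟩
            · exact ⟨y, hy, x, hx, hyx⟩

/-- Strictly decreasing words in `{1,…,n}` that are not of the form `m, m-1, …, 1`. -/
def DecW (n : ℕ) (b : List ℕ) : Prop :=
  b.Pairwise (· > ·) ∧ (∀ x ∈ b, 1 ≤ x ∧ x ≤ n) ∧ ∃ x ∈ b, b.length < x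

theorem gap_iff (n : ℕ) (b : List ℕ) (h1 : b.Pairwise (· > ·)) (h2 : ∀ x ∈ b, 1 ≤ x ∧ x ≤ n) :
    (∃ x ∈ b, b.length < x) ↔ ∃ y, (1 ≤ y ∧ y ≤ n ∧ y ∉ b) ∧ ∃ x ∈ b, y < x := by
  have hc : b.toFinset.card = b.length :=
    List.toFinset_card_of_nodup (h1.imp (fun h => ne_of_gt h))
  constructor
  · rintro ⟨x, hx, hl⟩
    by_contra! hcon
    have hs : Finset.Icc 1 x ⊆ b.toFinset := by
      intro y hy
      rw [Finset.mem_Icc] at hy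
      by_contra hyb
      simp only [List.mem_toFinset] at hyb
      have := hcon y ⟨hy.1, hy.2.trans (h2 x hx).2, hyb⟩ x hx
      have : x = y := by omega
      exact hyb (this ▸ hx)
    have := Finset.card_le_card hs
    simp at this
    have h3 := hc
    simp only [List.card_toFinset] at h3
    omega
  · rintro ⟨y, ⟨hy1, hyn, hyb⟩, x, hx, hyx⟩
    by_contra! hcon
    have hs : b.toFinset ⊆ Finset.Icc 1 b.length := by
      intro z hz
      simp only [List.mem_toFinset] at hz
      exact Finset.mem_Icc.2 ⟨(h2 z hz).1, hcon z hz⟩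
    have := Finset.eq_of_subset_of_card_le hs (by rw [hc]; simp)
    apply hyb
    rw [← List.mem_toFinset, this, Finset.mem_Icc]
    exact ⟨hy1, by have := hcon x hx; omega⟩

def toPerm (n : ℕ) (b : List ℕ) : List ℕ :=
  (List.range' 1 n).reverse.filter (fun x => decide (x ∉ b)) ++ b

def toDPP (b : List ℕ) : List ℕ := b.mapIdx (fun i x => x + i)

theorem rev_pw (n : ℕ) : (List.range' 1 n).reverse.Pairwise (· > ·) := by
  rw [List.pairwise_reverse]
  exact List.pairwise_lt_range'

theorem gt_ext {u v : List ℕ} (hu : u.Pairwise (· > ·)) (hv : v.Pairwise (· > ·))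
    (h : ∀ x, x ∈ u ↔ x ∈ v) : u = v := by
  have : u.Perm v := (List.perm_ext_iff_of_nodup (hu.imp (fun h => ne_of_gt h))
    (hv.imp (fun h => ne_of_gt h))).2 h
  exact this.eq_of_pairwise (by intro a b _ _ h1 h2; omega) hu hv

theorem mem_r (n x : ℕ) : x ∈ List.range' 1 n ↔ 1 ≤ x ∧ x ≤ n := by
  rw [List.mem_range'_1]; omega

theorem toPerm_image (n : ℕ) : toPerm n '' {b | DecW n b} =
    {l : List ℕ | l.Perm (List.range' 1 n) ∧ numAscents l = 1} := by
  ext l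
  simp only [Set.mem_image, Set.mem_setOf_eq]
  constructor
  · rintro ⟨b, ⟨h1, h2, h3⟩, rfl⟩
    have hp : (toPerm n b).Perm (List.range' 1 n) := by
      have hnd : (toPerm n b).Nodup := by
        unfold toPerm
        rw [List.nodup_append]
        refine ⟨((rev_pw n).filter _).imp (fun h => ne_of_gt h), h1.imp (fun h => ne_of_gt h), ?_⟩
        rintro x hx y hy rfl
        simp at hx
        exact hx.2 hy
      rw [List.perm_ext_iff_of_nodup hnd List.nodup_range']
      intro x
      simp only [toPerm, List.mem_append, List.mem_filter, List.mem_reverse, mem_r,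
        decide_eq_true_eq]
      have := h2 x
      tauto
    refine ⟨hp, ?_⟩
    rw [numAsc_one _ (hp.nodup_iff.2 List.nodup_range')]
    refine ⟨_, _, rfl, (rev_pw n).filter _, h1, ?_⟩
    obtain ⟨y, hy, x, hx, hyx⟩ := (gap_iff n b h1 h2).1 h3
    refine ⟨y, ?_, x, hx, hyx⟩
    simp only [List.mem_filter, List.mem_reverse, mem_r, decide_eq_true_eq]
    tauto
  · rintro ⟨hp, h1⟩
    have hnd := hp.nodup_iff.2 List.nodup_range'
    rw [numAsc_one _ hnd] at h1
    obtain ⟨u, v, rfl, hu, hv, y, hy, x, hx, hyx⟩ := h1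
    have hm : ∀ z, z ∈ u ∨ z ∈ v ↔ 1 ≤ z ∧ z ≤ n := by
      intro z
      rw [← mem_r, ← hp.mem_iff, List.mem_append]
    have hd : ∀ z, z ∈ u → z ∉ v := by
      intro z hz hz'
      exact (List.nodup_append.1 hnd).2.2 z hz z hz' rfl
    have h2 : ∀ z ∈ v, 1 ≤ z ∧ z ≤ n := fun z hz => (hm z).1 (Or.inr hz)
    refine ⟨v, ⟨hv, h2, (gap_iff n v hv h2).2 ⟨y, ?_, x, hx, hyx⟩⟩, ?_⟩
    · have := (hm y).1 (Or.inl hy)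
      exact ⟨this.1, this.2, hd y hy⟩
    · unfold toPerm
      congr 1
      apply gt_ext ((rev_pw n).filter _) hu
      intro z
      simp only [List.mem_filter, List.mem_reverse, mem_r, decide_eq_true_eq]
      have := hm z
      have := hd z
      tauto

theorem inj_aux (n : ℕ) (b c d : List ℕ) (hb : DecW n b)
    (h1 : (List.range' 1 n).reverse.filter (fun x => decide (x ∉ c)) =
      (List.range' 1 n).reverse.filter (fun x => decide (x ∉ b)) ++ d)
    (h2 : b = d ++ c) : d = [] := by
  rcases d with _ | ⟨e, d⟩
  · rfl
  exfalso
  obtain ⟨y, hy, x, hx, hyx⟩ := (gap_iff n b hb.1 hb.2.1).1 hb.2.2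
  have hpw : ((List.range' 1 n).reverse.filter (fun x => decide (x ∉ c))).Pairwise (· > ·) :=
    (rev_pw n).filter _
  rw [h1, List.pairwise_append] at hpw
  have hye := hpw.2.2 y (by
    simp only [List.mem_filter, List.mem_reverse, mem_r, decide_eq_true_eq]; tauto) e (by simp)
  have hb1 := hb.1
  rw [h2] at hb1 hx
  simp only [List.cons_append, List.pairwise_cons] at hb1
  simp only [List.cons_append, List.mem_cons] at hx
  rcases hx with rfl | hx
  · omega
  · have := hb1.1 x hx
    omega

theorem toPerm_inj (n : ℕ) : Set.InjOn (toPerm n) {b | DecW n b} := by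
  intro b hb c hc h
  unfold toPerm at h
  rw [List.append_eq_append_iff] at h
  rcases h with ⟨d, h1, h2⟩ | ⟨d, h1, h2⟩
  · have := inj_aux n b c d hb h1 h2
    simpa [this] using h2
  · have := inj_aux n c b d hc h1 h2
    simpa [this] using h2.symm

theorem toDPP_inj (s : Set (List ℕ)) : Set.InjOn toDPP s := by
  intro b _ c _ h
  have hl : b.length = c.length := by simpa [toDPP] using congrArg List.length h
  apply List.ext_getElem hl
  intro i h1 h2
  have : (toDPP b)[i]? = (toDPP c)[i]? := by rw [h]
  simpa [toDPP, h1, h2] using this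

theorem dec_bound (b : List ℕ) (h : b.Pairwise (· > ·)) (i : ℕ) (hi : i < b.length) :
    b[i] + i ≤ b[0] := by
  induction i with
  | zero => simp
  | succ i ih =>
    have := ih (by omega)
    have := List.pairwise_iff_getElem.1 h i (i+1) (by omega) hi (by omega)
    omega

theorem toDPP_image (n : ℕ) : toDPP '' {b | DecW n b} = {a | OneRowDPP n a} := by
  ext a
  simp only [Set.mem_image, Set.mem_setOf_eq]
  constructor
  · rintro ⟨b, ⟨h1, h2, x, hx, h3⟩, rfl⟩
    have hpos : 0 < b.length := List.length_pos_of_mem hx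
    have hlen : (toDPP b).length = b.length := by simp [toDPP]
    have hget : ∀ i (hi : i < b.length), (toDPP b)[i]'(by omega) = b[i] + i := by
      intro i hi; simp [toDPP]
    have hget' : ∀ i (hi : i < b.length), (toDPP b).getD i 0 = b[i] + i := by
      intro i hi; rw [List.getD_eq_getElem _ _ (by omega), hget]
    refine ⟨?_, ?_, ?_, ?_⟩
    · show List.IsChain _ _
      rw [List.isChain_iff_getElem]
      intro i hi
      rw [hget _ (by omega), hget _ (by omega)]
      have := List.pairwise_iff_getElem.1 h1 i (i+1) (by omega) (by omega) (by omega)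
      omega
    · intro x hx
      obtain ⟨i, hi, rfl⟩ := List.mem_iff_getElem.1 hx
      rw [hget _ (by omega)]
      have := dec_bound b h1 i (by omega)
      have := h2 _ (List.getElem_mem hpos)
      have := h2 _ (List.getElem_mem (show i < b.length by omega))
      omega
    · rw [hget' 0 hpos, hlen]
      obtain ⟨i, hi, rfl⟩ := List.mem_iff_getElem.1 hx
      have := dec_bound b h1 i (by omega)
      omega
    · intro p hp
      rw [hget' p (by omega)]
      have := h2 _ (List.getElem_mem (show p < b.length by omega))
      omega
  · rintro ⟨h1, h2, h3, h4⟩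
    have h4' : ∀ p (hp : p < a.length), p < a[p] := by
      intro p hp
      have := h4 p hp
      rwa [List.getD_eq_getElem _ _ hp] at this
    have hpos : 0 < a.length := by
      rcases a with _ | ⟨c, a⟩
      · simp at h3
      · simp
    rw [List.getD_eq_getElem _ _ hpos] at h3
    have h1' : List.IsChain (· ≥ ·) a := h1
    rw [List.isChain_iff_getElem] at h1'
    have hpw := List.isChain_iff_pairwise.1 h1
    have hlen : (a.mapIdx (fun i x => x - i)).length = a.length := by simp
    have hget : ∀ i (hi : i < a.length),
        (a.mapIdx (fun i x => x - i))[i]'(by omega) = a[i] - i := by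
      intro i hi; simp
    refine ⟨a.mapIdx (fun i x => x - i), ⟨?_, ?_, ?_⟩, ?_⟩
    · rw [← List.isChain_iff_pairwise, List.isChain_iff_getElem]
      intro i hi
      rw [hget _ (by omega), hget _ (by omega)]
      have := h1' i (by omega)
      have := h4' i (by omega)
      have := h4' (i+1) (by omega)
      omega
    · intro x hx
      obtain ⟨i, hi, rfl⟩ := List.mem_iff_getElem.1 hx
      rw [hget _ (by omega)]
      have := h4' i (by omega)
      have := h2 _ (List.getElem_mem (show i < a.length by omega))
      omega
    · refine ⟨_, List.getElem_mem (show 0 < _ by omega), ?_⟩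
      rw [hget 0 hpos, hlen]
      omega
    · apply List.ext_getElem
      · simp [toDPP]
      · intro i hi hi'
        have := h4' i hi'
        simp [toDPP]
        omega

/-- The number of one-row descending plane partitions of order `n` with no special part
equals the number of permutations of `{1,…,n}` (as words) with exactly one ascent. -/
theorem oneRowDPP_card_eq_oneAscent_card (n : ℕ) (hn : 1 ≤ n) :
    {a : List ℕ | OneRowDPP n a}.ncard =
      {l : List ℕ | l.Perm (List.range' 1 n) ∧ numAscents l = 1}.ncard := by
  rw [← toDPP_image, ← toPerm_image, (toDPP_inj _).ncard_image, (toPerm_inj n).ncard_image]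
end

section
/- Let n ≥ 1 and let a = (a_1,…,a_m) be a one-row descending plane partition of order n with no special part. Let π = βγ be the corresponding permutation of {1,…,n} with one ascent, where γ_k = a_k − (k−1) for 1 ≤ k ≤ m and β lists the elements of {1,…,n} \ {γ_1,…,γ_m} in decreasing order. Then the non-inversion number of π satisfies I(π) = (Σ_{i=1}^m a_i) − m². -/
/-- The non-inversion number of a word `l`: the number of pairs `i < j` with `l_i < l_j`. -/
def noninv (l : List ℕ) : ℕ :=
  ((Finset.range l.length ×ˢ Finset.range l.length).filter
    fun p => p.1 < p.2 ∧ l.getD p.1 0 < l.getD p.2 0).card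

theorem noninv_eq_sum (l : List ℕ) : noninv l = ∑ i ∈ Finset.range l.length,
    ∑ j ∈ Finset.range l.length, if (i < j ∧ l.getD i 0 < l.getD j 0) then 1 else 0 := by
  unfold noninv
  rw [Finset.card_filter, Finset.sum_product]

theorem countP_eq_sum (P : ℕ → Prop) [DecidablePred P] (l : List ℕ) :
    l.countP (fun y => decide (P y)) =
      ∑ j ∈ Finset.range l.length, if P (l.getD j 0) then 1 else 0 := by
  induction l with
  | nil => simp
  | cons x l ih =>
    rw [List.countP_cons, ih, List.length_cons, Finset.sum_range_succ']
    simp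

theorem noninv_cons (x : ℕ) (l : List ℕ) :
    noninv (x :: l) = l.countP (fun y => decide (x < y)) + noninv l := by
  rw [noninv_eq_sum, noninv_eq_sum, countP_eq_sum, List.length_cons, Finset.sum_range_succ', add_comm]
  congr 1
  · rw [Finset.sum_range_succ']; simp
  · apply Finset.sum_congr rfl
    intro i _
    rw [Finset.sum_range_succ']; simp

theorem noninv_dec (l : List ℕ) (h : l.Pairwise (· > ·)) : noninv l = 0 := by
  induction l with
  | nil => simp [noninv]
  | cons x l ih =>
    rw [List.pairwise_cons] at h
    rw [noninv_cons, ih h.2, List.countP_eq_zero.2]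
    intro y hy
    have := h.1 y hy
    simp; omega

theorem noninv_append_dec (b g : List ℕ) (hb : b.Pairwise (· > ·)) (hg : g.Pairwise (· > ·)) :
    noninv (b ++ g) = (g.map fun c => b.countP (fun y => decide (y < c))).sum := by
  induction b with
  | nil => simp [noninv_dec g hg]
  | cons x l ih =>
    rw [List.pairwise_cons] at hb
    have h0 : l.countP (fun y => decide (x < y)) = 0 := by
      rw [List.countP_eq_zero]
      intro y hy
      have := hb.1 y hy
      simp; omega
    rw [List.cons_append, noninv_cons, ih hb.2, List.countP_append, h0, zero_add]
    clear ih hg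
    induction g with
    | nil => simp
    | cons c g ih =>
      simp only [List.countP_cons, List.map_cons, List.sum_cons] at ih ⊢
      omega

theorem sum_countP_dec (g : List ℕ) (hg : g.Pairwise (· > ·)) :
    2 * (g.map fun c => g.countP (fun y => decide (y < c))).sum + g.length = g.length ^ 2 := by
  induction g with
  | nil => simp
  | cons x l ih =>
    rw [List.pairwise_cons] at hg
    have h1 : l.countP (fun y => decide (y < x)) = l.length := by
      rw [List.countP_eq_length]
      intro y hy
      have := hg.1 y hy
      simp; omega
    have h2 : (l.map fun c => (x :: l).countP (fun y => decide (y < c))) =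
        l.map fun c => l.countP (fun y => decide (y < c)) := by
      apply List.map_congr_left
      intro c hc
      have := hg.1 c hc
      rw [List.countP_cons_of_neg]
      simp; omega
    have := ih hg.2
    rw [List.map_cons, List.sum_cons, h2, List.countP_cons_of_neg (by simp), h1, List.length_cons]
    nlinarith

theorem countP_range (n c : ℕ) :
    (List.range' 1 n).countP (fun y => decide (y < c)) = min n (c - 1) := by
  induction n with
  | zero => simp
  | succ n ih =>
    rw [List.range'_1_concat, List.countP_append, ih, List.countP_singleton]
    split_ifs with h <;> simp at h <;> omega

theorem sum_mapIdx_sub (a : List ℕ) (k : ℕ) (h : ∀ p < a.length, p + k ≤ a.getD p 0) :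
    2 * (a.mapIdx fun i x => x - (i + k)).sum + a.length ^ 2 + 2 * k * a.length
      = 2 * a.sum + a.length := by
  induction a generalizing k with
  | nil => simp
  | cons x l ih =>
    have h0 := h 0 (by simp)
    have := ih (k + 1) (fun p hp => by
      have := h (p + 1) (by simpa using hp)
      simp at this ⊢; omega)
    simp only [List.mapIdx_cons, List.sum_cons, List.length_cons]
    simp only [show ∀ i, i + 1 + k = i + (k + 1) by intro i; omega]
    simp at h0
    obtain ⟨d, rfl⟩ := Nat.exists_eq_add_of_le h0
    simp
    nlinarith

/-- If a one-row DPP `a = (a_1,…,a_m)` of order `n` with no special part corresponds to the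
permutation `π = β ++ γ` of `{1,…,n}` (where `γ_k = a_k - (k-1)` and `β` lists the
complement of `γ` in decreasing order), then `I(π) = Σ_{i=1}^m a_i − m²`. -/
theorem oneRowDPP_noninv (n : ℕ) (hn : 1 ≤ n) (a : List ℕ) (ha : OneRowDPP n a)
    (γ β : List ℕ)
    (hγ : γ = a.mapIdx fun i x => x - i)
    (hβ : β = (((Finset.Icc 1 n).filter fun x => x ∉ γ).sort (· ≤ ·)).reverse) :
    noninv (β ++ γ) + a.length ^ 2 = a.sum := by
  obtain ⟨h1, h2, -, h4⟩ := ha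
  have hlen : γ.length = a.length := by simp [hγ]
  have hpw : a.Pairwise (· ≥ ·) := List.isChain_iff_pairwise.1 h1
  have hget : ∀ i (hi : i < a.length), i < a[i] := by
    intro i hi
    have := h4 i hi
    simpa [hi] using this
  have hg : γ.Pairwise (· > ·) := by
    subst hγ
    rw [List.pairwise_iff_getElem] at hpw ⊢
    intro i j hi hj hij
    simp only [List.length_mapIdx] at hi hj
    have := hpw i j hi hj hij
    have := hget i hi
    have := hget j hj
    simp only [List.getElem_mapIdx]
    omega
  have hmem : ∀ c ∈ γ, 1 ≤ c ∧ c ≤ n := by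
    intro c hc
    rw [hγ, List.mem_mapIdx] at hc
    obtain ⟨i, hi, rfl⟩ := hc
    have := hget i hi
    have := h2 _ (List.getElem_mem hi)
    omega
  have hb : β.Pairwise (· > ·) := by
    rw [hβ, List.pairwise_reverse]
    exact (Finset.sortedLT_sort _).pairwise
  have hbm : ∀ x, x ∈ β ↔ (1 ≤ x ∧ x ≤ n) ∧ x ∉ γ := by
    intro x; rw [hβ]; simp
  have hperm : (β ++ γ).Perm (List.range' 1 n) := by
    rw [List.perm_ext_iff_of_nodup]
    · intro x
      rw [List.mem_append, hbm, List.mem_range'_1]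
      have := hmem x
      by_cases hx : x ∈ γ
      · have := hmem x hx
        simp [hx]; omega
      · simp [hx]; omega
    · rw [List.nodup_append]
      refine ⟨hb.imp (fun h => ne_of_gt h), hg.imp (fun h => ne_of_gt h), ?_⟩
      rintro x hx y hy rfl
      exact ((hbm x).1 hx).2 hy
    · exact List.nodup_range'
  have hcnt : ∀ c ∈ γ, β.countP (fun y => decide (y < c)) + γ.countP (fun y => decide (y < c)) + 1 = c := by
    intro c hc
    have := hmem c hc
    rw [← List.countP_append, hperm.countP_eq, countP_range]
    omega
  have hsum : (γ.map fun c => β.countP (fun y => decide (y < c))).sum +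
      (γ.map fun c => γ.countP (fun y => decide (y < c))).sum + γ.length = γ.sum := by
    have : ∀ l : List ℕ, (∀ c ∈ l, c ∈ γ) → (l.map fun c => β.countP (fun y => decide (y < c))).sum +
      (l.map fun c => γ.countP (fun y => decide (y < c))).sum + l.length = l.sum := by
      intro l hl
      induction l with
      | nil => simp
      | cons x l ih =>
        have e1 := ih (fun c hc => hl c (List.mem_cons_of_mem _ hc))
        have e2 := hcnt x (hl x (by simp))
        simp only [List.map_cons, List.sum_cons, List.length_cons]
        omega
    exact this γ (fun c hc => hc)
  have e1 := sum_countP_dec γ hg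
  have e2 := sum_mapIdx_sub a 0 (fun p hp => (h4 p hp).le)
  simp only [add_zero, ← hγ, mul_zero, zero_mul] at e2
  rw [noninv_append_dec β γ hb hg]
  rw [hlen] at e1 hsum
  omega
end

section
/- Let n ≥ 1 and let a = (a_1,…,a_m) be a one-row descending plane partition of order n with no special part, with corresponding permutation π = βγ of {1,…,n}, where β has length n−m. Then: β_{n−m} = 1 if and only if a_m > m; and for every p with 1 < p < n, β_{n−m} = p if and only if a_i = m for all i with m−p+1 < i ≤ m and a_{m−p+1} > m. -/
/-- For a one-row DPP `a = (a_1,…,a_m)` of order `n` with no special part and the associated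
permutation `β ++ γ` of `{1,…,n}` (with `γ_k = a_k - (k-1)` and `β` the decreasing listing of
the complement, of length `n - m`): the last entry `β_{n-m}` of `β` equals `1` iff `a_m > m`;
and for `1 < p < n`, `β_{n-m} = p` iff `a_i = m` for all `m - p + 1 < i ≤ m` and
`a_{m-p+1} > m` (the inequality `i > m - p + 1` is written additively as `m + 1 < i + p`). -/
theorem oneRowDPP_last_of_beta (n : ℕ) (hn : 1 ≤ n) (a : List ℕ) (ha : OneRowDPP n a)
    (γ β : List ℕ)
    (hγ : γ = a.mapIdx fun i x => x - i)
    (hβ : β = (((Finset.Icc 1 n).filter fun x => x ∉ γ).sort (· ≤ ·)).reverse) :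
    β.length = n - a.length ∧
    (β.getD (β.length - 1) 0 = 1 ↔ a.length < a.getD (a.length - 1) 0) ∧
    (∀ p, 1 < p → p < n →
      (β.getD (β.length - 1) 0 = p ↔
        (∀ i, a.length + 1 < i + p → i ≤ a.length → a.getD (i - 1) 0 = a.length) ∧
          a.length < a.getD (a.length - p) 0)) := by
  obtain ⟨h1, h2, h3, h4⟩ := ha
  have hpw : a.Pairwise (· ≥ ·) := List.isChain_iff_pairwise.mp h1
  have hm0 : 0 < a.length := by
    rcases a with _ | ⟨x, t⟩
    · simp at h3
    · simp
  have hget : ∀ k (hk : k < a.length), a.getD k 0 = a[k] := by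
    intro k hk
    simp [List.getD_eq_getElem?_getD, hk]
  have hanti : ∀ i j, i ≤ j → j < a.length → a.getD j 0 ≤ a.getD i 0 := by
    intro i j hij hj
    rcases Nat.eq_or_lt_of_le hij with rfl | hlt
    · exact le_rfl
    · rw [hget j hj, hget i (by omega)]
      exact List.pairwise_iff_getElem.mp hpw i j (by omega) hj hlt
  have hle : ∀ k < a.length, a.getD k 0 ≤ n := by
    intro k hk
    rw [hget k hk]
    exact (h2 _ (List.getElem_mem hk)).2
  have hmem : ∀ q, q ∈ γ ↔ ∃ k, k < a.length ∧ a.getD k 0 - k = q := by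
    intro q
    rw [hγ, List.mem_mapIdx]
    constructor
    · rintro ⟨k, hk, rfl⟩
      exact ⟨k, hk, by rw [hget k hk]⟩
    · rintro ⟨k, hk, rfl⟩
      exact ⟨k, hk, by rw [hget k hk]⟩
  have hlen : γ.length = a.length := by rw [hγ]; simp
  clear hγ
  have hmn : a.length < n := lt_of_lt_of_le h3 (hle 0 hm0)
  generalize hf : (fun k => a.getD k 0) = f
  have hfk : ∀ k, a.getD k 0 = f k := fun k => by rw [← hf]
  simp only [hfk] at *
  clear hget h1 h2 hpw hf
  generalize a.length = m at *
  have hge : ∀ k < m, m ≤ f k := by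
    intro k hk
    have e1 := hanti k (m - 1) (by omega) (by omega)
    have e2 := h4 (m - 1) (by omega)
    omega
  -- the complement
  have himg : (Finset.Icc 1 n).filter (fun x => x ∉ γ)
      = Finset.Icc 1 n \ (Finset.range m).image (fun k => f k - k) := by
    ext x
    simp only [Finset.mem_filter, Finset.mem_sdiff, Finset.mem_image, Finset.mem_range, hmem]
  have hcard : ((Finset.Icc 1 n).filter (fun x => x ∉ γ)).card = n - m := by
    rw [himg, Finset.card_sdiff_of_subset, Finset.card_image_of_injOn]
    · simp
    · intro i hi j hj hij
      simp only [Finset.coe_range, Set.mem_Iio] at hi hj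
      simp only at hij
      have e1 := h4 i hi
      have e2 := h4 j hj
      rcases lt_trichotomy i j with h | h | h
      · have := hanti i j h.le hj
        omega
      · exact h
      · have := hanti j i h.le hi
        omega
    · intro x hx
      simp only [Finset.mem_image, Finset.mem_range] at hx
      obtain ⟨k, hk, rfl⟩ := hx
      have e1 := h4 k hk
      have e2 := hle k hk
      simp only [Finset.mem_Icc]
      omega
  have hβlen : β.length = n - m := by
    rw [hβ, List.length_reverse, Finset.length_sort, hcard]
  set S := (Finset.Icc 1 n).filter (fun x => x ∉ γ) with hS
  have hSmem : ∀ x, x ∈ S ↔ (1 ≤ x ∧ x ≤ n) ∧ x ∉ γ := by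
    intro x
    simp [hS]
  have hSne : S.Nonempty := by
    rw [← Finset.card_pos]
    omega
  have hlast : β.getD (β.length - 1) 0 = S.min' hSne := by
    rw [Finset.min'_eq_sorted_zero, List.getD_eq_getElem _ _ (by omega)]
    simp only [hβ, List.getElem_reverse, List.length_reverse, Finset.length_sort]
    congr 1
    omega
  have hiff : ∀ p, 1 ≤ p → p ≤ n →
      (β.getD (β.length - 1) 0 = p ↔ p ∉ γ ∧ ∀ q, 1 ≤ q → q < p → q ∈ γ) := by
    intro p hp1 hpn
    rw [hlast]
    constructor
    · intro h
      have hp : p ∈ S := h ▸ S.min'_mem hSne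
      refine ⟨((hSmem p).1 hp).2, fun q hq1 hq2 => ?_⟩
      by_contra hq
      have := S.min'_le q ((hSmem q).2 ⟨⟨hq1, by omega⟩, hq⟩)
      omega
    · rintro ⟨hp, hq⟩
      apply le_antisymm
      · exact S.min'_le p ((hSmem p).2 ⟨⟨hp1, hpn⟩, hp⟩)
      · by_contra hlt
        have hs := (hSmem _).1 (S.min'_mem hSne)
        exact hs.2 (hq _ hs.1.1 (by omega))
  refine ⟨hβlen, ?_, ?_⟩
  · rw [hiff 1 le_rfl hn, hmem]
    constructor
    · rintro ⟨h, -⟩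
      by_contra hcon
      have := hge (m - 1) (by omega)
      exact h ⟨m - 1, by omega, by omega⟩
    · intro h
      refine ⟨?_, fun q h1 h2 => by omega⟩
      rintro ⟨k, hk, hk2⟩
      have := hanti k (m - 1) (by omega) (by omega)
      omega
  · intro p hp1 hpn
    rw [hiff p hp1.le hpn.le]
    constructor
    · rintro ⟨hp, hq⟩
      have key : ∀ j, 1 ≤ j → j < p → j ≤ m → f (m - j) = m := by
        intro j
        induction j using Nat.strong_induction_on with
        | _ j ih =>
          intro hj1 hjp hjm
          obtain ⟨k, hk, hkj⟩ := (hmem j).1 (hq j hj1 hjp)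
          have e1 := hge k hk
          by_cases hkk : k = m - j
          · subst hkk
            omega
          · have e2 := ih (m - k) (by omega) (by omega) (by omega) (by omega)
            rw [show m - (m - k) = k by omega] at e2
            omega
      have hpm : p ≤ m := by
        by_contra hcon
        have := key m hm0 (by omega) le_rfl
        rw [Nat.sub_self] at this
        omega
      refine ⟨?_, ?_⟩
      · intro i hi1 hi2
        have := key (m + 1 - i) (by omega) (by omega) (by omega)
        rwa [show m - (m + 1 - i) = i - 1 by omega] at this
      · by_contra hcon
        have := hge (m - p) (by omega)
        exact hp ((hmem p).2 ⟨m - p, by omega, by omega⟩)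
    · rintro ⟨hA, hB⟩
      have hpm : p ≤ m := by
        by_contra hcon
        have := hA 1 (by omega) (by omega)
        simp only [Nat.sub_self] at this
        omega
      have key : ∀ k, m - p < k → k < m → f k = m := by
        intro k hk1 hk2
        have := hA (k + 1) (by omega) (by omega)
        simpa using this
      refine ⟨?_, ?_⟩
      · rw [hmem]
        rintro ⟨k, hk, hkp⟩
        by_cases hkk : m - p < k
        · have := key k hkk hk
          omega
        · have := hanti k (m - p) (by omega) (by omega)
          omega
      · intro q hq1 hq2
        rw [hmem]
        have := key (m - q) (by omega) (by omega)
        exact ⟨m - q, by omega, by omega⟩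
end

section
/- Let n ≥ 1 and let a = (a_1,…,a_m) be a one-row descending plane partition of order n with no special part, with corresponding permutation π = βγ of {1,…,n}, where β has length n−m. Then: β_1 = n if and only if a_1 < n; for every p with 0 < p < m, β_1 = n−p if and only if a_i = n for all i ≤ p and a_{p+1} < n; and β_1 = n−m if and only if a_1 = a_2 = … = a_m = n. -/
theorem head_aux (n : ℕ) (γ : List ℕ) (k : ℕ) (hk : k < n)
    (h1 : ∀ i < k, n - i ∈ γ) (h2 : n - k ∉ γ) :
    ((((Finset.Icc 1 n).filter fun x => x ∉ γ).sort (· ≤ ·)).reverse).getD 0 0 = n - k := by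
  set S := (Finset.Icc 1 n).filter fun x => x ∉ γ with hS
  have hmem : n - k ∈ (S.sort (· ≤ ·)).reverse := by
    rw [List.mem_reverse, Finset.mem_sort, hS, Finset.mem_filter, Finset.mem_Icc]
    exact ⟨by omega, h2⟩
  have hp : (S.sort (· ≤ ·)).reverse.Pairwise (fun x y => y ≤ x) := by
    rw [List.pairwise_reverse]
    exact Finset.pairwise_sort S (· ≤ ·)
  have hall : ∀ x ∈ (S.sort (· ≤ ·)).reverse, x ≤ n - k := by
    intro x hx
    rw [List.mem_reverse, Finset.mem_sort, hS, Finset.mem_filter, Finset.mem_Icc] at hx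
    by_contra hlt
    apply hx.2
    have := h1 (n - x) (by omega)
    rwa [show n - (n - x) = x by omega] at this
  generalize (S.sort (· ≤ ·)).reverse = L at *
  cases L with
  | nil => simp at hmem
  | cons b t =>
    rw [List.pairwise_cons] at hp
    have hb := hall b (by simp)
    simp only [List.getD_cons_zero]
    rcases List.mem_cons.1 hmem with h | h
    · exact h.symm
    · have := hp.1 _ h
      omega

/-- For a one-row DPP `a = (a_1,…,a_m)` of order `n` with no special part and the associated
permutation `β ++ γ` of `{1,…,n}` (with `γ_k = a_k - (k-1)` and `β` the decreasing listing of
the complement, of length `n - m`): `β_1 = n` iff `a_1 < n`; for `0 < p < m`, `β_1 = n - p`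
iff `a_i = n` for all `i ≤ p` and `a_{p+1} < n`; and `β_1 = n - m` iff all entries of `a`
equal `n`. -/
theorem oneRowDPP_head_of_beta (n : ℕ) (hn : 1 ≤ n) (a : List ℕ) (ha : OneRowDPP n a)
    (γ β : List ℕ)
    (hγ : γ = a.mapIdx fun i x => x - i)
    (hβ : β = (((Finset.Icc 1 n).filter fun x => x ∉ γ).sort (· ≤ ·)).reverse) :
    β.length = n - a.length ∧
    (β.getD 0 0 = n ↔ a.getD 0 0 < n) ∧
    (∀ p, 0 < p → p < a.length →
      (β.getD 0 0 = n - p ↔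
        (∀ i, 1 ≤ i → i ≤ p → a.getD (i - 1) 0 = n) ∧ a.getD p 0 < n)) ∧
    (β.getD 0 0 = n - a.length ↔ ∀ x ∈ a, x = n) := by
  obtain ⟨hc, hr, hlen, hpos⟩ := ha
  have hanti : ∀ i j, i ≤ j → j < a.length → a.getD j 0 ≤ a.getD i 0 := by
    intro i j hij hj
    have hpw : a.Pairwise (· ≥ ·) := List.isChain_iff_pairwise.1 hc
    rcases Nat.eq_or_lt_of_le hij with h | h
    · rw [h]
    · have := List.pairwise_iff_getElem.1 hpw i j (by omega) hj h
      rw [List.getD_eq_getElem _ _ hj, List.getD_eq_getElem _ _ (by omega : i < a.length)]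
      exact this
  have hle : ∀ i < a.length, a.getD i 0 ≤ n := by
    intro i hi
    rw [List.getD_eq_getElem _ _ hi]
    exact (hr _ (List.getElem_mem hi)).2
  have hm : 0 < a.length := by
    rcases a with _ | ⟨b, t⟩
    · simp at hlen
    · simp
  have hmn : a.length < n := lt_of_lt_of_le hlen (hle 0 hm)
  have hγm : ∀ x, x ∈ γ ↔ ∃ i, i < a.length ∧ a.getD i 0 - i = x := by
    intro x
    rw [hγ, List.mem_mapIdx]
    constructor
    · rintro ⟨i, hi, h⟩
      exact ⟨i, hi, by rw [List.getD_eq_getElem _ _ hi]; exact h⟩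
    · rintro ⟨i, hi, h⟩
      exact ⟨i, hi, by rw [List.getD_eq_getElem _ _ hi] at h; exact h⟩
  have hall : (∀ x ∈ a, x = n) ↔ ∀ i < a.length, a.getD i 0 = n := by
    constructor
    · intro h i hi
      rw [List.getD_eq_getElem _ _ hi]
      exact h _ (List.getElem_mem hi)
    · intro h x hx
      obtain ⟨i, hi, rfl⟩ := List.getElem_of_mem hx
      rw [← List.getD_eq_getElem _ 0 hi]
      exact h i hi
  have hk : ∃ k, k ≤ a.length ∧ (∀ i < k, a.getD i 0 = n) ∧ (k < a.length → a.getD k 0 < n) := by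
    have hex : ∃ k, k = a.length ∨ a.getD k 0 < n := ⟨a.length, Or.inl rfl⟩
    classical
    refine ⟨Nat.find hex, Nat.find_min' hex (Or.inl rfl), ?_, ?_⟩
    · intro i hi
      have h1 := Nat.find_min hex hi
      have h2 : Nat.find hex ≤ a.length := Nat.find_min' hex (Or.inl rfl)
      have h3 := hle i (by omega)
      push Not at h1
      omega
    · intro h
      rcases Nat.find_spec hex with h' | h'
      · omega
      · exact h'
  obtain ⟨k, hkm, hk1, hk2⟩ := hk
  have hhead : β.getD 0 0 = n - k := by
    rw [hβ]
    apply head_aux n γ k (by omega)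
    · intro i hi
      rw [hγm]
      exact ⟨i, by omega, by rw [hk1 i hi]⟩
    · rw [hγm]
      rintro ⟨i, hi, h⟩
      by_cases hik : i < k
      · rw [hk1 i hik] at h
        omega
      · have h1 := hk2 (by omega)
        have h2 := hanti k i (by omega) hi
        have h3 := hpos i hi
        omega
  refine ⟨?_, ?_, ?_, ?_⟩
  · have hset : (Finset.Icc 1 n).filter (fun x => x ∉ γ) = Finset.Icc 1 n \
        (Finset.range a.length).image (fun i => a.getD i 0 - i) := by
      ext x
      simp only [Finset.mem_filter, Finset.mem_sdiff, hγm, Finset.mem_image, Finset.mem_range]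
    rw [hβ, List.length_reverse, Finset.length_sort, hset, Finset.card_sdiff_of_subset,
      Finset.card_image_of_injOn, Finset.card_range, Nat.card_Icc]
    · omega
    · intro i hi j hj hij
      simp only [Finset.coe_range, Set.mem_Iio] at hi hj
      simp only at hij
      have h1 := hpos i hi
      have h2 := hpos j hj
      rcases lt_trichotomy i j with h | h | h
      · have := hanti i j h.le hj
        omega
      · exact h
      · have := hanti j i h.le hi
        omega
    · intro x hx
      obtain ⟨i, hi, rfl⟩ := Finset.mem_image.1 hx
      have hi := Finset.mem_range.1 hi
      have h1 := hpos i hi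
      have h2 := hle i hi
      rw [Finset.mem_Icc]
      omega
  · rw [hhead]
    constructor
    · intro h
      have : k = 0 := by omega
      subst this
      exact hk2 hm
    · intro h
      by_contra hne
      have := hk1 0 (by omega)
      omega
  · intro p hp hpm
    rw [hhead]
    constructor
    · intro h
      have : k = p := by omega
      subst this
      exact ⟨fun i _ _ => hk1 _ (by omega), hk2 hpm⟩
    · rintro ⟨h1, h2⟩
      have : k = p := by
        rcases lt_trichotomy k p with h | h | h
        · have h3 := h1 (k + 1) (by omega) (by omega)
          have h4 := hk2 (by omega)
          simp only [Nat.add_sub_cancel] at h3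
          omega
        · exact h
        · have := hk1 p h
          omega
      rw [this]
  · rw [hhead, hall]
    constructor
    · intro h i hi
      exact hk1 i (by omega)
    · intro h
      by_contra hne
      have h1 := hk2 (by omega)
      have h2 := h k (by omega)
      omega
end
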